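/- arXiv:math/9811074 — 2 statements merged into one kernel-verified Lean document; each statement's English description precedes it below -/
import Mathlib

section
/- Let p₀,p₁,p₂,p₃ ∈ ℝ³ span a small simplex S that contains its own circumcenter, with edge lengths y₁ = |p₀−p₁|, y₂ = |p₀−p₂|, y₃ = |p₀−p₃|, y₄ = |p₂−p₃|, y₅ = |p₁−p₃|, y₆ = |p₁−p₂|. Suppose y₄ ∈ [2.51, 2√2] and one of the following holds: (1) y₁ ∈ [2.06, 2.51] and y₂,y₃,y₅,y₆ ∈ [2, 2.51]; (2) y₂ ∈ [2.08, 2.51] and y₁,y₃,y₅,y₆ ∈ [2, 2.51]; (3) y₅ ∈ [2.2, 2.51] and y₁,y₂,y₃,y₆ ∈ [2, 2.51]; (4) y₄ ∈ [2.58, 2√2], y₅ ∈ [2.12, 2.51], and y₁,y₂,y₃,y₆ ∈ [2, 2.51]. Then vor(S) < 0. -/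
open MeasureTheory Real

noncomputable section

abbrev E3 : Type := EuclideanSpace ℝ (Fin 3)

/-- The density of the regular octahedron. -/
def δoct : ℝ := (-3 * π + 12 * arccos (1 / Real.sqrt 3)) / Real.sqrt 8

/-- The circumradius `η(a,b,c)` of a triangle with side lengths `a`, `b`, `c`. -/
def eta (a b c : ℝ) : ℝ :=
  a * b * c / Real.sqrt ((a + b + c) * (b + c - a) * (a + c - b) * (a + b - c))

/-- A simplex is small if all six edge lengths are at least `2` and each of the
four triangular faces has circumradius at most `√2`. -/
def IsSmall (p₀ p₁ p₂ p₃ : E3) : Prop :=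
  (2 ≤ dist p₀ p₁ ∧ 2 ≤ dist p₀ p₂ ∧ 2 ≤ dist p₀ p₃ ∧
    2 ≤ dist p₁ p₂ ∧ 2 ≤ dist p₁ p₃ ∧ 2 ≤ dist p₂ p₃) ∧
  eta (dist p₀ p₁) (dist p₀ p₂) (dist p₁ p₂) ≤ Real.sqrt 2 ∧
  eta (dist p₀ p₁) (dist p₀ p₃) (dist p₁ p₃) ≤ Real.sqrt 2 ∧
  eta (dist p₀ p₂) (dist p₀ p₃) (dist p₂ p₃) ≤ Real.sqrt 2 ∧
  eta (dist p₁ p₂) (dist p₁ p₃) (dist p₂ p₃) ≤ Real.sqrt 2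

/-- `S = conv {p₀, p₁, p₂, p₃}` contains its own circumcenter. -/
def ContainsCircumcenter (p₀ p₁ p₂ p₃ : E3) : Prop :=
  ∃ c ∈ convexHull ℝ ({p₀, p₁, p₂, p₃} : Set E3),
    dist c p₀ = dist c p₁ ∧ dist c p₀ = dist c p₂ ∧ dist c p₀ = dist c p₃

/-- The Voronoi score of the simplex `S = conv {p₀, p₁, p₂, p₃}` at the vertex `p₀`:
`vor(S) = 4·(-δ_oct · vol {x ∈ S : |x-p₀| ≤ |x-pⱼ|, j = 1,2,3} + vol (B(p₀,1) ∩ C(S)))`,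
where `C(S)` is the cone over `S` with apex `p₀`. -/
def vor (p₀ p₁ p₂ p₃ : E3) : ℝ :=
  4 * (-δoct * (volume {x ∈ convexHull ℝ ({p₀, p₁, p₂, p₃} : Set E3) |
        dist x p₀ ≤ dist x p₁ ∧ dist x p₀ ≤ dist x p₂ ∧ dist x p₀ ≤ dist x p₃}).toReal +
      (volume (Metric.closedBall p₀ 1 ∩
        {y : E3 | ∃ x ∈ convexHull ℝ ({p₀, p₁, p₂, p₃} : Set E3), ∃ t : ℝ, 0 ≤ t ∧
          y = p₀ + t • (x - p₀)})).toReal)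


/-! ### Sparse Horner polynomials with integer coefficients -/

/-- `c z` is a constant, `n h t` stands for `h + X * t`, where `h` only uses later variables. -/
inductive HPoly : Type
  | c : ℤ → HPoly
  | n : HPoly → HPoly → HPoly

namespace HPoly

def ev : HPoly → List ℝ → ℝ
  | c z, _ => z
  | n h t, l => ev h l.tail + l.headD 0 * ev t l

/-! The operations are written with recursors, which the kernel evaluates efficiently. -/

def iadd (a b : ℤ) : ℤ :=
  Int.rec (motive := fun _ => ℤ)
    (fun m => Int.rec (motive := fun _ => ℤ) (fun k => Int.ofNat (Nat.add m k))
      (fun k => Bool.rec (motive := fun _ => ℤ) (Int.negSucc (Nat.sub k m))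
        (Int.ofNat (Nat.sub (Nat.sub m k) 1)) (Nat.ble (Nat.succ k) m)) b)
    (fun m => Int.rec (motive := fun _ => ℤ)
      (fun k => Bool.rec (motive := fun _ => ℤ) (Int.negSucc (Nat.sub m k))
        (Int.ofNat (Nat.sub (Nat.sub k m) 1)) (Nat.ble (Nat.succ m) k))
      (fun k => Int.negSucc (Nat.succ (Nat.add m k))) b) a

theorem iadd_aux (k m : ℕ) :
    (Bool.rec (motive := fun _ => ℤ) (Int.negSucc (Nat.sub k m))
        (Int.ofNat (Nat.sub (Nat.sub m k) 1)) (Nat.ble (Nat.succ k) m)) = (m : ℤ) - (k + 1) := by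
  cases h : Nat.ble (Nat.succ k) m with
  | false =>
    have h1 : ¬ (k.succ ≤ m) := fun h2 => by rw [Nat.ble_eq_true_of_le h2] at h; cases h
    change Int.negSucc (k - m) = _
    rw [Int.negSucc_eq]
    omega
  | true =>
    have h1 : k.succ ≤ m := Nat.le_of_ble_eq_true h
    change ((m - k - 1 : ℕ) : ℤ) = _
    omega

theorem iadd_eq (a b : ℤ) : iadd a b = a + b := by
  cases a with
  | ofNat m =>
    cases b with
    | ofNat k => rfl
    | negSucc k =>
      refine (iadd_aux k m).trans ?_
      rw [Int.negSucc_eq]; simp; ring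
  | negSucc m =>
    cases b with
    | ofNat k =>
      refine (iadd_aux m k).trans ?_
      rw [Int.negSucc_eq]; simp; ring
    | negSucc k => rfl

/-- `z * a` -/
def imul (z : ℕ) (a : ℤ) : ℤ :=
  Int.rec (motive := fun _ => ℤ) (fun k => Int.ofNat (Nat.mul z k))
   (fun k => Bool.rec (motive := fun _ => ℤ) (Int.negSucc (Nat.sub (Nat.mul z (Nat.succ k)) 1))
     (Int.ofNat 0) (Nat.beq z 0)) a

theorem imul_eq (z : ℕ) (a : ℤ) : imul z a = z * a := by
  cases a with
  | ofNat m => simp [imul]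
  | negSucc k =>
    cases z with
    | zero => simp [imul]
    | succ z =>
      change Int.negSucc ((z + 1) * (k + 1) - 1) = _
      rw [Int.negSucc_eq, Int.negSucc_eq]
      have : 1 ≤ (z + 1) * (k + 1) := Nat.succ_le_of_lt (by positivity)
      push_cast [Nat.cast_sub this]
      ring

def isz (z : ℤ) : Bool :=
  Int.rec (motive := fun _ => Bool) (fun k => Nat.beq k 0) (fun _ => false) z

theorem isz_eq (z : ℤ) (h : isz z = true) : z = 0 := by
  cases z with
  | ofNat m => simpa [isz] using h
  | negSucc k => simp [isz] at h

def inp (a : ℤ) : Bool :=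
  Int.rec (motive := fun _ => Bool) (fun k => Nat.beq k 0) (fun _ => true) a

theorem inp_le (z : ℤ) (h : inp z = true) : z ≤ 0 := by
  cases z with
  | ofNat m =>
    have : m = 0 := by simpa [inp] using h
    simp [this]
  | negSucc k => exact (Int.negSucc_lt_zero k).le

def addc (a : ℤ) (p : HPoly) : HPoly :=
  HPoly.rec (motive := fun _ => HPoly) (fun b => c (iadd a b)) (fun _ t ih _ => n ih t) p

def smul (a : ℤ) (p : HPoly) : HPoly :=
  HPoly.rec (motive := fun _ => HPoly) (fun b => c (Int.mul a b)) (fun _ _ ih ih2 => n ih ih2) p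

def nsm (z : ℕ) (p : HPoly) : HPoly :=
  HPoly.rec (motive := fun _ => HPoly) (fun b => c (imul z b)) (fun _ _ ih ih2 => n ih ih2) p

def add (p : HPoly) : HPoly → HPoly :=
  HPoly.rec (motive := fun _ => HPoly → HPoly) (fun a q => addc a q)
   (fun h t ihh iht q => HPoly.rec (motive := fun _ => HPoly) (fun b => addc b (n h t))
      (fun h' t' _ _ => n (ihh h') (iht t')) q) p

def mapL (f : HPoly → HPoly) (p : HPoly) : HPoly :=
  HPoly.rec (motive := fun _ => HPoly) (fun b => n (f (c b)) (c 0)) (fun h _ _ t => n (f h) t) p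

def mul (p : HPoly) : HPoly → HPoly :=
  HPoly.rec (motive := fun _ => HPoly → HPoly) (fun a q => smul a q)
    (fun _ _ mh mt q => add (mapL mh q) (n (c 0) (mt q))) p

def var (k : ℕ) : HPoly :=
  Nat.rec (motive := fun _ => HPoly) (n (c 0) (c 1)) (fun _ v => n v (c 0)) k

/-- normalising constructor -/
def mk (h t : HPoly) : HPoly :=
  HPoly.rec (motive := fun _ => HPoly)
    (fun z => Bool.rec (motive := fun _ => HPoly) (n h (c z))
      (HPoly.rec (motive := fun _ => HPoly) (fun b => c b) (fun h1 t1 _ _ => n (n h1 t1) (c 0)) h)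
      (isz z))
    (fun h1 t1 _ _ => n h (n h1 t1)) t

def nrm (p : HPoly) : HPoly :=
  HPoly.rec (motive := fun _ => HPoly) (fun b => c b) (fun _ _ h t => mk h t) p

theorem ev_c (z : ℤ) (l : List ℝ) : ev (c z) l = z := rfl

theorem ev_addc (a : ℤ) (p : HPoly) : ∀ l, ev (addc a p) l = a + ev p l := by
  induction p with
  | c b => intro l; simp [addc, ev, iadd_eq]
  | n h t ih _ => intro l; simp only [addc, ev] at ih ⊢; rw [ih]; ring

theorem ev_add (p : HPoly) : ∀ q l, ev (add p q) l = ev p l + ev q l := by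
  induction p with
  | c b => intro q l; exact ev_addc b q l
  | n h t ih1 ih2 =>
    intro q l
    cases q with
    | c b => rw [add_comm]; exact ev_addc b (n h t) l
    | n h' t' =>
      change ev (add h h') l.tail + l.headD 0 * ev (add t t') l = _
      simp only [ev, ih1, ih2]; ring

theorem ev_smul (a : ℤ) (p : HPoly) : ∀ l, ev (smul a p) l = a * ev p l := by
  induction p with
  | c b => intro l; exact Int.cast_mul a b
  | n h t ih1 ih2 =>
    intro l
    change ev (smul a h) l.tail + l.headD 0 * ev (smul a t) l = _
    simp only [ev, ih1, ih2]; ring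

theorem ev_nsm (a : ℕ) (p : HPoly) : ∀ l, ev (nsm a p) l = a * ev p l := by
  induction p with
  | c b => intro l; simp [nsm, ev, imul_eq]
  | n h t ih1 ih2 =>
    intro l
    change ev (nsm a h) l.tail + l.headD 0 * ev (nsm a t) l = _
    simp only [ev, ih1, ih2]; ring

theorem ev_mapL (f : HPoly → HPoly) (g : List ℝ → ℝ)
    (hf : ∀ q l, ev (f q) l = g l * ev q l) (p : HPoly) :
    ∀ l, ev (mapL f p) l = g l.tail * ev p l := by
  induction p with
  | c b => intro l; simp [mapL, ev, hf]
  | n h t _ ih2 =>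
    intro l
    change ev (f h) l.tail + l.headD 0 * ev (mapL f t) l = _
    simp only [ev, hf, ih2]; ring

theorem ev_mul (p : HPoly) : ∀ q l, ev (mul p q) l = ev p l * ev q l := by
  induction p with
  | c b => intro q l; exact ev_smul b q l
  | n h t ih1 ih2 =>
    intro q l
    change ev (add (mapL (mul h) q) (n (c 0) (mul t q))) l = _
    simp only [ev_add, ev, ev_mapL (mul h) (ev h) ih1, ih2]
    push_cast; ring

theorem ev_var (k : ℕ) : ∀ l, ev (var k) l = l.getD k 0 := by
  induction k with
  | zero => intro l; cases l <;> simp [var, ev]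
  | succ k ih =>
    intro l
    change ev (var k) l.tail + l.headD 0 * ev (c 0) l = _
    rw [ih]
    cases l <;> simp [ev]

theorem ev_mk (h t : HPoly) (l : List ℝ) : ev (mk h t) l = ev (n h t) l := by
  cases t with
  | n h1 t1 => rfl
  | c z =>
    cases hz : isz z with
    | false => simp only [mk, hz]
    | true =>
      have h0 := isz_eq z hz
      cases h with
      | c b => simp only [mk, hz]; simp [h0, ev]
      | n h1 t1 => simp only [mk, hz]; simp [h0]

theorem ev_nrm (p : HPoly) : ∀ l, ev (nrm p) l = ev p l := by
  induction p with
  | c b => intro l; rfl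
  | n h t ih1 ih2 =>
    intro l
    change ev (mk (nrm h) (nrm t)) l = _
    simp only [ev_mk, ev, ih1, ih2]

/-! Bernstein form check -/

def hev (s r : ℝ) (l : List ℝ) : List HPoly → ℝ
  | [] => 0
  | a :: as => ev a l * r ^ as.length + s * hev s r l as

def toL (p : HPoly) : List HPoly :=
  HPoly.rec (motive := fun _ => List HPoly)
   (fun z => Bool.rec (motive := fun _ => List HPoly) [c z] [] (isz z))
   (fun h _ _ iht => h :: iht) p

def rowAux : ℕ → List ℕ → List ℕ
  | a, [] => [a]
  | a, b :: bs => (a + b) :: rowAux b bs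

def row : ℕ → List ℕ
  | 0 => [1]
  | k + 1 => rowAux 0 (row k)

def rowT : ℕ → List ℕ
  | 0 => []
  | 1 => [1]
  | 2 => [2, 1]
  | 3 => [3, 3, 1]
  | 4 => [4, 6, 4, 1]
  | k + 5 => (row (k + 5)).tail

theorem rowT_eq (k : ℕ) : rowT k = (row k).tail := by
  match k with
  | 0 => rfl
  | 1 => rfl
  | 2 => rfl
  | 3 => rfl
  | 4 => rfl
  | k + 5 => rfl

def addRow (a : HPoly) (zs : List ℕ) : List HPoly → List HPoly :=
  List.rec (motive := fun _ => List HPoly → List HPoly) (fun es => es)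
   (fun z _ ih es => List.rec (motive := fun _ => List HPoly) (nsm z a :: ih [])
      (fun e es _ => add (nsm z a) e :: ih es) es) zs

def bern (l : List HPoly) : List HPoly :=
  List.rec (motive := fun _ => List HPoly) []
   (fun a as ih => a :: addRow a (rowT as.length) ih) l

def all (f : HPoly → Bool) (l : List HPoly) : Bool :=
  List.rec (motive := fun _ => Bool) true
    (fun a _ ih => Bool.rec (motive := fun _ => Bool) false ih (f a)) l

def chk (k : ℕ) : HPoly → Bool :=
  Nat.rec (motive := fun _ => HPoly → Bool)
   (fun p => HPoly.rec (motive := fun _ => Bool) inp (fun _ _ _ _ => false) p)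
   (fun _ ih p => all ih (bern (toL p))) k

theorem all_mem (f : HPoly → Bool) (l : List HPoly) (h : all f l = true) : ∀ a ∈ l, f a = true := by
  induction l with
  | nil => simp
  | cons a l ih =>
    intro b hb
    have h2 : (Bool.rec (motive := fun _ => Bool) false (all f l) (f a)) = true := h
    cases hfa : f a with
    | false => rw [hfa] at h2; exact absurd h2 (by simp)
    | true =>
      rw [hfa] at h2
      rcases List.mem_cons.1 hb with rfl | hb
      · exact hfa
      · exact ih h2 b hb

def hevz (s r : ℝ) : List ℕ → ℝ
  | [] => 0
  | a :: as => (a : ℝ) * r ^ as.length + s * hevz s r as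

theorem length_rowAux (l : List ℕ) : ∀ a, (rowAux a l).length = l.length + 1 := by
  induction l with
  | nil => intro a; rfl
  | cons b bs ih => intro a; simp [rowAux, ih]

theorem hevz_rowAux (s r : ℝ) (l : List ℕ) : ∀ a : ℕ,
    hevz s r (rowAux a l) = a * r ^ l.length + (s + r) * hevz s r l := by
  induction l with
  | nil => intro a; simp [rowAux, hevz]
  | cons b bs ih =>
    intro a
    simp only [rowAux, hevz, ih, length_rowAux, List.length_cons]
    push_cast; ring

theorem length_row (k : ℕ) : (row k).length = k + 1 := by
  induction k with
  | zero => rfl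
  | succ k ih => simp [row, length_rowAux, ih]

theorem head_row (k : ℕ) : ∃ t, row k = 1 :: t := by
  induction k with
  | zero => exact ⟨[], rfl⟩
  | succ k ih =>
    obtain ⟨t, ht⟩ := ih
    exact ⟨rowAux 1 t, by simp [row, ht, rowAux]⟩

theorem hevz_row (s r : ℝ) (h : s + r = 1) (k : ℕ) : hevz s r (row k) = 1 := by
  induction k with
  | zero => simp [row, hevz]
  | succ k ih => simp [row, hevz_rowAux, h, ih]

theorem length_addRow (a : HPoly) (zs : List ℕ) : ∀ es : List HPoly,
    es.length = zs.length → (addRow a zs es).length = zs.length := by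
  induction zs with
  | nil => intro es h; simpa [addRow] using h
  | cons z zs ih =>
    intro es h
    cases es with
    | nil => simp at h
    | cons e es =>
      simp only [List.length_cons, add_left_inj] at h
      change (add (nsm z a) e :: addRow a zs es).length = _
      simp [ih es h]

theorem hev_addRow (s r : ℝ) (l : List ℝ) (a : HPoly) (zs : List ℕ) : ∀ es : List HPoly,
    es.length = zs.length →
    hev s r l (addRow a zs es) = ev a l * hevz s r zs + hev s r l es := by
  induction zs with
  | nil => intro es h; simp [addRow, hevz]
  | cons z zs ih =>
    intro es h
    cases es with
    | nil => simp at h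
    | cons e es =>
      simp only [List.length_cons, add_left_inj] at h
      change hev s r l (add (nsm z a) e :: addRow a zs es) = _
      simp only [hev, hevz, ev_add, ev_nsm, ih es h, length_addRow a zs es h, h]
      ring

theorem length_bern (as : List HPoly) : (bern as).length = as.length := by
  induction as with
  | nil => rfl
  | cons a as ih =>
    change (a :: addRow a (rowT as.length) (bern as)).length = _
    rw [rowT_eq, List.length_cons, length_addRow _ _ _ (by simp [ih, length_row])]
    simp [length_row]

theorem hev_bern (s r : ℝ) (h : s + r = 1) (l : List ℝ) (as : List HPoly) :
    hev s r l (bern as) = hev s 1 l as := by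
  induction as with
  | nil => rfl
  | cons a as ih =>
    have h1 : (bern as).length = (row as.length).tail.length := by simp [length_bern, length_row]
    change hev s r l (a :: addRow a (rowT as.length) (bern as)) = _
    simp only [rowT_eq, hev, hev_addRow _ _ _ _ _ _ h1, ih, length_addRow _ _ _ h1]
    obtain ⟨t, ht⟩ := head_row as.length
    have h2 := hevz_row s r h as.length
    have h3 : t.length = as.length := by
      have := length_row as.length
      rw [ht] at this; simpa using this
    simp only [ht, hevz, List.tail_cons, h3] at h2 ⊢
    push_cast at h2
    simp only [one_pow]
    linear_combination ev a l * h2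

theorem hev_toL (p : HPoly) : ∀ l : List ℝ, hev (l.headD 0) 1 l.tail (toL p) = ev p l := by
  induction p with
  | c z =>
    intro l
    cases hz : isz z with
    | false => simp [toL, hz, hev, ev]
    | true => simp only [toL, hz, hev, ev]; simp [isz_eq z hz]
  | n h t _ ih2 =>
    intro l
    change hev (l.headD 0) 1 l.tail (h :: toL t) = _
    simp only [hev, ev, ih2, one_pow, mul_one]

theorem hev_nonpos (s r : ℝ) (hs : 0 ≤ s) (hr : 0 ≤ r) (l : List ℝ) (as : List HPoly)
    (h : ∀ a ∈ as, ev a l ≤ 0) : hev s r l as ≤ 0 := by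
  induction as with
  | nil => simp [hev]
  | cons a as ih =>
    simp only [hev]
    have h1 := h a (by simp)
    have h2 := ih (fun b hb => h b (by simp [hb]))
    have h3 := mul_nonneg (neg_nonneg.2 h1) (pow_nonneg hr as.length)
    have h4 := mul_nonneg hs (neg_nonneg.2 h2)
    linarith

theorem chk_sound (k : ℕ) : ∀ (p : HPoly) (l : List ℝ), (∀ x ∈ l, 0 ≤ x ∧ x ≤ 1) →
    chk k p = true → ev p l ≤ 0 := by
  induction k with
  | zero =>
    intro p l _ h
    cases p with
    | c z => simp only [ev]; exact_mod_cast inp_le z h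
    | n _ _ => simp [chk] at h
  | succ k ih =>
    intro p l hl h
    have h := all_mem _ _ (show all (chk k) (bern (toL p)) = true from h)
    have hh : 0 ≤ l.headD 0 ∧ l.headD 0 ≤ 1 := by
      cases l with
      | nil => simp
      | cons a l => simpa using hl a (by simp)
    rw [← hev_toL, ← hev_bern (l.headD 0) (1 - l.headD 0) (by ring)]
    refine hev_nonpos _ _ hh.1 (by linarith [hh.2]) _ _ fun a ha => ih a _ ?_ (h a ha)
    intro x hx
    exact hl x (List.mem_of_mem_tail hx)

def sub (p q : HPoly) : HPoly := add p (smul (-1) q)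

theorem ev_sub (p q : HPoly) (l : List ℝ) : ev (sub p q) l = ev p l - ev q l := by
  simp [sub, ev_add, ev_smul]; ring

/-- the variable number `i`, affinely rescaled -/
def av (i : ℕ) (lo len : ℤ) : HPoly := add (c lo) (smul len (var i))

theorem ev_av (i : ℕ) (lo len : ℤ) (l : List ℝ) :
    ev (av i lo len) l = lo + len * l.getD i 0 := by
  simp [av, ev_add, ev_smul, ev_var, ev_c]

end HPoly

instance : Add HPoly := ⟨HPoly.add⟩
instance : Sub HPoly := ⟨HPoly.sub⟩
instance : Mul HPoly := ⟨HPoly.mul⟩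
instance : SMul ℤ HPoly := ⟨HPoly.smul⟩

namespace HPoly
theorem ev_add' (p q : HPoly) (l : List ℝ) : ev (p + q) l = ev p l + ev q l := ev_add p q l
theorem ev_sub' (p q : HPoly) (l : List ℝ) : ev (p - q) l = ev p l - ev q l := ev_sub p q l
theorem ev_mul' (p q : HPoly) (l : List ℝ) : ev (p * q) l = ev p l * ev q l := ev_mul p q l
theorem ev_smul' (a : ℤ) (p : HPoly) (l : List ℝ) : ev (a • p) l = a * ev p l := ev_smul a p l
end HPoly

namespace HPoly

/-- face term: `r * χ` -/
def fcP (x1 x2 x6 x4 x5 x3 r : HPoly) : HPoly :=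
  r * (x4 * (x1 * (x2 + x6 - x1)) + x5 * (x2 * (x1 + x6 - x2)) + x3 * (x6 * (x1 + x2 - x6))
    - (2 : ℤ) • (x1 * (x2 * x6)))

def linP (b s1 s2 s3 : ℤ) (x1 x2 x3 : HPoly) : HPoly := c b + s1 • x1 + s2 • x2 + s3 • x3

def gP (x1 x2 x3 x4 x5 x6 : HPoly) : HPoly :=
  (4 : ℤ) • (x1 * (x2 * x3)) + (x1 + x2 - x6) * ((x1 + x3 - x5) * (x2 + x3 - x4))
   - x1 * ((x2 + x3 - x4) * (x2 + x3 - x4)) - x2 * ((x1 + x3 - x5) * (x1 + x3 - x5))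
   - x3 * ((x1 + x2 - x6) * (x1 + x2 - x6))

def aP (x1 x2 x3 x4 x5 x6 y1 y2 y3 : HPoly) : HPoly :=
  (2 : ℤ) • (y1 * (y2 * y3)) + (100000000000000 : ℤ) • (y1 * (x2 + x3 - x4) + y2 * (x1 + x3 - x5)
    + y3 * (x1 + x2 - x6))

def wP (A X G : HPoly) (C2 C1 w2 : ℤ) : HPoly :=
  (C2 * (5 * 10 ^ 35)) • G + A * ((C1 * (25 * 10 ^ 6)) • G + c (C1 * w2 * 10 ^ 14) - (300375 : ℤ) • X)
    + c 1

def fullP (x1 x2 x3 x4 x5 x6 y1 y2 y3 r1 r2 r3 : HPoly) (C2 C1 w2 : ℤ) : HPoly :=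
  wP (aP x1 x2 x3 x4 x5 x6 y1 y2 y3)
    (fcP x1 x2 x6 x4 x5 x3 r1 + fcP x1 x3 x5 x4 x6 x2 r2 + fcP x2 x3 x4 x5 x6 x1 r3)
    (gP x1 x2 x3 x4 x5 x6) C2 C1 w2

/-- `R * u - 10^8 * S` -/
def rP (x1 x2 x6 r : HPoly) : HPoly :=
  r * ((4 : ℤ) • (x1 * x2) - (x1 + x2 - x6) * (x1 + x2 - x6))
   - (100000000 : ℤ) • (x6 * (x1 + x2) - (x1 - x2) * (x1 - x2))


def fcR (x1 x2 x6 x4 x5 x3 r : ℝ) : ℝ :=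
  r * (x4 * (x1 * (x2 + x6 - x1)) + x5 * (x2 * (x1 + x6 - x2)) + x3 * (x6 * (x1 + x2 - x6))
    - 2 * (x1 * (x2 * x6)))

def gR (x1 x2 x3 x4 x5 x6 : ℝ) : ℝ :=
  4 * (x1 * (x2 * x3)) + (x1 + x2 - x6) * ((x1 + x3 - x5) * (x2 + x3 - x4))
   - x1 * ((x2 + x3 - x4) * (x2 + x3 - x4)) - x2 * ((x1 + x3 - x5) * (x1 + x3 - x5))
   - x3 * ((x1 + x2 - x6) * (x1 + x2 - x6))

def aR (x1 x2 x3 x4 x5 x6 y1 y2 y3 : ℝ) : ℝ :=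
  2 * (y1 * (y2 * y3)) + 100000000000000 * (y1 * (x2 + x3 - x4) + y2 * (x1 + x3 - x5)
    + y3 * (x1 + x2 - x6))

def fullR (x1 x2 x3 x4 x5 x6 y1 y2 y3 r1 r2 r3 C2 C1 w2 : ℝ) : ℝ :=
  C2 * 500000000000000000000000000000000000 * gR x1 x2 x3 x4 x5 x6 + aR x1 x2 x3 x4 x5 x6 y1 y2 y3 *
    (C1 * 25000000 * gR x1 x2 x3 x4 x5 x6 + C1 * w2 * 100000000000000 - 300375 *
    (fcR x1 x2 x6 x4 x5 x3 r1 + fcR x1 x3 x5 x4 x6 x2 r2 + fcR x2 x3 x4 x5 x6 x1 r3)) + 1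

theorem ev_linP (b s1 s2 s3 : ℤ) (x1 x2 x3 : HPoly) (l : List ℝ) :
    ev (linP b s1 s2 s3 x1 x2 x3) l = b + s1 * ev x1 l + s2 * ev x2 l + s3 * ev x3 l := by
  simp only [linP, ev_add', ev_smul', ev_c]

theorem ev_fullP (x1 x2 x3 x4 x5 x6 y1 y2 y3 r1 r2 r3 : HPoly) (C2 C1 w2 : ℤ) (l : List ℝ) :
    ev (fullP x1 x2 x3 x4 x5 x6 y1 y2 y3 r1 r2 r3 C2 C1 w2) l =
      fullR (ev x1 l) (ev x2 l) (ev x3 l) (ev x4 l) (ev x5 l) (ev x6 l) (ev y1 l) (ev y2 l)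
        (ev y3 l) (ev r1 l) (ev r2 l) (ev r3 l) C2 C1 w2 := by
  simp only [fullP, wP, aP, gP, fcP, ev_add', ev_smul', ev_c, ev_mul', ev_sub', fullR, aR, gR, fcR]
  push_cast
  rfl

theorem ev_rP (x1 x2 x6 r : HPoly) (l : List ℝ) :
    ev (rP x1 x2 x6 r) l = ev r l * (4 * (ev x1 l * ev x2 l) -
      (ev x1 l + ev x2 l - ev x6 l) * (ev x1 l + ev x2 l - ev x6 l))
      - 100000000 * (ev x6 l * (ev x1 l + ev x2 l) - (ev x1 l - ev x2 l) * (ev x1 l - ev x2 l)) := by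
  simp only [rP, ev_add', ev_smul', ev_c, ev_mul', ev_sub']
  push_cast
  rfl

theorem av_aux (lo len : ℤ) (hl : 0 < len) (X : ℝ) (h : (lo : ℝ) ≤ X ∧ X ≤ lo + len) :
    ∃ s : ℝ, (0 ≤ s ∧ s ≤ 1) ∧ lo + len * s = X := by
  have h1 : (0 : ℝ) < len := by exact_mod_cast hl
  refine ⟨(X - lo) / len, ⟨div_nonneg (by linarith) h1.le, (div_le_one h1).2 (by linarith)⟩, ?_⟩
  field_simp
  ring

theorem env6 (a1 a2 a3 a4 a5 a6 d1 d2 d3 d4 d5 d6 : ℤ) (X1 X2 X3 X4 X5 X6 : ℝ)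
    (hd : (0 < d1 ∧ 0 < d2 ∧ 0 < d3) ∧ (0 < d4 ∧ 0 < d5 ∧ 0 < d6))
    (h1 : (a1 : ℝ) ≤ X1 ∧ X1 ≤ a1 + d1) (h2 : (a2 : ℝ) ≤ X2 ∧ X2 ≤ a2 + d2)
    (h3 : (a3 : ℝ) ≤ X3 ∧ X3 ≤ a3 + d3) (h4 : (a4 : ℝ) ≤ X4 ∧ X4 ≤ a4 + d4)
    (h5 : (a5 : ℝ) ≤ X5 ∧ X5 ≤ a5 + d5) (h6 : (a6 : ℝ) ≤ X6 ∧ X6 ≤ a6 + d6) :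
    ∃ l : List ℝ, (∀ x ∈ l, 0 ≤ x ∧ x ≤ 1) ∧ ev (av 0 a1 d1) l = X1 ∧ ev (av 1 a2 d2) l = X2 ∧
      ev (av 2 a3 d3) l = X3 ∧ ev (av 3 a4 d4) l = X4 ∧ ev (av 4 a5 d5) l = X5 ∧
      ev (av 5 a6 d6) l = X6 := by
  obtain ⟨s1, b1, e1⟩ := av_aux a1 d1 hd.1.1 X1 h1
  obtain ⟨s2, b2, e2⟩ := av_aux a2 d2 hd.1.2.1 X2 h2
  obtain ⟨s3, b3, e3⟩ := av_aux a3 d3 hd.1.2.2 X3 h3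
  obtain ⟨s4, b4, e4⟩ := av_aux a4 d4 hd.2.1 X4 h4
  obtain ⟨s5, b5, e5⟩ := av_aux a5 d5 hd.2.2.1 X5 h5
  obtain ⟨s6, b6, e6⟩ := av_aux a6 d6 hd.2.2.2 X6 h6
  refine ⟨[s1, s2, s3, s4, s5, s6], ?_, ?_, ?_, ?_, ?_, ?_, ?_⟩
  · intro x hx
    simp only [List.mem_cons, List.not_mem_nil, or_false] at hx
    rcases hx with rfl | rfl | rfl | rfl | rfl | rfl <;> assumption
  all_goals (rw [ev_av]; simpa)

theorem env3 (a1 a2 a3 d1 d2 d3 : ℤ) (X1 X2 X3 : ℝ)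
    (hd : 0 < d1 ∧ 0 < d2 ∧ 0 < d3)
    (h1 : (a1 : ℝ) ≤ X1 ∧ X1 ≤ a1 + d1) (h2 : (a2 : ℝ) ≤ X2 ∧ X2 ≤ a2 + d2)
    (h3 : (a3 : ℝ) ≤ X3 ∧ X3 ≤ a3 + d3) :
    ∃ l : List ℝ, (∀ x ∈ l, 0 ≤ x ∧ x ≤ 1) ∧ ev (av 0 a1 d1) l = X1 ∧ ev (av 1 a2 d2) l = X2 ∧
      ev (av 2 a3 d3) l = X3 := by
  obtain ⟨s1, b1, e1⟩ := av_aux a1 d1 hd.1 X1 h1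
  obtain ⟨s2, b2, e2⟩ := av_aux a2 d2 hd.2.1 X2 h2
  obtain ⟨s3, b3, e3⟩ := av_aux a3 d3 hd.2.2 X3 h3
  refine ⟨[s1, s2, s3], ?_, ?_, ?_, ?_⟩
  · intro x hx
    simp only [List.mem_cons, List.not_mem_nil, or_false] at hx
    rcases hx with rfl | rfl | rfl <;> assumption
  all_goals (rw [ev_av]; simpa)

/-- linear lower bound for the squared circumradius -/
theorem r_bound (a1 a2 a3 d1 d2 d3 b s1 s2 s3 : ℤ)
    (hd : 0 < d1 ∧ 0 < d2 ∧ 0 < d3)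
    (hc : chk 3 (nrm (rP (av 0 a1 d1) (av 1 a2 d2) (av 2 a3 d3)
      (linP b s1 s2 s3 (av 0 a1 d1) (av 1 a2 d2) (av 2 a3 d3)))) = true) (X1 X2 X3 : ℝ)
    (h1 : (a1 : ℝ) ≤ X1 ∧ X1 ≤ a1 + d1) (h2 : (a2 : ℝ) ≤ X2 ∧ X2 ≤ a2 + d2)
    (h3 : (a3 : ℝ) ≤ X3 ∧ X3 ≤ a3 + d3) :
    (b + s1 * X1 + s2 * X2 + s3 * X3) * (4 * (X1 * X2) - (X1 + X2 - X3) * (X1 + X2 - X3)) ≤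
      100000000 * (X3 * (X1 + X2) - (X1 - X2) * (X1 - X2)) := by
  obtain ⟨l, hl, e1, e2, e3⟩ := env3 a1 a2 a3 d1 d2 d3 X1 X2 X3 hd h1 h2 h3
  have h := chk_sound 3 _ l hl hc
  rw [ev_nrm, ev_rP, ev_linP, e1, e2, e3] at h
  linarith

theorem full_bound (a1 a2 a3 a4 a5 a6 d1 d2 d3 d4 d5 d6 b1 y1 b2 y2 b3 y3 : ℤ)
    (p1 p2 p3 p4 q1 q2 q3 q4 r1 r2 r3 r4 C2 C1 w2 : ℤ)
    (hd : (0 < d1 ∧ 0 < d2 ∧ 0 < d3) ∧ (0 < d4 ∧ 0 < d5 ∧ 0 < d6))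
    (hc : chk 6 (nrm (fullP (av 0 a1 d1) (av 1 a2 d2) (av 2 a3 d3) (av 3 a4 d4) (av 4 a5 d5)
      (av 5 a6 d6) (c b1 + y1 • av 0 a1 d1) (c b2 + y2 • av 1 a2 d2) (c b3 + y3 • av 2 a3 d3)
      (linP p1 p2 p3 p4 (av 0 a1 d1) (av 1 a2 d2) (av 5 a6 d6))
      (linP q1 q2 q3 q4 (av 0 a1 d1) (av 2 a3 d3) (av 4 a5 d5))
      (linP r1 r2 r3 r4 (av 1 a2 d2) (av 2 a3 d3) (av 3 a4 d4)) C2 C1 w2)) = true)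
    (X1 X2 X3 X4 X5 X6 : ℝ)
    (h1 : (a1 : ℝ) ≤ X1 ∧ X1 ≤ a1 + d1) (h2 : (a2 : ℝ) ≤ X2 ∧ X2 ≤ a2 + d2)
    (h3 : (a3 : ℝ) ≤ X3 ∧ X3 ≤ a3 + d3) (h4 : (a4 : ℝ) ≤ X4 ∧ X4 ≤ a4 + d4)
    (h5 : (a5 : ℝ) ≤ X5 ∧ X5 ≤ a5 + d5) (h6 : (a6 : ℝ) ≤ X6 ∧ X6 ≤ a6 + d6) :
    fullR X1 X2 X3 X4 X5 X6 (b1 + y1 * X1) (b2 + y2 * X2) (b3 + y3 * X3)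
      (p1 + p2 * X1 + p3 * X2 + p4 * X6) (q1 + q2 * X1 + q3 * X3 + q4 * X5)
      (r1 + r2 * X2 + r3 * X3 + r4 * X4) C2 C1 w2 ≤ 0 := by
  obtain ⟨l, hl, e1, e2, e3, e4, e5, e6⟩ := env6 a1 a2 a3 a4 a5 a6 d1 d2 d3 d4 d5 d6 X1 X2 X3 X4 X5 X6
    hd h1 h2 h3 h4 h5 h6
  have h := chk_sound 6 _ l hl hc
  simpa only [ev_nrm, ev_fullP, ev_linP, ev_add', ev_smul', ev_c, e1, e2, e3, e4, e5, e6] using h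


def rho (x1 x2 x6 : ℝ) : ℝ :=
  (x6 * (x1 + x2) - (x1 - x2) * (x1 - x2)) / (4 * (x1 * x2) - (x1 + x2 - x6) * (x1 + x2 - x6))

theorem rho_ge (x1 x2 x6 r : ℝ) (hu : 0 < 4 * (x1 * x2) - (x1 + x2 - x6) * (x1 + x2 - x6))
    (h : r * (4 * ((10000 * x1) * (10000 * x2)) - (10000 * x1 + 10000 * x2 - 10000 * x6) *
      (10000 * x1 + 10000 * x2 - 10000 * x6)) ≤
      100000000 * ((10000 * x6) * (10000 * x1 + 10000 * x2) - (10000 * x1 - 10000 * x2) *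
      (10000 * x1 - 10000 * x2))) : r / 100000000 ≤ rho x1 x2 x6 := by
  rw [rho, le_div_iff₀ hu]
  nlinarith [h]

theorem num_case (a1 a2 a3 a4 a5 a6 d1 d2 d3 d4 d5 d6 b1 s1 b2 s2 b3 s3 : ℤ)
    (p1 p2 p3 p4 q1 q2 q3 q4 r1 r2 r3 r4 C2 C1 w2 : ℤ)
    (hd : (0 < d1 ∧ 0 < d2 ∧ 0 < d3) ∧ (0 < d4 ∧ 0 < d5 ∧ 0 < d6))
    (hc : chk 6 (nrm (fullP (av 0 a1 d1) (av 1 a2 d2) (av 2 a3 d3) (av 3 a4 d4) (av 4 a5 d5)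
      (av 5 a6 d6) (c b1 + s1 • av 0 a1 d1) (c b2 + s2 • av 1 a2 d2) (c b3 + s3 • av 2 a3 d3)
      (linP p1 p2 p3 p4 (av 0 a1 d1) (av 1 a2 d2) (av 5 a6 d6))
      (linP q1 q2 q3 q4 (av 0 a1 d1) (av 2 a3 d3) (av 4 a5 d5))
      (linP r1 r2 r3 r4 (av 1 a2 d2) (av 2 a3 d3) (av 3 a4 d4)) C2 C1 w2)) = true)
    (hp : chk 3 (nrm (rP (av 0 a1 d1) (av 1 a2 d2) (av 2 a6 d6)
      (linP p1 p2 p3 p4 (av 0 a1 d1) (av 1 a2 d2) (av 2 a6 d6)))) = true)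
    (hq : chk 3 (nrm (rP (av 0 a1 d1) (av 1 a3 d3) (av 2 a5 d5)
      (linP q1 q2 q3 q4 (av 0 a1 d1) (av 1 a3 d3) (av 2 a5 d5)))) = true)
    (hr : chk 3 (nrm (rP (av 0 a2 d2) (av 1 a3 d3) (av 2 a4 d4)
      (linP r1 r2 r3 r4 (av 0 a2 d2) (av 1 a3 d3) (av 2 a4 d4)))) = true)
    (hC2 : 0 < C2) (x1 x2 x3 x4 x5 x6 y1 y2 y3 : ℝ)
    (h1 : (a1 : ℝ) ≤ 10000 * x1 ∧ 10000 * x1 ≤ a1 + d1)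
    (h2 : (a2 : ℝ) ≤ 10000 * x2 ∧ 10000 * x2 ≤ a2 + d2)
    (h3 : (a3 : ℝ) ≤ 10000 * x3 ∧ 10000 * x3 ≤ a3 + d3)
    (h4 : (a4 : ℝ) ≤ 10000 * x4 ∧ 10000 * x4 ≤ a4 + d4)
    (h5 : (a5 : ℝ) ≤ 10000 * x5 ∧ 10000 * x5 ≤ a5 + d5)
    (h6 : (a6 : ℝ) ≤ 10000 * x6 ∧ 10000 * x6 ≤ a6 + d6)
    (hy1 : 0 < b1 + s1 * (10000 * x1) ∧ b1 + s1 * (10000 * x1) ≤ 1000000000 * y1)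
    (hy2 : 0 < b2 + s2 * (10000 * x2) ∧ b2 + s2 * (10000 * x2) ≤ 1000000000 * y2)
    (hy3 : 0 < b3 + s3 * (10000 * x3) ∧ b3 + s3 * (10000 * x3) ≤ 1000000000 * y3)
    (hg1 : 0 ≤ x2 + x3 - x4) (hg2 : 0 ≤ x1 + x3 - x5) (hg3 : 0 ≤ x1 + x2 - x6)
    (hu1 : 0 < 4 * (x1 * x2) - (x1 + x2 - x6) * (x1 + x2 - x6))
    (hu2 : 0 < 4 * (x1 * x3) - (x1 + x3 - x5) * (x1 + x3 - x5))
    (hu3 : 0 < 4 * (x2 * x3) - (x2 + x3 - x4) * (x2 + x3 - x4))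
    (hx1 : 0 ≤ fcR x1 x2 x6 x4 x5 x3 1) (hx2 : 0 ≤ fcR x1 x3 x5 x4 x6 x2 1)
    (hx3 : 0 ≤ fcR x2 x3 x4 x5 x6 x1 1) (hG : 0 < gR x1 x2 x3 x4 x5 x6) :
    C2 / 1000000 * (gR x1 x2 x3 x4 x5 x6 / 4) <
      (y1 * y2 * y3 + (y1 * (x2 + x3 - x4) + y2 * (x1 + x3 - x5) + y3 * (x1 + x2 - x6)) / 2) *
      (7209 / 240000 * (rho x1 x2 x6 * fcR x1 x2 x6 x4 x5 x3 1 +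
        rho x1 x3 x5 * fcR x1 x3 x5 x4 x6 x2 1 + rho x2 x3 x4 * fcR x2 x3 x4 x5 x6 x1 1) -
        C1 / 10000000 * (gR x1 x2 x3 x4 x5 x6 / 4 + w2 / 1000000)) := by
  have R1 := rho_ge x1 x2 x6 _ hu1 (r_bound a1 a2 a6 d1 d2 d6 p1 p2 p3 p4
    ⟨hd.1.1, hd.1.2.1, hd.2.2.2⟩ hp _ _ _ h1 h2 h6)
  have R2 := rho_ge x1 x3 x5 _ hu2 (r_bound a1 a3 a5 d1 d3 d5 q1 q2 q3 q4
    ⟨hd.1.1, hd.1.2.2, hd.2.2.1⟩ hq _ _ _ h1 h3 h5)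
  have R3 := rho_ge x2 x3 x4 _ hu3 (r_bound a2 a3 a4 d2 d3 d4 r1 r2 r3 r4
    ⟨hd.1.2.1, hd.1.2.2, hd.2.1⟩ hr _ _ _ h2 h3 h4)
  have F := full_bound a1 a2 a3 a4 a5 a6 d1 d2 d3 d4 d5 d6 b1 s1 b2 s2 b3 s3
    p1 p2 p3 p4 q1 q2 q3 q4 r1 r2 r3 r4 C2 C1 w2 hd hc _ _ _ _ _ _ h1 h2 h3 h4 h5 h6
  generalize (p1 : ℝ) + p2 * (10000 * x1) + p3 * (10000 * x2) + p4 * (10000 * x6) = P1 at *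
  generalize (q1 : ℝ) + q2 * (10000 * x1) + q3 * (10000 * x3) + q4 * (10000 * x5) = P2 at *
  generalize (r1 : ℝ) + r2 * (10000 * x2) + r3 * (10000 * x3) + r4 * (10000 * x4) = P3 at *
  generalize (b1 : ℝ) + s1 * (10000 * x1) = Y1 at *
  generalize (b2 : ℝ) + s2 * (10000 * x2) = Y2 at *
  generalize (b3 : ℝ) + s3 * (10000 * x3) = Y3 at *
  have T1 := mul_le_mul_of_nonneg_right R1 hx1
  have T2 := mul_le_mul_of_nonneg_right R2 hx2
  have T3 := mul_le_mul_of_nonneg_right R3 hx3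
  have eG : gR (10000 * x1) (10000 * x2) (10000 * x3) (10000 * x4) (10000 * x5) (10000 * x6) =
      1000000000000 * gR x1 x2 x3 x4 x5 x6 := by simp only [gR]; ring
  have eF : ∀ z1 z2 z3 z4 z5 z6 r : ℝ, fcR (10000 * z1) (10000 * z2) (10000 * z3) (10000 * z4)
      (10000 * z5) (10000 * z6) r = 1000000000000 * (r * fcR z1 z2 z3 z4 z5 z6 1) := by
    intros; simp only [fcR]; ring
  obtain ⟨Z1, rfl⟩ : ∃ z, Y1 = 1000000000 * z := ⟨Y1 / 1000000000, by ring⟩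
  obtain ⟨Z2, rfl⟩ : ∃ z, Y2 = 1000000000 * z := ⟨Y2 / 1000000000, by ring⟩
  obtain ⟨Z3, rfl⟩ : ∃ z, Y3 = 1000000000 * z := ⟨Y3 / 1000000000, by ring⟩
  have z1 : 0 < Z1 := by linarith [hy1.1]
  have z2 : 0 < Z2 := by linarith [hy2.1]
  have z3 : 0 < Z3 := by linarith [hy3.1]
  have l1 : Z1 ≤ y1 := by linarith [hy1.2]
  have l2 : Z2 ≤ y2 := by linarith [hy2.2]
  have l3 : Z3 ≤ y3 := by linarith [hy3.2]
  have eA : aR (10000 * x1) (10000 * x2) (10000 * x3) (10000 * x4) (10000 * x5) (10000 * x6)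
      (1000000000 * Z1) (1000000000 * Z2) (1000000000 * Z3) = 2000000000000000000000000000 *
      (Z1 * Z2 * Z3 + (Z1 * (x2 + x3 - x4) + Z2 * (x1 + x3 - x5) + Z3 * (x1 + x2 - x6)) / 2) := by
    simp only [aR]; ring
  simp only [fullR, eG, eF, eA] at F
  have hA : Z1 * Z2 * Z3 + (Z1 * (x2 + x3 - x4) + Z2 * (x1 + x3 - x5) + Z3 * (x1 + x2 - x6)) / 2 ≤
      y1 * y2 * y3 + (y1 * (x2 + x3 - x4) + y2 * (x1 + x3 - x5) + y3 * (x1 + x2 - x6)) / 2 := by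
    have e1 := mul_le_mul_of_nonneg_right l1 hg1
    have e2 := mul_le_mul_of_nonneg_right l2 hg2
    have e3 := mul_le_mul_of_nonneg_right l3 hg3
    have e4 : Z1 * Z2 * Z3 ≤ y1 * y2 * y3 :=
      mul_le_mul (mul_le_mul l1 l2 z2.le (z1.le.trans l1)) l3 z3.le
        (mul_nonneg (z1.le.trans l1) (z2.le.trans l2))
    linarith
  have hA0 : 0 < Z1 * Z2 * Z3 +
      (Z1 * (x2 + x3 - x4) + Z2 * (x1 + x3 - x5) + Z3 * (x1 + x2 - x6)) / 2 := by
    have e1 := mul_nonneg z1.le hg1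
    have e2 := mul_nonneg z2.le hg2
    have e3 := mul_nonneg z3.le hg3
    have e4 := mul_pos (mul_pos z1 z2) z3
    linarith
  generalize Z1 * Z2 * Z3 +
      (Z1 * (x2 + x3 - x4) + Z2 * (x1 + x3 - x5) + Z3 * (x1 + x2 - x6)) / 2 = A at *
  generalize y1 * y2 * y3 +
      (y1 * (x2 + x3 - x4) + y2 * (x1 + x3 - x5) + y3 * (x1 + x2 - x6)) / 2 = A' at *
  generalize gR x1 x2 x3 x4 x5 x6 = G at *
  generalize fcR x1 x2 x6 x4 x5 x3 1 = f1 at *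
  generalize fcR x1 x3 x5 x4 x6 x2 1 = f2 at *
  generalize fcR x2 x3 x4 x5 x6 x1 1 = f3 at *
  generalize rho x1 x2 x6 * f1 = g1 at *
  generalize rho x1 x3 x5 * f2 = g2 at *
  generalize rho x2 x3 x4 * f3 = g3 at *
  have c2 : (0 : ℝ) < C2 := by exact_mod_cast hC2
  have K : C2 / 1000000 * (G / 4) < A * (7209 / 240000 * (P1 / 100000000 * f1 + P2 / 100000000 * f2 +
      P3 / 100000000 * f3) - C1 / 10000000 * (G / 4 + w2 / 1000000)) := by
    nlinarith [F]
  have c3 : 0 < C2 / 1000000 * (G / 4) := by positivity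
  have K2 : 7209 / 240000 * (P1 / 100000000 * f1 + P2 / 100000000 * f2 +
      P3 / 100000000 * f3) - C1 / 10000000 * (G / 4 + w2 / 1000000) ≤
      7209 / 240000 * (g1 + g2 + g3) - C1 / 10000000 * (G / 4 + w2 / 1000000) := by linarith
  have K3 := (mul_pos_iff_of_pos_left hA0).1 (c3.trans K)
  exact K.trans_le (mul_le_mul hA K2 K3.le (hA0.le.trans hA))

end HPoly

namespace HPoly
def nc1 := num_case 42436 40000 40000 63001 40000 40000 20565 23001 23001 16999 23001 23001 1131457884 21881 1113120000 22172 1113120000 22172 84528640 (-490) (-423) 479 84528640 (-490) (-423) 479 101674200 (-870) (-870) 800 2409353 45583 36469521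
  (by decide) (by decide +kernel) (by decide +kernel) (by decide +kernel) (by decide +kernel) (by decide)
def nc2 := num_case 40000 43264 40000 63001 40000 40000 23001 19737 23001 16999 23001 23001 1113120000 22172 1137450496 21786 1113120000 22172 84426416 (-405) (-494) 472 84706000 (-478) (-478) 505 100247584 (-808) (-769) 728 2409495 44701 37859409
  (by decide) (by decide +kernel) (by decide +kernel) (by decide +kernel) (by decide +kernel) (by decide)
def nc3 := num_case 40000 40000 40000 63001 48400 40000 23001 23001 23001 16999 14601 23001 1113120000 22172 1113120000 22172 1113120000 22172 84706000 (-478) (-478) 505 90151200 (-589) (-589) 592 101674200 (-870) (-870) 800 2334205 64248 40500496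
  (by decide) (by decide +kernel) (by decide +kernel) (by decide +kernel) (by decide +kernel) (by decide)
def nc4 := num_case 40000 40000 40000 66564 44944 40000 23001 23001 23001 13436 18057 23001 1113120000 22172 1113120000 22172 1113120000 22172 84706000 (-478) (-478) 505 87832024 (-540) (-540) 554 105015576 (-963) (-963) 866 2347391 61796 38613796
  (by decide) (by decide +kernel) (by decide +kernel) (by decide +kernel) (by decide +kernel) (by decide)
end HPoly

/-! ### Elementary bounds for `arctan` and `δoct` -/

theorem nonneg_of_hasDerivAt (f f' : ℝ → ℝ) (h0 : f 0 = 0) (hd : ∀ x, HasDerivAt f (f' x) x)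
    (hp : ∀ x, 0 ≤ f' x) (x : ℝ) (hx : 0 ≤ x) : 0 ≤ f x := by
  have hm : Monotone f := by
    apply monotone_of_deriv_nonneg
    · intro x; exact (hd x).differentiableAt
    · intro x; rw [(hd x).deriv]; exact hp x
  rw [← h0]; exact hm hx

theorem arctan_le_poly (x : ℝ) (hx : 0 ≤ x) : arctan x ≤ x - x ^ 3 / 3 + x ^ 5 / 5 := by
  have := nonneg_of_hasDerivAt (fun x => x - x ^ 3 / 3 + x ^ 5 / 5 - arctan x)
    (fun x => 1 - 3 * x ^ 2 / 3 + 5 * x ^ 4 / 5 - 1 / (1 + x ^ 2)) (by simp) ?_ ?_ x hx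
  · linarith
  · intro x
    have := (((hasDerivAt_id x).sub ((hasDerivAt_pow 3 x).div_const 3)).add
      ((hasDerivAt_pow 5 x).div_const 5)).sub (hasDerivAt_arctan x)
    refine (this.congr_deriv ?_)
    simp
  · intro x
    have h : 0 < 1 + x ^ 2 := by positivity
    have : 1 - 3 * x ^ 2 / 3 + 5 * x ^ 4 / 5 - 1 / (1 + x ^ 2) = x ^ 6 / (1 + x ^ 2) := by
      field_simp; ring
    rw [this]; positivity

theorem poly_le_arctan (x : ℝ) (hx : 0 ≤ x) :
    x - x ^ 3 / 3 + x ^ 5 / 5 - x ^ 7 / 7 ≤ arctan x := by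
  have := nonneg_of_hasDerivAt (fun x => arctan x - (x - x ^ 3 / 3 + x ^ 5 / 5 - x ^ 7 / 7))
    (fun x => 1 / (1 + x ^ 2) - (1 - 3 * x ^ 2 / 3 + 5 * x ^ 4 / 5 - 7 * x ^ 6 / 7)) (by simp) ?_ ?_ x hx
  · linarith
  · intro x
    have := (hasDerivAt_arctan x).sub ((((hasDerivAt_id x).sub ((hasDerivAt_pow 3 x).div_const 3)).add
      ((hasDerivAt_pow 5 x).div_const 5)).sub ((hasDerivAt_pow 7 x).div_const 7))
    refine (this.congr_deriv ?_)
    simp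
  · intro x
    have h : 0 < 1 + x ^ 2 := by positivity
    have : 1 / (1 + x ^ 2) - (1 - 3 * x ^ 2 / 3 + 5 * x ^ 4 / 5 - 7 * x ^ 6 / 7)
        = x ^ 8 / (1 + x ^ 2) := by
      field_simp; ring
    rw [this]; positivity

theorem arctan_le_tangent (t0 t : ℝ) (h0 : 0 ≤ t0) (ht : 0 ≤ t) :
    arctan t ≤ arctan t0 + (t - t0) / (1 + t0 ^ 2) := by
  have hp : 0 < 1 + t0 ^ 2 := by positivity
  rcases lt_trichotomy t t0 with h | h | h
  · obtain ⟨c, hc, e⟩ := exists_hasDerivAt_eq_slope arctan (fun x => 1 / (1 + x ^ 2)) h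
      continuous_arctan.continuousOn (fun x _ => hasDerivAt_arctan x)
    have hc0 : 0 < 1 + c ^ 2 := by positivity
    have : 1 / (1 + t0 ^ 2) ≤ 1 / (1 + c ^ 2) := by
      apply one_div_le_one_div_of_le hc0
      nlinarith [hc.1, hc.2]
    rw [e, le_div_iff₀ (by linarith)] at this
    have e2 : (t - t0) / (1 + t0 ^ 2) = - (1 / (1 + t0 ^ 2) * (t0 - t)) := by ring
    rw [e2]; linarith
  · subst h; simp
  · obtain ⟨c, hc, e⟩ := exists_hasDerivAt_eq_slope arctan (fun x => 1 / (1 + x ^ 2)) h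
      continuous_arctan.continuousOn (fun x _ => hasDerivAt_arctan x)
    have hc0 : 0 < 1 + c ^ 2 := by positivity
    have : 1 / (1 + c ^ 2) ≤ 1 / (1 + t0 ^ 2) := by
      apply one_div_le_one_div_of_le hp
      nlinarith [hc.1, hc.2]
    rw [e, div_le_iff₀ (by linarith)] at this
    have e2 : (t - t0) / (1 + t0 ^ 2) = (1 / (1 + t0 ^ 2) * (t - t0)) := by ring
    rw [e2]; linarith

theorem δoct_ge : (7209 / 10000 : ℝ) ≤ δoct := by
  have s2 : Real.sqrt 2 ^ 2 = 2 := Real.sq_sqrt (by norm_num)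
  have s2p : 0 < Real.sqrt 2 := by positivity
  have l2 : (1.41421 : ℝ) < Real.sqrt 2 := by
    rw [Real.lt_sqrt] <;> norm_num
  have u2 : Real.sqrt 2 < 1.41422 := by
    rw [Real.sqrt_lt'] <;> norm_num
  set u : ℝ := 3 - 2 * Real.sqrt 2 with hu
  have u0 : 0 < u := by rw [hu]; linarith
  have u1 : u < 1 := by rw [hu]; linarith
  have hs8 : Real.sqrt 8 = 2 * Real.sqrt 2 := by
    rw [show (8 : ℝ) = 2 ^ 2 * 2 by norm_num, Real.sqrt_mul (by norm_num), Real.sqrt_sq (by norm_num)]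
  have ha : arccos (1 / Real.sqrt 3) = π / 4 + arctan u := by
    have h1 : 0 < arctan u := by rw [← arctan_zero]; exact arctan_strictMono u0
    have h2 : arctan u < π / 4 := by rw [← arctan_one]; exact arctan_strictMono u1
    rw [← arccos_cos (x := π / 4 + arctan u) (by linarith [pi_pos]) (by linarith [pi_pos])]
    congr 1
    rw [cos_add, cos_pi_div_four, sin_pi_div_four, cos_arctan, sin_arctan]
    have hq : 0 < 1 + u ^ 2 := by positivity
    have e : Real.sqrt 2 / 2 * (1 / Real.sqrt (1 + u ^ 2)) - Real.sqrt 2 / 2 * (u / Real.sqrt (1 + u ^ 2))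
        = Real.sqrt 2 / 2 * (1 - u) / Real.sqrt (1 + u ^ 2) := by ring
    rw [e]
    have n1 : 0 ≤ 1 / Real.sqrt 3 := by positivity
    have n2 : 0 ≤ Real.sqrt 2 / 2 * (1 - u) / Real.sqrt (1 + u ^ 2) := by
      have : 0 < 1 - u := by linarith
      positivity
    rw [← sq_eq_sq₀ n1 n2, div_pow, div_pow, Real.sq_sqrt hq.le, Real.sq_sqrt (by norm_num), mul_pow,
      div_pow, s2, div_eq_div_iff (by norm_num) hq.ne', hu]
    ring_nf
    rw [s2]; ring
  have hb := poly_le_arctan u u0.le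
  rw [δoct, ha, hs8, le_div_iff₀ (by positivity)]
  -- u ∈ (.17156,.17158)
  have uu : u ^ 2 = 6 * u - 1 := by rw [hu]; ring_nf; rw [s2]; ring
  have v : (u - u ^ 3 / 3 + u ^ 5 / 5 - u ^ 7 / 7) ≥ 0.169918 := by
    have u3 : u ^ 3 = 35 * u - 6 := by linear_combination (u + 6) * uu
    have u5 : u ^ 5 = 1189 * u - 204 := by
      have : u ^ 5 = u ^ 2 * u ^ 3 := by ring
      rw [this, u3, uu]; linear_combination 210 * uu
    have u7 : u ^ 7 = 40391 * u - 6930 := by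
      have : u ^ 7 = u ^ 2 * u ^ 5 := by ring
      rw [this, u5, uu]; linear_combination 7134 * uu
    have u3n : (0.17157 : ℝ) ≤ u := by
      have : Real.sqrt 2 ≤ 1.414215 := by rw [Real.sqrt_le_left (by norm_num)]; norm_num
      rw [hu]; linarith
    have u3m : u ≤ 0.17158 := by rw [hu]; linarith
    have b3 : u ^ 3 ≤ 0.17158 ^ 3 := pow_le_pow_left₀ u0.le u3m 3
    have b5 : (0.17157 : ℝ) ^ 5 ≤ u ^ 5 := pow_le_pow_left₀ (by norm_num) u3n 5
    have b7 : u ^ 7 ≤ 0.17158 ^ 7 := pow_le_pow_left₀ u0.le u3m 7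
    norm_num at b3 b5 b7 u3n ⊢
    linarith
  have w : (0.169918 : ℝ) ≤ arctan u := by linarith
  nlinarith

theorem num_fin (t0 k1 k2 w0 C1 C2 T G w a δ : ℝ) (ht0 : 0 ≤ t0) (hw0 : 0 < w0)
    (hk1 : t0 - t0 ^ 3 / 3 + t0 ^ 5 / 5 - t0 / (1 + t0 ^ 2) ≤ k1) (hk1p : 0 ≤ k1)
    (hk2 : 1 / (1 + t0 ^ 2) ≤ k2)
    (hC2 : 8 / 3 * k2 ≤ C2) (hC1 : 4 * k1 / (3 * w0) ≤ C1) (hw : 0 < w) (ha : 0 < a) (hG : G = w ^ 2)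
    (hδ : 7209 / 10000 ≤ δ)
    (h : C2 * G < a * (7209 / 240000 * T - C1 * (G + w0 ^ 2))) :
    2 / 3 * arctan (w / a) < δ * (w / (96 * G) * T) := by
  have h1 := arctan_le_tangent t0 (w / a) ht0 (by positivity)
  have h2 := arctan_le_poly t0 ht0
  have h3 : arctan (w / a) ≤ k1 + k2 * (w / a) := by
    have e : (w / a - t0) / (1 + t0 ^ 2) = 1 / (1 + t0 ^ 2) * (w / a) - t0 / (1 + t0 ^ 2) := by ring
    rw [e] at h1
    have := mul_le_mul_of_nonneg_right hk2 (show 0 ≤ w / a by positivity)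
    linarith
  have hG0 : 0 < G := by rw [hG]; positivity
  have h4 : C2 * (G / a) < 7209 / 240000 * T - C1 * (G + w0 ^ 2) := by
    rw [← mul_div_assoc, div_lt_iff₀ ha]; linarith
  have h5 : 8 / 3 * k1 * w ≤ C1 * (G + w0 ^ 2) := by
    have : 4 * k1 / (3 * w0) * (G + w0 ^ 2) ≤ C1 * (G + w0 ^ 2) :=
      mul_le_mul_of_nonneg_right hC1 (by positivity)
    refine le_trans ?_ this
    rw [show 4 * k1 / (3 * w0) * (G + w0 ^ 2) = 4 * k1 * (G + w0 ^ 2) / (3 * w0) by ring,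
      le_div_iff₀ (by positivity), hG]
    nlinarith [mul_nonneg hk1p (sq_nonneg (w - w0))]
  have h6 : 8 / 3 * k2 * (G / a) ≤ C2 * (G / a) := mul_le_mul_of_nonneg_right hC2 (by positivity)
  have hT : 0 ≤ T := by
    have k2p : 0 ≤ k2 := le_trans (by positivity) hk2
    have : 0 ≤ 8 / 3 * k1 * w := by positivity
    have : 0 ≤ 8 / 3 * k2 * (G / a) := by positivity
    linarith
  have h7 : 8 / 3 * (k1 + k2 * (w / a)) * w < δ / 24 * T := by
    have e : 8 / 3 * (k1 + k2 * (w / a)) * w = 8 / 3 * k1 * w + 8 / 3 * k2 * (G / a) := by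
      rw [hG]; ring
    rw [e]
    nlinarith
  have e2 : δ * (w / (96 * G) * T) = (δ / 24 * T) / (4 * w) := by
    rw [hG]; field_simp; ring
  rw [e2, lt_div_iff₀ (by positivity)]
  nlinarith

theorem chord_bound (b s lo y : ℝ) (hs : 0 ≤ s) (hb : 0 < b) (h1 : lo ≤ y) (h2 : y ≤ 2.51)
    (hl : lo < 2.51)
    (e : b + s * 10000 * lo ^ 2 ≤ 1000000000 * lo) (e2 : b + s * 10000 * 2.51 ^ 2 ≤ 1000000000 * 2.51) :
    0 < b + s * (10000 * y ^ 2) ∧ b + s * (10000 * y ^ 2) ≤ 1000000000 * y := by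
  constructor
  · positivity
  · have a1 := mul_nonneg (sub_nonneg.2 h2) (sub_nonneg.2 e)
    have a2 := mul_nonneg (sub_nonneg.2 h1) (sub_nonneg.2 e2)
    have a3 := mul_nonneg (mul_nonneg hs (mul_nonneg (sub_nonneg.2 h2) (sub_nonneg.2 h1)))
      (sub_pos.2 hl).le
    have a4 : 0 ≤ (1000000000 * y - (b + s * (10000 * y ^ 2))) * (2.51 - lo) := by
      linear_combination a1 + a2 + 10000 * a3
    have := nonneg_of_mul_nonneg_left a4 (sub_pos.2 hl)
    linarith

set_option maxHeartbeats 2000000 in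
/-- The numerical heart of the statement. -/
theorem key_num (x1 x2 x3 x4 x5 x6 y1 y2 y3 y4 y5 y6 w : ℝ)
    (e1 : x1 = y1 ^ 2) (e2 : x2 = y2 ^ 2) (e3 : x3 = y3 ^ 2) (e4 : x4 = y4 ^ 2) (e5 : x5 = y5 ^ 2)
    (e6 : x6 = y6 ^ 2) (h4 : y4 ∈ Set.Icc (2.51 : ℝ) (2 * Real.sqrt 2))
    (hcase : (y1 ∈ Set.Icc (2.06 : ℝ) (2.51) ∧ y2 ∈ Set.Icc (2 : ℝ) (2.51) ∧ y3 ∈ Set.Icc (2 : ℝ) (2.51) ∧ y5 ∈ Set.Icc (2 : ℝ) (2.51) ∧ y6 ∈ Set.Icc (2 : ℝ) (2.51)) ∨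
      (y2 ∈ Set.Icc (2.08 : ℝ) (2.51) ∧ y1 ∈ Set.Icc (2 : ℝ) (2.51) ∧ y3 ∈ Set.Icc (2 : ℝ) (2.51) ∧ y5 ∈ Set.Icc (2 : ℝ) (2.51) ∧ y6 ∈ Set.Icc (2 : ℝ) (2.51)) ∨
      (y5 ∈ Set.Icc (2.2 : ℝ) (2.51) ∧ y1 ∈ Set.Icc (2 : ℝ) (2.51) ∧ y2 ∈ Set.Icc (2 : ℝ) (2.51) ∧ y3 ∈ Set.Icc (2 : ℝ) (2.51) ∧ y6 ∈ Set.Icc (2 : ℝ) (2.51)) ∨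
      (y4 ∈ Set.Icc (2.58 : ℝ) (2 * Real.sqrt 2) ∧ y5 ∈ Set.Icc (2.12 : ℝ) (2.51) ∧ y1 ∈ Set.Icc (2 : ℝ) (2.51) ∧ y2 ∈ Set.Icc (2 : ℝ) (2.51) ∧ y3 ∈ Set.Icc (2 : ℝ) (2.51) ∧ y6 ∈ Set.Icc (2 : ℝ) (2.51)))
    (hu1 : 0 < 4 * (x1 * x2) - (x1 + x2 - x6) * (x1 + x2 - x6))
    (hu2 : 0 < 4 * (x1 * x3) - (x1 + x3 - x5) * (x1 + x3 - x5))
    (hu3 : 0 < 4 * (x2 * x3) - (x2 + x3 - x4) * (x2 + x3 - x4))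
    (hx1 : 0 ≤ HPoly.fcR x1 x2 x6 x4 x5 x3 1) (hx2 : 0 ≤ HPoly.fcR x1 x3 x5 x4 x6 x2 1)
    (hx3 : 0 ≤ HPoly.fcR x2 x3 x4 x5 x6 x1 1) (hw : 0 < w)
    (hG : HPoly.gR x1 x2 x3 x4 x5 x6 / 4 = w ^ 2) :
    2 / 3 * arctan (w / (y1 * y2 * y3 + (y1 * (x2 + x3 - x4) + y2 * (x1 + x3 - x5) +
      y3 * (x1 + x2 - x6)) / 2)) < δoct * (w / (96 * w ^ 2) *
      (HPoly.rho x1 x2 x6 * HPoly.fcR x1 x2 x6 x4 x5 x3 1 +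
        HPoly.rho x1 x3 x5 * HPoly.fcR x1 x3 x5 x4 x6 x2 1 +
        HPoly.rho x2 x3 x4 * HPoly.fcR x2 x3 x4 x5 x6 x1 1)) := by
  have hG0 : 0 < HPoly.gR x1 x2 x3 x4 x5 x6 := by
    have : 0 < w ^ 2 := by positivity
    linarith
  have h4' : 6.3001 ≤ x4 ∧ x4 ≤ 8 := by
    have s2 : Real.sqrt 2 ^ 2 = 2 := Real.sq_sqrt (by norm_num)
    have := Real.sqrt_nonneg 2
    constructor
    · nlinarith [h4.1]
    · have := h4.2; nlinarith [h4.1]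
  have sqb : ∀ y lo hi : ℝ, 0 ≤ lo → lo ≤ y → y ≤ hi → lo ^ 2 ≤ y ^ 2 ∧ y ^ 2 ≤ hi ^ 2 := by
    intro y lo hi h h1 h2
    exact ⟨pow_le_pow_left₀ h h1 2, pow_le_pow_left₀ (h.trans h1) h2 2⟩
  have d0 := δoct_ge
  rcases hcase with ⟨h1, h2, h3, h5, h6⟩ | ⟨h2, h1, h3, h5, h6⟩ | ⟨h5, h1, h2, h3, h6⟩ | ⟨h4b, h5, h1, h2, h3, h6⟩
  · have q1 := sqb y1 2.06 2.51 (by norm_num) h1.1 h1.2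
    have q2 := sqb y2 2 2.51 (by norm_num) h2.1 h2.2
    have q3 := sqb y3 2 2.51 (by norm_num) h3.1 h3.2
    have q5 := sqb y5 2 2.51 (by norm_num) h5.1 h5.2
    have q6 := sqb y6 2 2.51 (by norm_num) h6.1 h6.2
    rw [← e1] at q1
    rw [← e2] at q2
    rw [← e3] at q3
    rw [← e5] at q5
    rw [← e6] at q6
    have c1 := chord_bound 1131457884 21881 2.06 y1 (by norm_num) (by norm_num) h1.1 h1.2
      (by norm_num) (by norm_num) (by norm_num)
    rw [← e1] at c1
    have c2 := chord_bound 1113120000 22172 2 y2 (by norm_num) (by norm_num) h2.1 h2.2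
      (by norm_num) (by norm_num) (by norm_num)
    rw [← e2] at c2
    have c3 := chord_bound 1113120000 22172 2 y3 (by norm_num) (by norm_num) h3.1 h3.2
      (by norm_num) (by norm_num) (by norm_num)
    rw [← e3] at c3
    norm_num at q1 q2 q3 q5 q6
    have K := HPoly.nc1 x1 x2 x3 x4 x5 x6 y1 y2 y3 (by norm_num; constructor <;> linarith) (by norm_num; constructor <;> linarith) (by norm_num; constructor <;> linarith) (by norm_num; constructor <;> linarith) (by norm_num; constructor <;> linarith) (by norm_num; constructor <;> linarith)
      (by simpa using c1) (by simpa using c2) (by simpa using c3) (by linarith) (by linarith) (by linarith)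
      hu1 hu2 hu3 hx1 hx2 hx3 hG0
    rw [hG] at K
    refine num_fin (817/2500) (9538825/462029282 + 1 / 10 ^ 9) (6250000/6917489 + 1 / 10 ^ 10) (6039/1000) (45583 / 10000000) (2409353 / 1000000) _ (w ^ 2) w _ _
      (by norm_num) (by norm_num) (by norm_num) (by norm_num) (by norm_num) (by norm_num) (by norm_num) hw ?_ rfl d0 ?_
    · have a1 : 0 < y1 := by linarith [h1.1]
      have a2 : 0 < y2 := by linarith [h2.1]
      have a3 : 0 < y3 := by linarith [h3.1]
      have b1 : 0 ≤ x2 + x3 - x4 := by linarith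
      have b2 : 0 ≤ x1 + x3 - x5 := by linarith
      have b3 : 0 ≤ x1 + x2 - x6 := by linarith
      positivity
    · norm_num at K ⊢; exact K
  · have q1 := sqb y1 2 2.51 (by norm_num) h1.1 h1.2
    have q2 := sqb y2 2.08 2.51 (by norm_num) h2.1 h2.2
    have q3 := sqb y3 2 2.51 (by norm_num) h3.1 h3.2
    have q5 := sqb y5 2 2.51 (by norm_num) h5.1 h5.2
    have q6 := sqb y6 2 2.51 (by norm_num) h6.1 h6.2
    rw [← e1] at q1
    rw [← e2] at q2
    rw [← e3] at q3
    rw [← e5] at q5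
    rw [← e6] at q6
    have c1 := chord_bound 1113120000 22172 2 y1 (by norm_num) (by norm_num) h1.1 h1.2
      (by norm_num) (by norm_num) (by norm_num)
    rw [← e1] at c1
    have c2 := chord_bound 1137450496 21786 2.08 y2 (by norm_num) (by norm_num) h2.1 h2.2
      (by norm_num) (by norm_num) (by norm_num)
    rw [← e2] at c2
    have c3 := chord_bound 1113120000 22172 2 y3 (by norm_num) (by norm_num) h3.1 h3.2
      (by norm_num) (by norm_num) (by norm_num)
    rw [← e3] at c3
    norm_num at q1 q2 q3 q5 q6
    have K := HPoly.nc2 x1 x2 x3 x4 x5 x6 y1 y2 y3 (by norm_num; constructor <;> linarith) (by norm_num; constructor <;> linarith) (by norm_num; constructor <;> linarith) (by norm_num; constructor <;> linarith) (by norm_num; constructor <;> linarith) (by norm_num; constructor <;> linarith)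
      (by simpa using c1) (by simpa using c2) (by simpa using c3) (by linarith) (by linarith) (by linarith)
      hu1 hu2 hu3 hx1 hx2 hx3 hG0
    rw [hG] at K
    refine num_fin (3267/10000) (17345453/840871115 + 1 / 10 ^ 9) (100000000/110673289 + 1 / 10 ^ 10) (6153/1000) (44701 / 10000000) (2409495 / 1000000) _ (w ^ 2) w _ _
      (by norm_num) (by norm_num) (by norm_num) (by norm_num) (by norm_num) (by norm_num) (by norm_num) hw ?_ rfl d0 ?_
    · have a1 : 0 < y1 := by linarith [h1.1]
      have a2 : 0 < y2 := by linarith [h2.1]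
      have a3 : 0 < y3 := by linarith [h3.1]
      have b1 : 0 ≤ x2 + x3 - x4 := by linarith
      have b2 : 0 ≤ x1 + x3 - x5 := by linarith
      have b3 : 0 ≤ x1 + x2 - x6 := by linarith
      positivity
    · norm_num at K ⊢; exact K
  · have q1 := sqb y1 2 2.51 (by norm_num) h1.1 h1.2
    have q2 := sqb y2 2 2.51 (by norm_num) h2.1 h2.2
    have q3 := sqb y3 2 2.51 (by norm_num) h3.1 h3.2
    have q5 := sqb y5 2.2 2.51 (by norm_num) h5.1 h5.2
    have q6 := sqb y6 2 2.51 (by norm_num) h6.1 h6.2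
    rw [← e1] at q1
    rw [← e2] at q2
    rw [← e3] at q3
    rw [← e5] at q5
    rw [← e6] at q6
    have c1 := chord_bound 1113120000 22172 2 y1 (by norm_num) (by norm_num) h1.1 h1.2
      (by norm_num) (by norm_num) (by norm_num)
    rw [← e1] at c1
    have c2 := chord_bound 1113120000 22172 2 y2 (by norm_num) (by norm_num) h2.1 h2.2
      (by norm_num) (by norm_num) (by norm_num)
    rw [← e2] at c2
    have c3 := chord_bound 1113120000 22172 2 y3 (by norm_num) (by norm_num) h3.1 h3.2
      (by norm_num) (by norm_num) (by norm_num)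
    rw [← e3] at c3
    norm_num at q1 q2 q3 q5 q6
    have K := HPoly.nc3 x1 x2 x3 x4 x5 x6 y1 y2 y3 (by norm_num; constructor <;> linarith) (by norm_num; constructor <;> linarith) (by norm_num; constructor <;> linarith) (by norm_num; constructor <;> linarith) (by norm_num; constructor <;> linarith) (by norm_num; constructor <;> linarith)
      (by simpa using c1) (by simpa using c2) (by simpa using c3) (by linarith) (by linarith) (by linarith)
      hu1 hu2 hu3 hx1 hx2 hx3 hG0
    rw [hG] at K
    refine num_fin (1887/5000) (11376989/371006648 + 1 / 10 ^ 9) (25000000/28560769 + 1 / 10 ^ 10) (1591/250) (64248 / 10000000) (2334205 / 1000000) _ (w ^ 2) w _ _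
      (by norm_num) (by norm_num) (by norm_num) (by norm_num) (by norm_num) (by norm_num) (by norm_num) hw ?_ rfl d0 ?_
    · have a1 : 0 < y1 := by linarith [h1.1]
      have a2 : 0 < y2 := by linarith [h2.1]
      have a3 : 0 < y3 := by linarith [h3.1]
      have b1 : 0 ≤ x2 + x3 - x4 := by linarith
      have b2 : 0 ≤ x1 + x3 - x5 := by linarith
      have b3 : 0 ≤ x1 + x2 - x6 := by linarith
      positivity
    · norm_num at K ⊢; exact K
  · have q1 := sqb y1 2 2.51 (by norm_num) h1.1 h1.2
    have q2 := sqb y2 2 2.51 (by norm_num) h2.1 h2.2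
    have q3 := sqb y3 2 2.51 (by norm_num) h3.1 h3.2
    have q5 := sqb y5 2.12 2.51 (by norm_num) h5.1 h5.2
    have q6 := sqb y6 2 2.51 (by norm_num) h6.1 h6.2
    have q4 : (2.58 : ℝ) ^ 2 ≤ x4 := by rw [e4]; exact pow_le_pow_left₀ (by norm_num) h4b.1 2
    rw [← e1] at q1
    rw [← e2] at q2
    rw [← e3] at q3
    rw [← e5] at q5
    rw [← e6] at q6
    have c1 := chord_bound 1113120000 22172 2 y1 (by norm_num) (by norm_num) h1.1 h1.2
      (by norm_num) (by norm_num) (by norm_num)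
    rw [← e1] at c1
    have c2 := chord_bound 1113120000 22172 2 y2 (by norm_num) (by norm_num) h2.1 h2.2
      (by norm_num) (by norm_num) (by norm_num)
    rw [← e2] at c2
    have c3 := chord_bound 1113120000 22172 2 y3 (by norm_num) (by norm_num) h3.1 h3.2
      (by norm_num) (by norm_num) (by norm_num)
    rw [← e3] at c3
    norm_num at q1 q2 q3 q5 q6 q4
    have K := HPoly.nc4 x1 x2 x3 x4 x5 x6 y1 y2 y3 (by norm_num; constructor <;> linarith) (by norm_num; constructor <;> linarith) (by norm_num; constructor <;> linarith) (by norm_num; constructor <;> linarith) (by norm_num; constructor <;> linarith) (by norm_num; constructor <;> linarith)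
      (by simpa using c1) (by simpa using c2) (by simpa using c3) (by linarith) (by linarith) (by linarith)
      hu1 hu2 hu3 hx1 hx2 hx3 hG0
    rw [hG] at K
    refine num_fin (461/1250) (8445729/293255471 + 1 / 10 ^ 9) (1562500/1775021 + 1 / 10 ^ 10) (3107/500) (61796 / 10000000) (2347391 / 1000000) _ (w ^ 2) w _ _
      (by norm_num) (by norm_num) (by norm_num) (by norm_num) (by norm_num) (by norm_num) (by norm_num) hw ?_ rfl d0 ?_
    · have a1 : 0 < y1 := by linarith [h1.1]
      have a2 : 0 < y2 := by linarith [h2.1]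
      have a3 : 0 < y3 := by linarith [h3.1]
      have b1 : 0 ≤ x2 + x3 - x4 := by linarith
      have b2 : 0 ≤ x1 + x3 - x5 := by linarith
      have b3 : 0 ≤ x1 + x2 - x6 := by linarith
      positivity
    · norm_num at K ⊢; exact K

/-! ### Volume of a wedge of the unit ball -/

theorem wedge_angle_iff (φ θ : ℝ) (h0 : 0 < φ) (h1 : φ < π) (ht : θ ∈ Set.Ioo (-π) π) :
    (0 ≤ cos θ ∧ 0 ≤ cos φ * cos θ + sin φ * sin θ) ↔ θ ∈ Set.Icc (φ - π / 2) (π / 2) := by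
  have e : cos φ * cos θ + sin φ * sin θ = cos (θ - φ) := by rw [cos_sub]; ring
  rw [e]
  constructor
  · rintro ⟨a, b⟩
    have t1 : -(π / 2) ≤ θ := by
      by_contra h; push Not at h
      have : cos (-θ) < 0 := cos_neg_of_pi_div_two_lt_of_lt (by linarith) (by linarith [ht.1])
      rw [cos_neg] at this; linarith
    have t2 : θ ≤ π / 2 := by
      by_contra h; push Not at h
      have : cos (θ) < 0 := cos_neg_of_pi_div_two_lt_of_lt (by linarith) (by linarith [ht.2])
      linarith
    refine ⟨?_, t2⟩
    by_contra h; push Not at h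
    have : cos (-(θ - φ)) < 0 := cos_neg_of_pi_div_two_lt_of_lt (by linarith) (by linarith)
    rw [cos_neg] at this; linarith
  · rintro ⟨a, b⟩
    exact ⟨cos_nonneg_of_mem_Icc ⟨by linarith, by linarith⟩,
      cos_nonneg_of_mem_Icc ⟨by linarith, by linarith⟩⟩

theorem sector_area (φ R : ℝ) (h0 : 0 < φ) (h1 : φ < π) (hR : 0 ≤ R) :
    volume {p : ℝ × ℝ | p.1 ^ 2 + p.2 ^ 2 ≤ R ^ 2 ∧ 0 ≤ p.1 ∧ 0 ≤ cos φ * p.1 + sin φ * p.2} =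
      ENNReal.ofReal (R ^ 2 / 2 * (π - φ)) := by
  have hm : MeasurableSet {p : ℝ × ℝ | p.1 ^ 2 + p.2 ^ 2 ≤ R ^ 2 ∧ 0 ≤ p.1 ∧
      0 ≤ cos φ * p.1 + sin φ * p.2} := by
    apply IsClosed.measurableSet
    simp only [Set.ofPred_and]
    apply IsClosed.inter
    · exact isClosed_le (by fun_prop) (by fun_prop)
    · exact IsClosed.inter (isClosed_le (by fun_prop) (by fun_prop))
        (isClosed_le (by fun_prop) (by fun_prop))
  rw [← lintegral_indicator_one hm, ← lintegral_comp_polarCoord_symm,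
    ← lintegral_indicator polarCoord.open_target.measurableSet]
  have key : ∀ p : ℝ × ℝ, polarCoord.target.indicator (fun p => ENNReal.ofReal p.1 •
      {p : ℝ × ℝ | p.1 ^ 2 + p.2 ^ 2 ≤ R ^ 2 ∧ 0 ≤ p.1 ∧
        0 ≤ cos φ * p.1 + sin φ * p.2}.indicator (1 : ℝ × ℝ → ENNReal) (polarCoord.symm p)) p =
      (Set.Ioc 0 R).indicator (fun r => ENNReal.ofReal r) p.1 *
        (Set.Icc (φ - π / 2) (π / 2)).indicator 1 p.2 := by
    rintro ⟨r, θ⟩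
    by_cases hp : (r, θ) ∈ polarCoord.target
    · rw [Set.indicator_of_mem hp]
      simp only [polarCoord_target, Set.mem_prod, Set.mem_Ioi] at hp
      obtain ⟨hr, ht⟩ := hp
      have hiff := wedge_angle_iff φ θ h0 h1 ht
      have : (polarCoord.symm (r, θ) ∈ {p : ℝ × ℝ | p.1 ^ 2 + p.2 ^ 2 ≤ R ^ 2 ∧ 0 ≤ p.1 ∧
        0 ≤ cos φ * p.1 + sin φ * p.2}) ↔ r ∈ Set.Ioc 0 R ∧ θ ∈ Set.Icc (φ - π / 2) (π / 2) := by
        rw [← hiff]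
        simp only [polarCoord_symm_apply, Set.mem_ofPred_eq, Set.mem_Ioc]
        have e1 : (r * cos θ) ^ 2 + (r * sin θ) ^ 2 = r ^ 2 := by
          have := sin_sq_add_cos_sq θ
          linear_combination r ^ 2 * this
        have e2 : cos φ * (r * cos θ) + sin φ * (r * sin θ) = r * (cos φ * cos θ + sin φ * sin θ) := by
          ring
        rw [e1, e2, mul_nonneg_iff_of_pos_left hr, mul_nonneg_iff_of_pos_left hr,
          pow_le_pow_iff_left₀ hr.le hR (by norm_num)]
        simp [hr]
      by_cases hA : r ∈ Set.Ioc 0 R <;> by_cases hB : θ ∈ Set.Icc (φ - π / 2) (π / 2)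
      · rw [Set.indicator_of_mem hA, Set.indicator_of_mem hB, Set.indicator_of_mem (this.2 ⟨hA, hB⟩)]
        simp
      · rw [Set.indicator_of_notMem hB, Set.indicator_of_notMem (fun h => hB (this.1 h).2)]
        simp
      · rw [Set.indicator_of_notMem hA, Set.indicator_of_notMem (fun h => hA (this.1 h).1)]
        simp
      · rw [Set.indicator_of_notMem hA, Set.indicator_of_notMem (fun h => hA (this.1 h).1)]
        simp
    · rw [Set.indicator_of_notMem hp]
      by_cases hA : r ∈ Set.Ioc 0 R
      · have hB : θ ∉ Set.Icc (φ - π / 2) (π / 2) := by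
          intro hB
          apply hp
          simp only [polarCoord_target, Set.mem_prod, Set.mem_Ioi, Set.mem_Ioo]
          exact ⟨hA.1, by linarith [hB.1, pi_pos], by linarith [hB.2, pi_pos]⟩
        rw [Set.indicator_of_notMem hB]; simp
      · rw [Set.indicator_of_notMem hA]; simp
  rw [lintegral_congr key, Measure.volume_eq_prod, lintegral_prod_mul]
  · rw [lintegral_indicator measurableSet_Ioc, lintegral_indicator_one measurableSet_Icc,
      Real.volume_Icc, ← ofReal_integral_eq_lintegral_ofReal, ← intervalIntegral.integral_of_le hR,
      ← ENNReal.ofReal_mul]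
    · congr 1
      rw [integral_id]; ring
    · rw [integral_id]; nlinarith [sq_nonneg R]
    · exact (continuous_id.integrableOn_Icc (a := 0) (b := R)).mono_set Set.Ioc_subset_Icc_self
    · exact (ae_restrict_iff' measurableSet_Ioc).2 (Filter.Eventually.of_forall fun x hx => hx.1.le)
  · exact ((ENNReal.measurable_ofReal).indicator measurableSet_Ioc).aemeasurable
  · exact (measurable_one.indicator measurableSet_Icc).aemeasurable

theorem wedge_coord (φ : ℝ) (h0 : 0 < φ) (h1 : φ < π) :
    volume {a : E3 | a 0 ^ 2 + a 1 ^ 2 + a 2 ^ 2 ≤ 1 ∧ 0 ≤ a 0 ∧ 0 ≤ cos φ * a 0 + sin φ * a 1} =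
      ENNReal.ofReal (2 / 3 * (π - φ)) := by
  set S : Set (ℝ × ℝ × ℝ) := {q | q.2.1 ^ 2 + q.2.2 ^ 2 + q.1 ^ 2 ≤ 1 ∧ 0 ≤ q.2.1 ∧
    0 ≤ cos φ * q.2.1 + sin φ * q.2.2} with hS
  have hm : MeasurableSet S := by
    rw [hS]
    apply IsClosed.measurableSet
    simp only [Set.ofPred_and]
    apply IsClosed.inter
    · exact isClosed_le (by fun_prop) (by fun_prop)
    · exact IsClosed.inter (isClosed_le (by fun_prop) (by fun_prop))
        (isClosed_le (by fun_prop) (by fun_prop))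
  have mp1 := PiLp.volume_preserving_ofLp (Fin 3)
  have mp2 := volume_preserving_piFinSuccAbove (fun _ : Fin 3 => ℝ) 2
  have mp3 : MeasurePreserving (Prod.map id (MeasurableEquiv.finTwoArrow (α := ℝ)))
      (volume : Measure (ℝ × (Fin 2 → ℝ))) volume :=
    (MeasurePreserving.id volume).prod (volume_preserving_finTwoArrow ℝ)
  have mp := mp3.comp (mp2.comp mp1)
  have e : {a : E3 | a 0 ^ 2 + a 1 ^ 2 + a 2 ^ 2 ≤ 1 ∧ 0 ≤ a 0 ∧ 0 ≤ cos φ * a 0 + sin φ * a 1} =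
      (Prod.map id (MeasurableEquiv.finTwoArrow (α := ℝ)) ∘
        (MeasurableEquiv.piFinSuccAbove (fun _ : Fin 3 => ℝ) 2) ∘ WithLp.ofLp) ⁻¹' S := by
    ext a
    rfl
  rw [e, mp.measure_preimage hm.nullMeasurableSet, Measure.volume_eq_prod, Measure.prod_apply hm]
  have sl : ∀ z : ℝ, volume (Prod.mk z ⁻¹' S) =
      (Set.Icc (-1) 1).indicator (fun z => ENNReal.ofReal ((1 - z ^ 2) / 2 * (π - φ))) z := by
    intro z
    by_cases hz : z ∈ Set.Icc (-1 : ℝ) 1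
    · have hz2 : 0 ≤ 1 - z ^ 2 := by nlinarith [hz.1, hz.2]
      rw [Set.indicator_of_mem hz]
      have := sector_area φ (Real.sqrt (1 - z ^ 2)) h0 h1 (Real.sqrt_nonneg _)
      rw [Real.sq_sqrt hz2] at this
      rw [← this]
      congr 1
      ext p
      simp only [hS, Set.mem_preimage, Set.mem_ofPred_eq]
      rw [le_sub_iff_add_le]
    · rw [Set.indicator_of_notMem hz]
      convert measure_empty (μ := volume)
      ext p
      simp only [hS, Set.mem_preimage, Set.mem_ofPred_eq, Set.mem_empty_iff_false, iff_false]
      rintro ⟨h, -⟩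
      apply hz
      have : z ^ 2 ≤ 1 := by nlinarith [sq_nonneg p.1, sq_nonneg p.2]
      exact abs_le.1 ((sq_le_one_iff_abs_le_one z).1 this)
  rw [lintegral_congr sl, lintegral_indicator measurableSet_Icc, ← ofReal_integral_eq_lintegral_ofReal]
  · congr 1
    rw [integral_Icc_eq_integral_Ioc, ← intervalIntegral.integral_of_le (by norm_num)]
    rw [intervalIntegral.integral_mul_const, intervalIntegral.integral_div,
      intervalIntegral.integral_sub (by simp) (by simp), integral_pow]
    norm_num
  · apply Continuous.integrableOn_Icc; fun_prop
  · refine (ae_restrict_iff' measurableSet_Icc).2 (Filter.Eventually.of_forall fun z hz => ?_)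
    have hz2 : 0 ≤ 1 - z ^ 2 := by nlinarith [hz.1, hz.2]
    have : 0 < π - φ := by linarith
    simp only [Pi.zero_apply]
    positivity

theorem wedge_vol (n1 n2 : E3) (hn1 : n1 ≠ 0) (hn2 : n2 ≠ 0)
    (h0 : 0 < InnerProductGeometry.angle n1 n2) (h1 : InnerProductGeometry.angle n1 n2 < π) :
    volume {x : E3 | ‖x‖ ≤ 1 ∧ 0 ≤ inner ℝ n1 x ∧ 0 ≤ inner ℝ n2 x} =
      ENNReal.ofReal (2 / 3 * (π - InnerProductGeometry.angle n1 n2)) := by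
  have hc := InnerProductGeometry.cos_angle n1 n2
  set φ := InnerProductGeometry.angle n1 n2 with hφ
  have hs : 0 < sin φ := sin_pos_of_pos_of_lt_pi h0 h1
  have p1 : 0 < ‖n1‖ := norm_pos_iff.2 hn1
  have p2 : 0 < ‖n2‖ := norm_pos_iff.2 hn2
  obtain ⟨e1, he1⟩ : ∃ e : E3, e = (1 / ‖n1‖) • n1 := ⟨_, rfl⟩
  obtain ⟨e2, he2⟩ : ∃ e : E3, e = (1 / sin φ) • ((1 / ‖n2‖) • n2 - cos φ • e1) := ⟨_, rfl⟩
  have i11 : inner ℝ e1 e1 = (1 : ℝ) := by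
    simp only [he1, inner_smul_left, inner_smul_right, real_inner_self_eq_norm_sq]
    simp; field_simp
  have i12 : inner ℝ e1 ((1 / ‖n2‖) • n2) = cos φ := by
    rw [hc]; simp only [he1, inner_smul_left, inner_smul_right]; simp; field_simp
  have i22 : inner ℝ ((1 / ‖n2‖) • n2) ((1 / ‖n2‖) • n2) = (1 : ℝ) := by
    simp only [inner_smul_left, inner_smul_right, real_inner_self_eq_norm_sq]
    simp; field_simp
  have j12 : inner ℝ e1 e2 = (0 : ℝ) := by
    rw [he2, inner_smul_right, inner_sub_right, i12, inner_smul_right, i11]; simp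
  have j22 : inner ℝ e2 e2 = (1 : ℝ) := by
    have i21 : inner ℝ ((1 / ‖n2‖) • n2) e1 = cos φ := by rw [real_inner_comm]; exact i12
    rw [he2]
    generalize (1 / ‖n2‖) • n2 = m at *
    rw [inner_smul_right, inner_smul_left, inner_sub_right, inner_sub_left, inner_sub_left, i22,
      inner_smul_right, inner_smul_left, inner_smul_right, inner_smul_left, i11, i12, i21]
    have := sin_sq_add_cos_sq φ
    simp only [conj_trivial]
    field_simp
    linarith
  have ho : Orthonormal ℝ (Set.domRestrict {0, 1} (![e1, e2, 0] : Fin 3 → E3)) := by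
    rw [orthonormal_iff_ite]
    rintro ⟨i, hi⟩ ⟨j, hj⟩
    simp only [Set.mem_insert_iff, Set.mem_singleton_iff] at hi hj
    have j21 : inner ℝ e2 e1 = (0 : ℝ) := by rw [real_inner_comm]; exact j12
    rcases hi with rfl | rfl <;> rcases hj with rfl | rfl <;>
      simp [Set.domRestrict, -inner_self_eq_norm_sq_to_K, i11, j12, j22, j21]
  obtain ⟨b, hb⟩ := ho.exists_orthonormalBasis_extension_of_card_eq (by simp)
  have b0 : b 0 = e1 := hb 0 (by simp)
  have b1 : b 1 = e2 := hb 1 (by simp)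
  have hn1e : n1 = ‖n1‖ • e1 := by rw [he1, smul_smul]; simp [p1.ne']
  have hn2e : n2 = ‖n2‖ • (cos φ • e1 + sin φ • e2) := by
    rw [he2, smul_smul (sin φ)]; simp [hs.ne', p2.ne', smul_smul]
  rw [← wedge_coord φ h0 h1, ← b.measurePreserving_repr.measure_preimage
    (s := {a : E3 | a 0 ^ 2 + a 1 ^ 2 + a 2 ^ 2 ≤ 1 ∧ 0 ≤ a 0 ∧ 0 ≤ cos φ * a 0 + sin φ * a 1})]
  · congr 1
    ext x
    have hx : ‖x‖ ^ 2 = b.repr x 0 ^ 2 + b.repr x 1 ^ 2 + b.repr x 2 ^ 2 := by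
      rw [← b.repr.norm_map x, EuclideanSpace.norm_sq_eq, Fin.sum_univ_three]; simp
    have r0 : b.repr x 0 = inner ℝ e1 x := by rw [b.repr_apply_apply, b0]
    have r1 : b.repr x 1 = inner ℝ e2 x := by rw [b.repr_apply_apply, b1]
    simp only [Set.mem_ofPred_eq, Set.mem_preimage]
    rw [← hx, r0, r1, sq_le_one_iff₀ (norm_nonneg _)]
    have q1 : inner ℝ n1 x = ‖n1‖ * inner ℝ e1 x := by
      conv_lhs => rw [hn1e]
      rw [inner_smul_left]; simp
    have q2 : inner ℝ n2 x = ‖n2‖ * (cos φ * inner ℝ e1 x + sin φ * inner ℝ e2 x) := by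
      conv_lhs => rw [hn2e]
      rw [inner_smul_left, inner_add_left, inner_smul_left, inner_smul_left]; simp
    rw [q1, q2, mul_nonneg_iff_of_pos_left p1, mul_nonneg_iff_of_pos_left p2]
  · apply MeasurableSet.nullMeasurableSet
    apply IsClosed.measurableSet
    simp only [Set.ofPred_and]
    apply IsClosed.inter
    · exact isClosed_le (by fun_prop) (by fun_prop)
    · exact IsClosed.inter (isClosed_le (by fun_prop) (by fun_prop))
        (isClosed_le (by fun_prop) (by fun_prop))

/-! ### Girard's formula for trihedral cones -/

theorem hyperplane_null (n : E3) (hn : n ≠ 0) : volume {x : E3 | inner ℝ n x = 0} = 0 := by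
  have h : {x : E3 | inner ℝ n x = 0} = (((Submodule.span ℝ {n})ᗮ : Submodule ℝ E3) : Set E3) := by
    ext x
    simp [Submodule.mem_orthogonal_singleton_iff_inner_right]
  rw [h]
  apply Measure.addHaar_submodule
  intro ht
  have : n ∈ (Submodule.span ℝ {n})ᗮ := by rw [ht]; trivial
  rw [Submodule.mem_orthogonal_singleton_iff_inner_right] at this
  exact hn (inner_self_eq_zero.1 this)

/-- the part of the unit ball in the dual cone of two vectors -/
def wedge2 (a b : E3) : Set E3 := {x : E3 | ‖x‖ ≤ 1 ∧ 0 ≤ inner ℝ a x ∧ 0 ≤ inner ℝ b x}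

/-- the part of the unit ball in the dual cone of three vectors -/
def wedge3 (a b d : E3) : Set E3 :=
  {x : E3 | ‖x‖ ≤ 1 ∧ 0 ≤ inner ℝ a x ∧ 0 ≤ inner ℝ b x ∧ 0 ≤ inner ℝ d x}

theorem wedge_split (a b d : E3) (hd : d ≠ 0) :
    volume.real (wedge2 a b) = volume.real (wedge3 a b d) + volume.real (wedge3 a b (-d)) := by
  have hfin : volume (wedge2 a b) ≠ ⊤ := by
    refine ne_top_of_le_ne_top (measure_closedBall_lt_top (x := (0 : E3)) (r := 1)).ne
      (measure_mono ?_)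
    intro x hx
    simpa using hx.1
  have hm : MeasurableSet {x : E3 | 0 ≤ inner ℝ d x} :=
    (isClosed_le (by fun_prop) (by fun_prop)).measurableSet
  have h1 : wedge2 a b ∩ {x : E3 | 0 ≤ inner ℝ d x} = wedge3 a b d := by
    ext x
    simp only [wedge2, wedge3, Set.mem_inter_iff, Set.mem_ofPred_eq]
    tauto
  have h2 : volume (wedge2 a b \ {x : E3 | 0 ≤ inner ℝ d x}) = volume (wedge3 a b (-d)) := by
    apply measure_congr
    have := measure_eq_zero_iff_ae_notMem.1 (hyperplane_null d hd)
    filter_upwards [this] with x hx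
    apply propext
    change x ∈ (wedge2 a b \ {x : E3 | 0 ≤ inner ℝ d x}) ↔ x ∈ wedge3 a b (-d)
    simp only [wedge2, wedge3, Set.mem_sdiff, Set.mem_ofPred_eq, inner_neg_left] at hx ⊢
    constructor
    · rintro ⟨⟨q1, q2, q3⟩, q4⟩
      exact ⟨q1, q2, q3, by linarith⟩
    · rintro ⟨q1, q2, q3, q4⟩
      refine ⟨⟨q1, q2, q3⟩, fun h => hx (by linarith)⟩
  have := measure_inter_add_sdiff (μ := volume) (wedge2 a b) hm
  rw [h1, h2] at this
  rw [Measure.real, ← this, ENNReal.toReal_add]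
  · rfl
  · refine ne_top_of_le_ne_top hfin (this ▸ le_self_add)
  · refine ne_top_of_le_ne_top hfin (this ▸ le_add_self)

theorem wedge3_neg (a b d : E3) :
    volume.real (wedge3 (-a) (-b) (-d)) = volume.real (wedge3 a b d) := by
  have : wedge3 (-a) (-b) (-d) = -wedge3 a b d := by
    ext x
    simp [wedge3]
  rw [this, Measure.real, Measure.measure_neg]; rfl

theorem wedge3_perm (a b d : E3) : wedge3 a b d = wedge3 a d b ∧ wedge3 a b d = wedge3 b d a := by
  constructor <;>
  · ext x; simp only [wedge3, Set.mem_ofPred_eq]; tauto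

theorem wedge2_vol (a b : E3) (ha : a ≠ 0) (hb : b ≠ 0)
    (h0 : 0 < InnerProductGeometry.angle a b) (h1 : InnerProductGeometry.angle a b < π) :
    volume.real (wedge2 a b) = 2 / 3 * (π - InnerProductGeometry.angle a b) := by
  rw [Measure.real, wedge2, wedge_vol a b ha hb h0 h1, ENNReal.toReal_ofReal]
  have : 0 < π - InnerProductGeometry.angle a b := by linarith
  positivity

theorem girard (a b d : E3) (ha : a ≠ 0) (hb : b ≠ 0) (hd : d ≠ 0)
    (h1 : InnerProductGeometry.angle a b ∈ Set.Ioo 0 π)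
    (h2 : InnerProductGeometry.angle a d ∈ Set.Ioo 0 π)
    (h3 : InnerProductGeometry.angle b d ∈ Set.Ioo 0 π) :
    volume.real (wedge3 a b d) = (2 * π - InnerProductGeometry.angle a b -
      InnerProductGeometry.angle a d - InnerProductGeometry.angle b d) / 3 := by
  have w13 := wedge2_vol a d ha hd h2.1 h2.2
  have w23 := wedge2_vol b d hb hd h3.1 h3.2
  have e := InnerProductGeometry.angle_neg_right a b
  have w12 := wedge2_vol a (-b) ha (neg_ne_zero.2 hb) (by rw [e]; linarith [h1.2])
    (by rw [e]; linarith [h1.1])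
  rw [e] at w12
  have s13 := wedge_split a d b hb
  have s23 := wedge_split b d a ha
  have s12 := wedge_split a (-b) d hd
  have n := wedge3_neg a (-b) (-d)
  rw [neg_neg, neg_neg, (wedge3_perm _ _ _).2] at n
  rw [(wedge3_perm a d b).1, (wedge3_perm a d (-b)).1] at s13
  rw [← (wedge3_perm a b d).2] at s23
  linarith

/-! ### The spherical excess -/

theorem excess_eq (y1 y2 y3 g12 g13 g23 w a C1 C2 C3 r1 r2 r3 D1 D2 D3 : ℝ)
    (hw : 0 < w) (ha0 : 0 < a) (hr1 : 0 < r1) (hr2 : 0 < r2) (hr3 : 0 < r3)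
    (ha : a = y1 * y2 * y3 + y1 * g23 + y2 * g13 + y3 * g12)
    (hG : w ^ 2 = y1 ^ 2 * y2 ^ 2 * y3 ^ 2 + 2 * g12 * g13 * g23 - y1 ^ 2 * g23 ^ 2 - y2 ^ 2 * g13 ^ 2
      - y3 ^ 2 * g12 ^ 2)
    (hC1 : C1 = y1 ^ 2 * g23 - g12 * g13) (hC2 : C2 = y2 ^ 2 * g13 - g12 * g23)
    (hC3 : C3 = y3 ^ 2 * g12 - g13 * g23)
    (k12 : 0 < y1 * y2 - g12) (k13 : 0 < y1 * y3 - g13) (k23 : 0 < y2 * y3 - g23)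
    (c1 : r1 * cos D1 = C1) (c2 : r2 * cos D2 = C2) (c3 : r3 * cos D3 = C3)
    (s1 : r1 * sin D1 = w * y1) (s2 : r2 * sin D2 = w * y2) (s3 : r3 * sin D3 = w * y3)
    (d1 : D1 ∈ Set.Ioo 0 π) (d2 : D2 ∈ Set.Ioo 0 π) (d3 : D3 ∈ Set.Ioo 0 π) :
    D1 + D2 + D3 - π = 2 * arctan (w / a) := by
  obtain ⟨K, hK⟩ : ∃ K, K = (y1 * y2 - g12) * (y1 * y3 - g13) * (y2 * y3 - g23) := ⟨_, rfl⟩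
  have hK0 : 0 < K := by rw [hK]; positivity
  obtain ⟨R, hR⟩ : ∃ R, R = r1 * r2 * r3 := ⟨_, rfl⟩
  have hR0 : 0 < R := by rw [hR]; positivity
  have E1 : R * cos (D1 + D2 + D3) = - (K / 2) * (a ^ 2 - w ^ 2) := by
    have : R * cos (D1 + D2 + D3) = C1 * C2 * C3 - w ^ 2 * (C1 * y2 * y3 + C2 * y1 * y3 + C3 * y1 * y2) := by
      rw [hR, cos_add, cos_add, sin_add]
      calc _ = (r1 * cos D1) * (r2 * cos D2) * (r3 * cos D3)
          - (r1 * cos D1) * (r2 * sin D2) * (r3 * sin D3) - (r2 * cos D2) * (r1 * sin D1) * (r3 * sin D3)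
          - (r3 * cos D3) * (r1 * sin D1) * (r2 * sin D2) := by ring
        _ = _ := by rw [c1, c2, c3, s1, s2, s3]; ring
    rw [this, hK, ha, hC1, hC2, hC3]
    linear_combination (-((y1 ^ 2 * g23 - g12 * g13) * y2 * y3 + (y2 ^ 2 * g13 - g12 * g23) * y1 * y3 +
      (y3 ^ 2 * g12 - g13 * g23) * y1 * y2) - (y1 * y2 - g12) * (y1 * y3 - g13) * (y2 * y3 - g23) / 2) * hG
  have E2 : R * sin (D1 + D2 + D3) = - (K / 2) * (2 * a * w) := by
    have : R * sin (D1 + D2 + D3) = w * (C1 * C2 * y3 + C1 * y2 * C3 + y1 * C2 * C3) - w ^ 2 * (w * (y1 * y2 * y3)) := by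
      rw [hR, sin_add, sin_add, cos_add]
      calc _ = (r1 * cos D1) * (r2 * cos D2) * (r3 * sin D3)
          + (r1 * cos D1) * (r2 * sin D2) * (r3 * cos D3) + (r2 * cos D2) * (r1 * sin D1) * (r3 * cos D3)
          - (r3 * sin D3) * (r1 * sin D1) * (r2 * sin D2) := by ring
        _ = _ := by rw [c1, c2, c3, s1, s2, s3]; ring
    rw [this, hK, ha, hC1, hC2, hC3]
    linear_combination (-(w * (y1 * y2 * y3))) * hG
  have hq : 0 < a ^ 2 + w ^ 2 := by positivity
  have hRv : R = K / 2 * (a ^ 2 + w ^ 2) := by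
    have h : R ^ 2 = (K / 2 * (a ^ 2 + w ^ 2)) ^ 2 := by
      have := sin_sq_add_cos_sq (D1 + D2 + D3)
      calc R ^ 2 = (R * sin (D1 + D2 + D3)) ^ 2 + (R * cos (D1 + D2 + D3)) ^ 2 := by
            linear_combination (-R ^ 2) * this
        _ = _ := by rw [E1, E2]; ring
    exact (pow_left_inj₀ hR0.le (by positivity) (by norm_num)).1 h
  obtain ⟨ψ, hψ⟩ : ∃ ψ, ψ = arctan (w / a) := ⟨_, rfl⟩
  have hψ0 : 0 < ψ := by
    rw [hψ, ← arctan_zero]; exact arctan_strictMono (by positivity)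
  have hψ1 : ψ < π / 2 := by rw [hψ]; exact arctan_lt_pi_div_two _
  have hc : cos ψ ^ 2 * (a ^ 2 + w ^ 2) = a ^ 2 := by
    rw [hψ, cos_sq_arctan]; field_simp
  have ht : a * sin ψ = w * cos ψ := by
    have h1 := tan_arctan (w / a)
    rw [← hψ, tan_eq_sin_div_cos, div_eq_div_iff] at h1
    · linarith
    · exact (cos_pos_of_mem_Ioo ⟨by linarith, hψ1⟩).ne'
    · exact ha0.ne'
  have hs : sin ψ * cos ψ * (a ^ 2 + w ^ 2) = a * w := by
    have : a * (sin ψ * cos ψ * (a ^ 2 + w ^ 2)) = a * (a * w) := by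
      linear_combination cos ψ * (a ^ 2 + w ^ 2) * ht + w * hc
    exact mul_left_cancel₀ ha0.ne' this
  have hs2 : sin ψ ^ 2 * (a ^ 2 + w ^ 2) = w ^ 2 := by
    have := sin_sq_add_cos_sq ψ
    linear_combination (a ^ 2 + w ^ 2) * this - hc
  have hθ : cos (D1 + D2 + D3 - π - 2 * ψ) = 1 := by
    have e : cos (D1 + D2 + D3 - π - 2 * ψ) =
        -(cos (D1 + D2 + D3) * (cos ψ ^ 2 - sin ψ ^ 2) + sin (D1 + D2 + D3) * (2 * (sin ψ * cos ψ))) := by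
      rw [show D1 + D2 + D3 - π - 2 * ψ = D1 + D2 + D3 - 2 * ψ - π by ring, cos_sub_pi, cos_sub, sin_two_mul,
        cos_two_mul']; ring
    have : R * (a ^ 2 + w ^ 2) * cos (D1 + D2 + D3 - π - 2 * ψ) = R * (a ^ 2 + w ^ 2) * 1 := by
      rw [e]
      calc _ = -((R * cos (D1 + D2 + D3)) * (cos ψ ^ 2 * (a ^ 2 + w ^ 2) - sin ψ ^ 2 * (a ^ 2 + w ^ 2)) +
            (R * sin (D1 + D2 + D3)) * (2 * (sin ψ * cos ψ * (a ^ 2 + w ^ 2)))) := by ring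
        _ = _ := by rw [E1, E2, hc, hs, hs2, hRv]; ring
    exact mul_left_cancel₀ (by positivity) this
  have := (cos_eq_one_iff_of_lt_of_lt (by linarith [d1.1, d2.1, d3.1]) (by linarith [d1.2, d2.2, d3.2])).1 hθ
  rw [← hψ]; linarith

theorem dihedral (N1 N2 : E3) (G x m11 m22 m12 w y : ℝ) (hG : 0 < G) (h11 : inner ℝ N1 N1 = G * m11)
    (h22 : inner ℝ N2 N2 = G * m22) (h12 : inner ℝ N1 N2 = - (G * m12)) (p1 : 0 < m11) (p2 : 0 < m22)
    (hj : m11 * m22 - m12 ^ 2 = G * x) (hw : G = w ^ 2) (hx : x = y ^ 2) (hw0 : 0 < w) (hy : 0 < y) :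
    InnerProductGeometry.angle N1 N2 ∈ Set.Ioo 0 π ∧ N1 ≠ 0 ∧ N2 ≠ 0 ∧ ∃ r : ℝ, 0 < r ∧
      r * cos (π - InnerProductGeometry.angle N1 N2) = m12 ∧
      r * sin (π - InnerProductGeometry.angle N1 N2) = w * y := by
  have a1 : N1 ≠ 0 := by
    rintro rfl; rw [inner_zero_left] at h11; have := mul_pos hG p1; linarith
  have a2 : N2 ≠ 0 := by
    rintro rfl; rw [inner_zero_left] at h22; have := mul_pos hG p2; linarith
  have hc := InnerProductGeometry.cos_angle_mul_norm_mul_norm N1 N2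
  rw [h12] at hc
  rw [real_inner_self_eq_norm_sq] at h11 h22
  have n1 : 0 < ‖N1‖ := norm_pos_iff.2 a1
  have n2 : 0 < ‖N2‖ := norm_pos_iff.2 a2
  have g0 := InnerProductGeometry.angle_nonneg N1 N2
  have g1 := InnerProductGeometry.angle_le_pi N1 N2
  generalize InnerProductGeometry.angle N1 N2 = φ at *
  have hsn : 0 ≤ sin φ := sin_nonneg_of_nonneg_of_le_pi g0 g1
  obtain ⟨r, hr⟩ : ∃ r, r = ‖N1‖ * ‖N2‖ / G := ⟨_, rfl⟩
  have hr0 : 0 < r := by rw [hr]; positivity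
  have hrG : r * G = ‖N1‖ * ‖N2‖ := by rw [hr]; field_simp
  have hr2 : r ^ 2 = m11 * m22 := by
    rw [hr, div_pow, mul_pow, h11, h22]; field_simp
  have c : r * cos φ = - m12 := by
    have : G * (r * cos φ) = G * (- m12) := by linear_combination hc + cos φ * hrG
    exact mul_left_cancel₀ hG.ne' this
  have s : r * sin φ = w * y := by
    have h := sin_sq_add_cos_sq φ
    have : (r * sin φ) ^ 2 = (w * y) ^ 2 := by
      have e : (r * sin φ) ^ 2 = r ^ 2 - (r * cos φ) ^ 2 := by linear_combination r ^ 2 * h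
      rw [e, c, hr2, mul_pow, ← hw, ← hx, ← hj]; ring
    exact (pow_left_inj₀ (by positivity) (by positivity) (by norm_num)).1 this
  have hs : 0 < sin φ := by
    have : 0 < r * sin φ := by rw [s]; positivity
    exact (mul_pos_iff_of_pos_left hr0).1 this
  refine ⟨⟨lt_of_le_of_ne g0 ?_, lt_of_le_of_ne g1 ?_⟩, a1, a2, r, hr0, ?_, ?_⟩
  · rintro rfl; simp at hs
  · rintro rfl; simp at hs
  · rw [cos_pi_sub]; linarith
  · rw [sin_pi_sub]; exact s

theorem sub_pos_of_sq (p q : ℝ) (hp : 0 < p) (h : 0 < p ^ 2 - q ^ 2) : 0 < p - q := by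
  by_contra hc
  nlinarith

set_option maxHeartbeats 1000000 in
/-- Volume of the part of the unit ball in the cone dual to the (scaled) dual basis of `v1, v2, v3`. -/
theorem solid_angle (v1 v2 v3 : E3) (w y1 y2 y3 g12 g13 g23 : ℝ) (hw : 0 < w)
    (hy1 : 0 < y1) (hy2 : 0 < y2) (hy3 : 0 < y3)
    (i11 : inner ℝ v1 v1 = y1 ^ 2) (i22 : inner ℝ v2 v2 = y2 ^ 2) (i33 : inner ℝ v3 v3 = y3 ^ 2)
    (i12 : inner ℝ v1 v2 = g12) (i13 : inner ℝ v1 v3 = g13) (i23 : inner ℝ v2 v3 = g23)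
    (hG : w ^ 2 = y1 ^ 2 * y2 ^ 2 * y3 ^ 2 + 2 * g12 * g13 * g23 - y1 ^ 2 * g23 ^ 2 - y2 ^ 2 * g13 ^ 2
      - y3 ^ 2 * g12 ^ 2)
    (u12 : 0 < y1 ^ 2 * y2 ^ 2 - g12 ^ 2) (u13 : 0 < y1 ^ 2 * y3 ^ 2 - g13 ^ 2)
    (u23 : 0 < y2 ^ 2 * y3 ^ 2 - g23 ^ 2)
    (ha : 0 < y1 * y2 * y3 + y1 * g23 + y2 * g13 + y3 * g12) :
    ∃ N1 N2 N3 : E3, (inner ℝ N1 v1 = w ^ 2 ∧ inner ℝ N1 v2 = 0 ∧ inner ℝ N1 v3 = 0) ∧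
      (inner ℝ N2 v1 = 0 ∧ inner ℝ N2 v2 = w ^ 2 ∧ inner ℝ N2 v3 = 0) ∧
      (inner ℝ N3 v1 = 0 ∧ inner ℝ N3 v2 = 0 ∧ inner ℝ N3 v3 = w ^ 2) ∧
      volume.real (wedge3 N1 N2 N3) =
        2 / 3 * arctan (w / (y1 * y2 * y3 + y1 * g23 + y2 * g13 + y3 * g12)) := by
  have i21 : inner ℝ v2 v1 = g12 := by rw [real_inner_comm]; exact i12
  have i31 : inner ℝ v3 v1 = g13 := by rw [real_inner_comm]; exact i13
  have i32 : inner ℝ v3 v2 = g23 := by rw [real_inner_comm]; exact i23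
  obtain ⟨C1, hC1⟩ : ∃ C, C = y1 ^ 2 * g23 - g12 * g13 := ⟨_, rfl⟩
  obtain ⟨C2, hC2⟩ : ∃ C, C = y2 ^ 2 * g13 - g12 * g23 := ⟨_, rfl⟩
  obtain ⟨C3, hC3⟩ : ∃ C, C = y3 ^ 2 * g12 - g13 * g23 := ⟨_, rfl⟩
  obtain ⟨N1, hN1⟩ : ∃ N, N = (y2 ^ 2 * y3 ^ 2 - g23 ^ 2) • v1 + (-C3) • v2 + (-C2) • v3 := ⟨_, rfl⟩
  obtain ⟨N2, hN2⟩ : ∃ N, N = (-C3) • v1 + (y1 ^ 2 * y3 ^ 2 - g13 ^ 2) • v2 + (-C1) • v3 := ⟨_, rfl⟩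
  obtain ⟨N3, hN3⟩ : ∃ N, N = (-C2) • v1 + (-C1) • v2 + (y1 ^ 2 * y2 ^ 2 - g12 ^ 2) • v3 := ⟨_, rfl⟩
  have ex : ∀ (a b d : ℝ) (z : E3), inner ℝ (a • v1 + b • v2 + d • v3) z =
      a * inner ℝ v1 z + b * inner ℝ v2 z + d * inner ℝ v3 z := by
    intro a b d z
    rw [inner_add_left, inner_add_left, inner_smul_left, inner_smul_left, inner_smul_left]; simp
  have ex2 : ∀ (a b d : ℝ) (z : E3), inner ℝ z (a • v1 + b • v2 + d • v3) =
      a * inner ℝ z v1 + b * inner ℝ z v2 + d * inner ℝ z v3 := by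
    intro a b d z
    rw [inner_add_right, inner_add_right, inner_smul_right, inner_smul_right, inner_smul_right]
  have a11 : inner ℝ N1 v1 = w ^ 2 := by rw [hN1, ex, i11, i21, i31, hG, hC3, hC2]; ring
  have a12 : inner ℝ N1 v2 = 0 := by rw [hN1, ex, i12, i22, i32, hC3, hC2]; ring
  have a13 : inner ℝ N1 v3 = 0 := by rw [hN1, ex, i13, i23, i33, hC3, hC2]; ring
  have a21 : inner ℝ N2 v1 = 0 := by rw [hN2, ex, i11, i21, i31, hC3, hC1]; ring
  have a22 : inner ℝ N2 v2 = w ^ 2 := by rw [hN2, ex, i12, i22, i32, hG, hC3, hC1]; ring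
  have a23 : inner ℝ N2 v3 = 0 := by rw [hN2, ex, i13, i23, i33, hC3, hC1]; ring
  have a31 : inner ℝ N3 v1 = 0 := by rw [hN3, ex, i11, i21, i31, hC2, hC1]; ring
  have a32 : inner ℝ N3 v2 = 0 := by rw [hN3, ex, i12, i22, i32, hC2, hC1]; ring
  have a33 : inner ℝ N3 v3 = w ^ 2 := by rw [hN3, ex, i13, i23, i33, hG, hC2, hC1]; ring
  have b11 : inner ℝ N1 N1 = w ^ 2 * (y2 ^ 2 * y3 ^ 2 - g23 ^ 2) := by
    nth_rewrite 1 [hN1]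
    rw [ex, real_inner_comm N1 v1, a11, real_inner_comm N1 v2, a12, real_inner_comm N1 v3, a13]; ring
  have b22 : inner ℝ N2 N2 = w ^ 2 * (y1 ^ 2 * y3 ^ 2 - g13 ^ 2) := by
    nth_rewrite 1 [hN2]
    rw [ex, real_inner_comm N2 v1, a21, real_inner_comm N2 v2, a22, real_inner_comm N2 v3, a23]; ring
  have b33 : inner ℝ N3 N3 = w ^ 2 * (y1 ^ 2 * y2 ^ 2 - g12 ^ 2) := by
    nth_rewrite 1 [hN3]
    rw [ex, real_inner_comm N3 v1, a31, real_inner_comm N3 v2, a32, real_inner_comm N3 v3, a33]; ring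
  have b12 : inner ℝ N1 N2 = -(w ^ 2 * C3) := by
    rw [hN2, ex2, a11, a12, a13]; ring
  have b13 : inner ℝ N1 N3 = -(w ^ 2 * C2) := by
    rw [hN3, ex2, a11, a12, a13]; ring
  have b23 : inner ℝ N2 N3 = -(w ^ 2 * C1) := by
    rw [hN3, ex2, a21, a22, a23]; ring
  have w2 : 0 < w ^ 2 := by positivity
  obtain ⟨d3, n1, n2, r3, r30, c3, s3⟩ := dihedral N1 N2 (w ^ 2) (y3 ^ 2) _ _ C3 w y3 w2 b11 b22 b12 u23 u13
    (by rw [hG, hC3]; ring) rfl rfl hw hy3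
  obtain ⟨d2, -, n3, r2, r20, c2, s2⟩ := dihedral N1 N3 (w ^ 2) (y2 ^ 2) _ _ C2 w y2 w2 b11 b33 b13 u23 u12
    (by rw [hG, hC2]; ring) rfl rfl hw hy2
  obtain ⟨d1, -, -, r1, r10, c1, s1⟩ := dihedral N2 N3 (w ^ 2) (y1 ^ 2) _ _ C1 w y1 w2 b22 b33 b23 u13 u12
    (by rw [hG, hC1]; ring) rfl rfl hw hy1
  have pf : ∀ φ : ℝ, φ ∈ Set.Ioo 0 π → π - φ ∈ Set.Ioo 0 π :=
    fun φ h => ⟨by linarith [h.2], by linarith [h.1]⟩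
  have kf : ∀ p q : ℝ, 0 < p → 0 < p ^ 2 - q ^ 2 → 0 < p - q := by
    intro p q hp h
    exact sub_pos_of_sq p q hp h
  have E := excess_eq y1 y2 y3 g12 g13 g23 w _ C1 C2 C3 r1 r2 r3 _ _ _ hw ha r10 r20 r30 rfl hG hC1 hC2 hC3
    (kf _ _ (by positivity) (by rw [mul_pow]; exact u12)) (kf _ _ (by positivity) (by rw [mul_pow]; exact u13))
    (kf _ _ (by positivity) (by rw [mul_pow]; exact u23)) c1 c2 c3 s1 s2 s3 (pf _ d1) (pf _ d2) (pf _ d3)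
  refine ⟨N1, N2, N3, ⟨a11, a12, a13⟩, ⟨a21, a22, a23⟩, ⟨a31, a32, a33⟩, ?_⟩
  rw [girard N1 N2 N3 n1 n2 n3 d3 d2 d1]
  linarith

/-! ### Volumes of tetrahedra -/

theorem triangle_area (t : ℝ) (ht : 0 ≤ t) :
    volume {p : ℝ × ℝ | 0 < p.1 ∧ 0 < p.2 ∧ p.1 + p.2 < t} = ENNReal.ofReal (t ^ 2 / 2) := by
  have hm : MeasurableSet {p : ℝ × ℝ | 0 < p.1 ∧ 0 < p.2 ∧ p.1 + p.2 < t} := by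
    apply IsOpen.measurableSet
    simp only [Set.ofPred_and]
    apply IsOpen.inter
    · exact isOpen_lt (by fun_prop) (by fun_prop)
    · exact IsOpen.inter (isOpen_lt (by fun_prop) (by fun_prop))
        (isOpen_lt (by fun_prop) (by fun_prop))
  rw [Measure.volume_eq_prod, Measure.prod_apply hm]
  have sl : ∀ z : ℝ, volume (Prod.mk z ⁻¹' {p : ℝ × ℝ | 0 < p.1 ∧ 0 < p.2 ∧ p.1 + p.2 < t}) =
      (Set.Ioc 0 t).indicator (fun z => ENNReal.ofReal (t - z)) z := by
    intro z
    by_cases hz : z ∈ Set.Ioc 0 t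
    · rw [Set.indicator_of_mem hz, show t - z = (t - z) - 0 by ring, ← Real.volume_Ioo]
      congr 1
      ext p
      simp only [Set.mem_preimage, Set.mem_ofPred_eq, Set.mem_Ioo]
      constructor
      · rintro ⟨h1, h2, h3⟩; exact ⟨h2, by linarith⟩
      · rintro ⟨h1, h2⟩; exact ⟨hz.1, h1, by linarith⟩
    · rw [Set.indicator_of_notMem hz]
      convert measure_empty (μ := volume)
      ext p
      simp only [Set.mem_preimage, Set.mem_ofPred_eq, Set.mem_empty_iff_false, iff_false]
      rintro ⟨h1, h2, h3⟩
      exact hz ⟨h1, by linarith⟩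
  rw [lintegral_congr sl, lintegral_indicator measurableSet_Ioc, ← ofReal_integral_eq_lintegral_ofReal]
  · congr 1
    rw [← intervalIntegral.integral_of_le ht, intervalIntegral.integral_sub (by simp) (by simp)]
    simp; ring
  · exact (Continuous.integrableOn_Icc (a := 0) (b := t) (by fun_prop)).mono_set Set.Ioc_subset_Icc_self
  · refine (ae_restrict_iff' measurableSet_Ioc).2 (Filter.Eventually.of_forall fun z hz => ?_)
    simp only [Pi.zero_apply]; linarith [hz.2]

/-- the open standard simplex -/
def stdTet : Set E3 := {a : E3 | 0 < a 0 ∧ 0 < a 1 ∧ 0 < a 2 ∧ a 0 + a 1 + a 2 < 1}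

theorem stdTet_vol : volume stdTet = ENNReal.ofReal (1 / 6) := by
  set S : Set (ℝ × ℝ × ℝ) := {q | 0 < q.2.1 ∧ 0 < q.2.2 ∧ 0 < q.1 ∧ q.2.1 + q.2.2 + q.1 < 1} with hS
  have hm : MeasurableSet S := by
    rw [hS]
    apply IsOpen.measurableSet
    simp only [Set.ofPred_and]
    apply IsOpen.inter
    · exact isOpen_lt (by fun_prop) (by fun_prop)
    · exact IsOpen.inter (isOpen_lt (by fun_prop) (by fun_prop))
        (IsOpen.inter (isOpen_lt (by fun_prop) (by fun_prop)) (isOpen_lt (by fun_prop) (by fun_prop)))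
  have mp1 := PiLp.volume_preserving_ofLp (Fin 3)
  have mp2 := volume_preserving_piFinSuccAbove (fun _ : Fin 3 => ℝ) 2
  have mp3 : MeasurePreserving (Prod.map id (MeasurableEquiv.finTwoArrow (α := ℝ)))
      (volume : Measure (ℝ × (Fin 2 → ℝ))) volume :=
    (MeasurePreserving.id volume).prod (volume_preserving_finTwoArrow ℝ)
  have mp := mp3.comp (mp2.comp mp1)
  have e : stdTet =
      (Prod.map id (MeasurableEquiv.finTwoArrow (α := ℝ)) ∘
        (MeasurableEquiv.piFinSuccAbove (fun _ : Fin 3 => ℝ) 2) ∘ WithLp.ofLp) ⁻¹' S := by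
    ext a
    rfl
  rw [e, mp.measure_preimage hm.nullMeasurableSet, Measure.volume_eq_prod, Measure.prod_apply hm]
  have sl : ∀ z : ℝ, volume (Prod.mk z ⁻¹' S) =
      (Set.Ioc 0 1).indicator (fun z => ENNReal.ofReal ((1 - z) ^ 2 / 2)) z := by
    intro z
    by_cases hz : z ∈ Set.Ioc (0 : ℝ) 1
    · rw [Set.indicator_of_mem hz, ← triangle_area (1 - z) (by linarith [hz.2])]
      congr 1
      ext p
      simp only [hS, Set.mem_preimage, Set.mem_ofPred_eq]
      constructor
      · rintro ⟨h1, h2, h3, h4⟩; exact ⟨h1, h2, by linarith⟩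
      · rintro ⟨h1, h2, h3⟩; exact ⟨h1, h2, hz.1, by linarith⟩
    · rw [Set.indicator_of_notMem hz]
      convert measure_empty (μ := volume)
      ext p
      simp only [hS, Set.mem_preimage, Set.mem_ofPred_eq, Set.mem_empty_iff_false, iff_false]
      rintro ⟨h1, h2, h3, h4⟩
      exact hz ⟨h3, by linarith⟩
  rw [lintegral_congr sl, lintegral_indicator measurableSet_Ioc, ← ofReal_integral_eq_lintegral_ofReal]
  · congr 1
    rw [← intervalIntegral.integral_of_le (by norm_num), intervalIntegral.integral_div,
      intervalIntegral.integral_comp_sub_left (fun x => x ^ 2), integral_pow]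
    norm_num
  · exact (Continuous.integrableOn_Icc (a := 0) (b := 1) (by fun_prop)).mono_set Set.Ioc_subset_Icc_self
  · refine (ae_restrict_iff' measurableSet_Ioc).2 (Filter.Eventually.of_forall fun z hz => ?_)
    simp only [Pi.zero_apply]; positivity

/-- the determinant of three vectors -/
def det3 (a b d : E3) : ℝ :=
  a 0 * (b 1 * d 2 - b 2 * d 1) - a 1 * (b 0 * d 2 - b 2 * d 0) + a 2 * (b 0 * d 1 - b 1 * d 0)

theorem inner3 (a b : E3) : inner ℝ a b = a 0 * b 0 + a 1 * b 1 + a 2 * b 2 := by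
  simp only [PiLp.inner_apply, Fin.sum_univ_three]
  simp
  ring

theorem det3_sq (a b d : E3) : det3 a b d ^ 2 = inner ℝ a a * inner ℝ b b * inner ℝ d d +
    2 * inner ℝ a b * inner ℝ a d * inner ℝ b d - inner ℝ a a * inner ℝ b d ^ 2 -
    inner ℝ b b * inner ℝ a d ^ 2 - inner ℝ d d * inner ℝ a b ^ 2 := by
  simp only [inner3, det3]; ring

theorem tetra_image (m q c : E3) : ∃ f : E3 →ₗ[ℝ] E3,
    (∀ a : E3, f a = a 0 • m + a 1 • q + a 2 • c) ∧ |LinearMap.det f| = |det3 m q c| := by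
  refine ⟨Matrix.toEuclideanLin !![m 0, q 0, c 0; m 1, q 1, c 1; m 2, q 2, c 2], ?_, ?_⟩
  · intro a
    ext i
    fin_cases i <;>
      simp [Matrix.toEuclideanLin, Matrix.mulVec, dotProduct, Fin.sum_univ_three] <;> ring
  · rw [Matrix.toEuclideanLin_eq_toLin, LinearMap.det_toLin, Matrix.det_fin_three]
    simp [det3]
    ring_nf

theorem tetra_piece (S R : Set E3) (hS : Convex ℝ S) (h0 : (0 : E3) ∈ S) (m q c : E3) (hm : m ∈ S)
    (hq : q ∈ S) (hc : c ∈ S)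
    (hR : det3 m q c ≠ 0 → ∀ α β γ : ℝ, 0 < α → 0 < β → 0 < γ → α • m + β • q + γ • c ∈ R) :
    ENNReal.ofReal (|det3 m q c| / 6) ≤ volume (S ∩ R) := by
  by_cases hd : det3 m q c = 0
  · rw [hd]; simp
  obtain ⟨f, hf, hdet⟩ := tetra_image m q c
  have hv : volume (f '' stdTet) = ENNReal.ofReal (|det3 m q c| / 6) := by
    rw [Measure.addHaar_image_linearMap, hdet, stdTet_vol, ← ENNReal.ofReal_mul (abs_nonneg _)]
    congr 1; ring
  rw [← hv]
  apply measure_mono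
  rintro _ ⟨a, ⟨h1, h2, h3, h4⟩, rfl⟩
  rw [hf]
  refine ⟨?_, hR hd _ _ _ h1 h2 h3⟩
  have := hS.sum_mem (t := Finset.univ) (w := ![1 - a 0 - a 1 - a 2, a 0, a 1, a 2])
    (z := ![0, m, q, c]) ?_ ?_ ?_
  · simpa [Fin.sum_univ_four] using this
  · intro i _
    fin_cases i <;> simp <;> linarith
  · simp [Fin.sum_univ_four]; ring
  · intro i _
    fin_cases i <;> simp [*]

/-- the two pieces belonging to one face -/
theorem face_pieces (S : Set E3) (hS : Convex ℝ S) (h0 : (0 : E3) ∈ S) (a b d Na Nb Nd q c : E3)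
    (W w μa μb μd e f : ℝ) (hW : 0 < W) (hw : |det3 a b d| = w)
    (ha : inner ℝ Na a = W ∧ inner ℝ Na b = 0 ∧ inner ℝ Na d = 0)
    (hb : inner ℝ Nb a = 0 ∧ inner ℝ Nb b = W ∧ inner ℝ Nb d = 0)
    (hd : inner ℝ Nd a = 0 ∧ inner ℝ Nd b = 0 ∧ inner ℝ Nd d = W)
    (hμ : 0 ≤ μd) (he : 0 ≤ e) (hf : 0 ≤ f) (hq : q = e • a + f • b)
    (hc : c = μa • a + μb • b + μd • d) (sa : (1 / 2 : ℝ) • a ∈ S) (sb : (1 / 2 : ℝ) • b ∈ S)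
    (sq : q ∈ S) (sc : c ∈ S) :
    ENNReal.ofReal (w / 12 * μd * (e + f)) ≤ volume (S ∩
      {x | 0 < μd * inner ℝ Na x - μa * inner ℝ Nd x ∧ 0 < μd * inner ℝ Nb x - μb * inner ℝ Nd x}) := by
  set R := {x : E3 | 0 < μd * inner ℝ Na x - μa * inner ℝ Nd x ∧
    0 < μd * inner ℝ Nb x - μb * inner ℝ Nd x} with hR
  have hw0 : 0 ≤ w := hw ▸ abs_nonneg _
  obtain ⟨a1, a2, a3⟩ := ha
  obtain ⟨b1, b2, b3⟩ := hb
  obtain ⟨d1, d2, d3⟩ := hd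
  have D1 : det3 ((1 / 2 : ℝ) • a) q c = 1 / 2 * f * μd * det3 a b d := by
    rw [hq, hc]; simp [det3]; ring
  have D2 : det3 ((1 / 2 : ℝ) • b) q c = - (1 / 2 * e * μd * det3 a b d) := by
    rw [hq, hc]; simp [det3]; ring
  have Na1 : inner ℝ Na q = W * e := by
    rw [hq, inner_add_right, inner_smul_right, inner_smul_right, a1, a2]; ring
  have Nb1 : inner ℝ Nb q = W * f := by
    rw [hq, inner_add_right, inner_smul_right, inner_smul_right, b1, b2]; ring
  have Nd1 : inner ℝ Nd q = 0 := by
    rw [hq, inner_add_right, inner_smul_right, inner_smul_right, d1, d2]; ring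
  have Na2 : inner ℝ Na c = W * μa := by
    rw [hc, inner_add_right, inner_add_right, inner_smul_right, inner_smul_right, inner_smul_right, a1, a2, a3]
    ring
  have Nb2 : inner ℝ Nb c = W * μb := by
    rw [hc, inner_add_right, inner_add_right, inner_smul_right, inner_smul_right, inner_smul_right, b1, b2, b3]
    ring
  have Nd2 : inner ℝ Nd c = W * μd := by
    rw [hc, inner_add_right, inner_add_right, inner_smul_right, inner_smul_right, inner_smul_right, d1, d2, d3]
    ring
  have ex : ∀ (N m : E3) (α β γ : ℝ), inner ℝ N (α • ((1 / 2 : ℝ) • m) + β • q + γ • c) =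
      α / 2 * inner ℝ N m + β * inner ℝ N q + γ * inner ℝ N c := by
    intro N m α β γ
    rw [inner_add_right, inner_add_right, inner_smul_right, inner_smul_right, inner_smul_right,
      inner_smul_right]; ring
  set Q := {x : E3 | 0 < f * (μd * inner ℝ Na x - μa * inner ℝ Nd x) -
    e * (μd * inner ℝ Nb x - μb * inner ℝ Nd x)} with hQ
  have hQm : MeasurableSet Q := (isOpen_lt (by fun_prop) (by fun_prop)).measurableSet
  have P1 : ENNReal.ofReal (|det3 ((1 / 2 : ℝ) • a) q c| / 6) ≤ volume (S ∩ (R ∩ Q)) := by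
    apply tetra_piece S _ hS h0 _ _ _ sa sq sc
    intro hne α β γ hα hβ hγ
    rw [D1] at hne
    have hf' : 0 < f := lt_of_le_of_ne hf (by rintro rfl; simp at hne)
    have hμ' : 0 < μd := lt_of_le_of_ne hμ (by rintro rfl; simp at hne)
    simp only [hR, hQ, Set.mem_inter_iff, Set.mem_ofPred_eq, ex, a1, b1, d1, Na1, Na2, Nb1, Nb2, Nd1, Nd2]
    refine ⟨⟨?_, ?_⟩, ?_⟩
    · calc 0 < μd * W * (α / 2 + β * e) := by positivity
        _ = _ := by ring
    · calc 0 < μd * W * (β * f) := by positivity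
        _ = _ := by ring
    · calc 0 < μd * W * f * (α / 2) := by positivity
        _ = _ := by ring
  have P2 : ENNReal.ofReal (|det3 ((1 / 2 : ℝ) • b) q c| / 6) ≤ volume (S ∩ (R ∩ Qᶜ)) := by
    apply tetra_piece S _ hS h0 _ _ _ sb sq sc
    intro hne α β γ hα hβ hγ
    rw [D2] at hne
    have he' : 0 < e := lt_of_le_of_ne he (by rintro rfl; simp at hne)
    have hμ' : 0 < μd := lt_of_le_of_ne hμ (by rintro rfl; simp at hne)
    simp only [hR, hQ, Set.mem_inter_iff, Set.mem_compl_iff, Set.mem_ofPred_eq, ex, a2, b2, d2, Na1, Na2, Nb1,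
      Nb2, Nd1, Nd2, not_lt]
    refine ⟨⟨?_, ?_⟩, ?_⟩
    · calc 0 < μd * W * (β * e) := by positivity
        _ = _ := by ring
    · calc 0 < μd * W * (α / 2 + β * f) := by positivity
        _ = _ := by ring
    · have : 0 < μd * W * e * (α / 2) := by positivity
      linarith
  have hsum : volume (S ∩ (R ∩ Q)) + volume (S ∩ (R ∩ Qᶜ)) = volume (S ∩ R) := by
    rw [← Set.inter_assoc, ← Set.inter_assoc, ← Set.sdiff_eq]
    exact measure_inter_add_sdiff _ hQm
  rw [← hsum]
  refine le_trans (le_of_eq ?_) (add_le_add P1 P2)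
  rw [← ENNReal.ofReal_add (by positivity) (by positivity), D1, D2, abs_neg,
    abs_mul (1 / 2 * f * μd) (det3 a b d), abs_mul (1 / 2 * e * μd) (det3 a b d), hw,
    abs_of_nonneg (show 0 ≤ 1 / 2 * f * μd by positivity),
    abs_of_nonneg (show 0 ≤ 1 / 2 * e * μd by positivity)]
  congr 1; ring

/-! ### The Voronoi cell -/

theorem face_q (x1 x2 x3 x4 x5 x6 : ℝ) (a1 : x1 ≤ x2 + x6) (a2 : x2 ≤ x1 + x6) (a6 : x6 ≤ x1 + x2)
    (p1 : 0 < x1) (p2 : 0 < x2) (p6 : 0 < x6)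
    (hu : 0 < 4 * (x1 * x2) - (x1 + x2 - x6) * (x1 + x2 - x6))
    (hx : 0 ≤ HPoly.fcR x1 x2 x6 x4 x5 x3 1) :
    ∃ e f : ℝ, 0 ≤ e ∧ 0 ≤ f ∧ e + f ≤ 1 ∧ e + f = HPoly.rho x1 x2 x6 ∧
      e * x1 + f * ((x1 + x2 - x6) / 2) = x1 / 2 ∧ e * ((x1 + x2 - x6) / 2) + f * x2 = x2 / 2 ∧
      e * ((x1 + x3 - x5) / 2) + f * ((x2 + x3 - x4) / 2) ≤ x3 / 2 := by
  obtain ⟨u, hu'⟩ : ∃ u, u = 4 * (x1 * x2) - (x1 + x2 - x6) * (x1 + x2 - x6) := ⟨_, rfl⟩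
  rw [← hu'] at hu
  have A1 : 0 ≤ x1 * (x2 + x6 - x1) := mul_nonneg p1.le (by linarith)
  have A2 : 0 ≤ x2 * (x1 + x6 - x2) := mul_nonneg p2.le (by linarith)
  have A6 : 0 ≤ x6 * (x1 + x2 - x6) := mul_nonneg p6.le (by linarith)
  refine ⟨x2 * (x1 + x6 - x2) / u, x1 * (x2 + x6 - x1) / u, by positivity, by positivity, ?_, ?_, ?_, ?_, ?_⟩
  · rw [← add_div, div_le_one hu, hu']; linarith
  · rw [HPoly.rho, ← hu', ← add_div]; congr 1; ring
  · field_simp; rw [hu']; ring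
  · field_simp; rw [hu']; ring
  · rw [HPoly.fcR] at hx
    have : x3 / 2 - (x2 * (x1 + x6 - x2) / u * ((x1 + x3 - x5) / 2) +
        x1 * (x2 + x6 - x1) / u * ((x2 + x3 - x4) / 2)) =
        (1 * (x4 * (x1 * (x2 + x6 - x1)) + x5 * (x2 * (x1 + x6 - x2)) + x3 * (x6 * (x1 + x2 - x6))
    - 2 * (x1 * (x2 * x6)))) / (2 * u) := by
      field_simp; rw [hu']; ring
    have h2 := div_nonneg hx (show 0 ≤ 2 * u by positivity)
    linarith

theorem three_disjoint (S R1 R2 R3 : Set E3) (h1 : MeasurableSet R1) (h2 : MeasurableSet R2)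
    (d12 : ∀ x ∈ R1, x ∉ R2) (d13 : ∀ x ∈ R1, x ∉ R3) (d23 : ∀ x ∈ R2, x ∉ R3) :
    volume (S ∩ R1) + (volume (S ∩ R2) + volume (S ∩ R3)) ≤ volume S := by
  rw [← measure_inter_add_sdiff S h1]
  refine add_le_add le_rfl ?_
  rw [← measure_inter_add_sdiff (S \ R1) h2]
  refine add_le_add (measure_mono ?_) (measure_mono ?_)
  · rintro x ⟨hs, hx⟩; exact ⟨⟨hs, fun h => d12 x h hx⟩, hx⟩
  · rintro x ⟨hs, hx⟩; exact ⟨⟨hs, fun h => d13 x h hx⟩, fun h => d23 x h hx⟩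

theorem cell_vol (S : Set E3) (hS : Convex ℝ S) (v1 v2 v3 N1 N2 N3 : E3)
    (x1 x2 x3 x4 x5 x6 w μ1 μ2 μ3 : ℝ) (hw : 0 < w) (hdet : |det3 v1 v2 v3| = w)
    (hmem : ∀ α β γ : ℝ, 0 ≤ α → 0 ≤ β → 0 ≤ γ → α + β + γ ≤ 1 →
      α * x1 + β * ((x1 + x2 - x6) / 2) + γ * ((x1 + x3 - x5) / 2) ≤ x1 / 2 →
      α * ((x1 + x2 - x6) / 2) + β * x2 + γ * ((x2 + x3 - x4) / 2) ≤ x2 / 2 →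
      α * ((x1 + x3 - x5) / 2) + β * ((x2 + x3 - x4) / 2) + γ * x3 ≤ x3 / 2 →
      α • v1 + β • v2 + γ • v3 ∈ S)
    (D1 : inner ℝ N1 v1 = w ^ 2 ∧ inner ℝ N1 v2 = 0 ∧ inner ℝ N1 v3 = 0)
    (D2 : inner ℝ N2 v1 = 0 ∧ inner ℝ N2 v2 = w ^ 2 ∧ inner ℝ N2 v3 = 0)
    (D3 : inner ℝ N3 v1 = 0 ∧ inner ℝ N3 v2 = 0 ∧ inner ℝ N3 v3 = w ^ 2)
    (r1 : 4 ≤ x1 ∧ x1 ≤ 8) (r2 : 4 ≤ x2 ∧ x2 ≤ 8) (r3 : 4 ≤ x3 ∧ x3 ≤ 8)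
    (r4 : 4 ≤ x4 ∧ x4 ≤ 8) (r5 : 4 ≤ x5 ∧ x5 ≤ 8) (r6 : 4 ≤ x6 ∧ x6 ≤ 8)
    (hu1 : 0 < 4 * (x1 * x2) - (x1 + x2 - x6) * (x1 + x2 - x6))
    (hu2 : 0 < 4 * (x1 * x3) - (x1 + x3 - x5) * (x1 + x3 - x5))
    (hu3 : 0 < 4 * (x2 * x3) - (x2 + x3 - x4) * (x2 + x3 - x4))
    (m1 : 0 ≤ μ1) (m2 : 0 ≤ μ2) (m3 : 0 ≤ μ3) (ms : μ1 + μ2 + μ3 ≤ 1)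
    (k1 : 8 * w ^ 2 * μ1 = HPoly.fcR x2 x3 x4 x5 x6 x1 1)
    (k2 : 8 * w ^ 2 * μ2 = HPoly.fcR x1 x3 x5 x4 x6 x2 1)
    (k3 : 8 * w ^ 2 * μ3 = HPoly.fcR x1 x2 x6 x4 x5 x3 1)
    (c1 : μ1 * x1 + μ2 * ((x1 + x2 - x6) / 2) + μ3 * ((x1 + x3 - x5) / 2) = x1 / 2)
    (c2 : μ1 * ((x1 + x2 - x6) / 2) + μ2 * x2 + μ3 * ((x2 + x3 - x4) / 2) = x2 / 2)
    (c3 : μ1 * ((x1 + x3 - x5) / 2) + μ2 * ((x2 + x3 - x4) / 2) + μ3 * x3 = x3 / 2) :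
    ENNReal.ofReal (w / (96 * w ^ 2) *
      (HPoly.rho x1 x2 x6 * HPoly.fcR x1 x2 x6 x4 x5 x3 1 +
        HPoly.rho x1 x3 x5 * HPoly.fcR x1 x3 x5 x4 x6 x2 1 +
        HPoly.rho x2 x3 x4 * HPoly.fcR x2 x3 x4 x5 x6 x1 1)) ≤ volume S := by
  have hW : 0 < w ^ 2 := by positivity
  obtain ⟨e12, f12, he12, hf12, hs12, hr12, q121, q122, q123⟩ := face_q x1 x2 x3 x4 x5 x6 (by linarith)
    (by linarith) (by linarith) (by linarith) (by linarith) (by linarith) hu1 (by rw [← k3]; positivity)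
  obtain ⟨e13, f13, he13, hf13, hs13, hr13, q131, q132, q133⟩ := face_q x1 x3 x2 x4 x6 x5 (by linarith)
    (by linarith) (by linarith) (by linarith) (by linarith) (by linarith) hu2 (by rw [← k2]; positivity)
  obtain ⟨e23, f23, he23, hf23, hs23, hr23, q231, q232, q233⟩ := face_q x2 x3 x1 x5 x6 x4 (by linarith)
    (by linarith) (by linarith) (by linarith) (by linarith) (by linarith) hu3 (by rw [← k1]; positivity)
  have s0 : (0 : E3) ∈ S := by
    simpa using hmem 0 0 0 le_rfl le_rfl le_rfl (by norm_num) (by linarith) (by linarith) (by linarith)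
  have s1 : (1 / 2 : ℝ) • v1 ∈ S := by
    simpa using hmem (1 / 2) 0 0 (by norm_num) le_rfl le_rfl (by norm_num) (by linarith) (by linarith)
      (by linarith)
  have s2 : (1 / 2 : ℝ) • v2 ∈ S := by
    simpa using hmem 0 (1 / 2) 0 le_rfl (by norm_num) le_rfl (by norm_num) (by linarith) (by linarith)
      (by linarith)
  have s3 : (1 / 2 : ℝ) • v3 ∈ S := by
    simpa using hmem 0 0 (1 / 2) le_rfl le_rfl (by norm_num) (by norm_num) (by linarith) (by linarith)
      (by linarith)
  have sc : μ1 • v1 + μ2 • v2 + μ3 • v3 ∈ S := hmem _ _ _ m1 m2 m3 ms c1.le c2.le c3.le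
  have sq12 : e12 • v1 + f12 • v2 ∈ S := by
    simpa using hmem e12 f12 0 he12 hf12 le_rfl (by linarith) (by linarith) (by linarith) (by linarith)
  have sq13 : e13 • v1 + f13 • v3 ∈ S := by
    simpa using hmem e13 0 f13 he13 le_rfl hf13 (by linarith) (by linarith) (by linarith) (by linarith)
  have sq23 : e23 • v2 + f23 • v3 ∈ S := by
    simpa using hmem 0 e23 f23 le_rfl he23 hf23 (by linarith) (by linarith) (by linarith) (by linarith)
  have F12 := face_pieces S hS s0 v1 v2 v3 N1 N2 N3 _ _ (w ^ 2) w μ1 μ2 μ3 e12 f12 hW hdet D1 D2 D3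
    m3 he12 hf12 rfl rfl s1 s2 sq12 sc
  have F13 := face_pieces S hS s0 v1 v3 v2 N1 N3 N2 _ (μ1 • v1 + μ2 • v2 + μ3 • v3) (w ^ 2) w μ1 μ3 μ2
    e13 f13 hW
    (by rw [← hdet, ← abs_neg]; congr 1; simp only [det3]; ring) ⟨D1.1, D1.2.2, D1.2.1⟩
    ⟨D3.1, D3.2.2, D3.2.1⟩ ⟨D2.1, D2.2.2, D2.2.1⟩
    m2 he13 hf13 rfl (by abel) s1 s3 sq13 sc
  have F23 := face_pieces S hS s0 v2 v3 v1 N2 N3 N1 _ (μ1 • v1 + μ2 • v2 + μ3 • v3) (w ^ 2) w μ2 μ3 μ1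
    e23 f23 hW
    (by rw [← hdet]; congr 1; simp only [det3]; ring) ⟨D2.2.1, D2.2.2, D2.1⟩
    ⟨D3.2.1, D3.2.2, D3.1⟩ ⟨D1.2.1, D1.2.2, D1.1⟩
    m1 he23 hf23 rfl (by abel) s2 s3 sq23 sc
  have ho : ∀ (p q r s : ℝ) (A B C D : E3), MeasurableSet {x : E3 | 0 < p * inner ℝ A x - q * inner ℝ B x ∧
      0 < r * inner ℝ C x - s * inner ℝ D x} := by
    intro p q r s A B C D
    apply IsOpen.measurableSet
    simp only [Set.ofPred_and]
    exact IsOpen.inter (isOpen_lt (by fun_prop) (by fun_prop)) (isOpen_lt (by fun_prop) (by fun_prop))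
  refine le_trans (le_trans (le_of_eq ?_) (add_le_add F12 (add_le_add F13 F23)))
    (three_disjoint S _ _ _ (ho _ _ _ _ _ _ _ _) (ho _ _ _ _ _ _ _ _) ?_ ?_ ?_)
  · rw [← ENNReal.ofReal_add (by positivity) (by positivity),
      ← ENNReal.ofReal_add (by positivity) (by positivity)]
    congr 1
    rw [hr12, hr13, hr23, ← k1, ← k2, ← k3]
    field_simp
    ring
  · rintro x ⟨ha, hb⟩ ⟨hc, hd⟩; linarith
  · rintro x ⟨ha, hb⟩ ⟨hc, hd⟩; linarith
  · rintro x ⟨ha, hb⟩ ⟨hc, hd⟩; linarith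


/-! ### Simplices -/

theorem hull_mem (p0 p1 p2 p3 : E3) (α β γ : ℝ) (ha : 0 ≤ α) (hb : 0 ≤ β) (hg : 0 ≤ γ)
    (hs : α + β + γ ≤ 1) :
    p0 + (α • (p1 - p0) + β • (p2 - p0) + γ • (p3 - p0)) ∈ convexHull ℝ ({p0, p1, p2, p3} : Set E3) := by
  have := (convex_convexHull ℝ ({p0, p1, p2, p3} : Set E3)).sum_mem (t := Finset.univ)
    (w := ![1 - α - β - γ, α, β, γ]) (z := ![p0, p1, p2, p3]) ?_ ?_ ?_
  · convert this using 1
    simp only [Fin.sum_univ_four, Matrix.cons_val]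
    module
  · intro i _
    fin_cases i <;> simp <;> linarith
  · simp [Fin.sum_univ_four]; ring
  · intro i _
    apply subset_convexHull
    fin_cases i <;> simp

theorem of_hull_mem (p0 p1 p2 p3 x : E3) (hx : x ∈ convexHull ℝ ({p0, p1, p2, p3} : Set E3)) :
    ∃ α β γ : ℝ, 0 ≤ α ∧ 0 ≤ β ∧ 0 ≤ γ ∧ α + β + γ ≤ 1 ∧
      x - p0 = α • (p1 - p0) + β • (p2 - p0) + γ • (p3 - p0) := by
  have hc : Convex ℝ {x : E3 | ∃ α β γ : ℝ, 0 ≤ α ∧ 0 ≤ β ∧ 0 ≤ γ ∧ α + β + γ ≤ 1 ∧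
      x - p0 = α • (p1 - p0) + β • (p2 - p0) + γ • (p3 - p0)} := by
    rintro x ⟨a, b, c, ha, hb, hc, hs, hx⟩ y ⟨a2, b2, c2, ha2, hb2, hc2, hs2, hy⟩ s t h1 h2 h3
    refine ⟨s * a + t * a2, s * b + t * b2, s * c + t * c2, by positivity, by positivity, by positivity, ?_, ?_⟩
    · nlinarith
    · have e : s • x + t • y - p0 = s • (x - p0) + t • (y - p0) := by
        have : p0 = (s + t) • p0 := by rw [h3, one_smul]
        nth_rewrite 1 [this]
        module
      rw [e, hx, hy]
      module
  refine convexHull_min ?_ hc hx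
  rintro y (rfl | rfl | rfl | rfl)
  · exact ⟨0, 0, 0, by simp⟩
  · exact ⟨1, 0, 0, by simp⟩
  · exact ⟨0, 1, 0, by simp⟩
  · exact ⟨0, 0, 1, by simp⟩

theorem det3_ne_zero (p0 p1 p2 p3 : E3) (h : AffineIndependent ℝ ![p0, p1, p2, p3]) :
    det3 (p1 - p0) (p2 - p0) (p3 - p0) ≠ 0 := by
  intro hd
  obtain ⟨z, hz, hM⟩ := (Matrix.exists_mulVec_eq_zero_iff (M := Matrix.of
    ![![(p1 - p0) 0, (p2 - p0) 0, (p3 - p0) 0], ![(p1 - p0) 1, (p2 - p0) 1, (p3 - p0) 1],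
      ![(p1 - p0) 2, (p2 - p0) 2, (p3 - p0) 2]])).2 (by
      rw [Matrix.det_fin_three]
      rw [det3] at hd
      simp only [Matrix.of_apply, Matrix.cons_val]
      linarith)
  have hz0 : z 0 • (p1 - p0) + z 1 • (p2 - p0) + z 2 • (p3 - p0) = 0 := by
    ext i
    have := congrFun hM i
    fin_cases i <;> simp [Matrix.mulVec, dotProduct, Fin.sum_univ_three] at this ⊢ <;> linarith
  rw [affineIndependent_iff] at h
  have key := h Finset.univ ![-(z 0 + z 1 + z 2), z 0, z 1, z 2]
    (by simp [Fin.sum_univ_four]; ring) (by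
      simp only [Fin.sum_univ_four, Matrix.cons_val]
      rw [← hz0]; module)
  apply hz
  ext i
  have k1 := key 1 (Finset.mem_univ _)
  have k2 := key 2 (Finset.mem_univ _)
  have k3 := key 3 (Finset.mem_univ _)
  simp at k1 k2 k3
  fin_cases i <;> simp [k1, k2, k3]

theorem gram2_pos (a b d : E3) (h : det3 a b d ≠ 0) :
    0 < inner ℝ a a * inner ℝ b b - inner ℝ a b ^ 2 := by
  have h0 : 0 < det3 a b d ^ 2 := by positivity
  have e := det3_sq a b d
  have cs1 : 0 ≤ inner ℝ a a * inner ℝ b b - inner ℝ a b ^ 2 := by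
    have := real_inner_mul_inner_self_le a b
    nlinarith
  have ha : a ≠ 0 := by rintro rfl; simp [det3] at h
  have ha' : 0 < inner ℝ a a := real_inner_self_pos.2 ha
  refine lt_of_le_of_ne cs1 fun hz => ?_
  have id : (inner ℝ a a * inner ℝ b b - inner ℝ a b ^ 2) * (inner ℝ a a * inner ℝ d d - inner ℝ a d ^ 2) =
      inner ℝ a a * det3 a b d ^ 2 + (inner ℝ a a * inner ℝ b d - inner ℝ a b * inner ℝ a d) ^ 2 := by
    rw [e]; ring
  rw [← hz, zero_mul] at id
  have : 0 < inner ℝ a a * det3 a b d ^ 2 := by positivity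
  nlinarith [sq_nonneg (inner ℝ a a * inner ℝ b d - inner ℝ a b * inner ℝ a d)]

theorem inner_of_dist (p0 p q : E3) :
    inner ℝ (p - p0) (q - p0) = (dist p0 p ^ 2 + dist p0 q ^ 2 - dist p q ^ 2) / 2 := by
  have h := norm_sub_sq_real (p - p0) (q - p0)
  rw [sub_sub_sub_cancel_right] at h
  rw [dist_comm p0 p, dist_comm p0 q, dist_eq_norm, dist_eq_norm, dist_eq_norm]
  linarith

theorem le_dist_iff (p0 p x : E3) (h : inner ℝ x (p - p0) ≤ dist p0 p ^ 2 / 2) :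
    dist (p0 + x) p0 ≤ dist (p0 + x) p := by
  rw [dist_eq_norm, dist_eq_norm, add_sub_cancel_left, show p0 + x - p = x - (p - p0) by abel]
  have h2 := norm_sub_sq_real x (p - p0)
  rw [dist_comm, dist_eq_norm] at h
  exact le_of_sq_le_sq (by linarith) (norm_nonneg _)

theorem eq_dist (p0 p c : E3) (h : dist c p0 = dist c p) :
    inner ℝ (c - p0) (p - p0) = dist p0 p ^ 2 / 2 := by
  have h2 := norm_sub_sq_real (c - p0) (p - p0)
  rw [sub_sub_sub_cancel_right] at h2
  rw [dist_eq_norm, dist_eq_norm] at h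
  rw [dist_comm, dist_eq_norm, h] at *
  linarith

theorem cone_le (p0 p1 p2 p3 N1 N2 N3 : E3) (W : ℝ) (hW : 0 < W)
    (D1 : inner ℝ N1 (p1 - p0) = W ∧ inner ℝ N1 (p2 - p0) = 0 ∧ inner ℝ N1 (p3 - p0) = 0)
    (D2 : inner ℝ N2 (p1 - p0) = 0 ∧ inner ℝ N2 (p2 - p0) = W ∧ inner ℝ N2 (p3 - p0) = 0)
    (D3 : inner ℝ N3 (p1 - p0) = 0 ∧ inner ℝ N3 (p2 - p0) = 0 ∧ inner ℝ N3 (p3 - p0) = W) :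
    (volume (Metric.closedBall p0 1 ∩
        {y : E3 | ∃ x ∈ convexHull ℝ ({p0, p1, p2, p3} : Set E3), ∃ t : ℝ, 0 ≤ t ∧
          y = p0 + t • (x - p0)})).toReal ≤ volume.real (wedge3 N1 N2 N3) := by
  rw [← measure_preimage_add volume p0, Measure.real]
  apply ENNReal.toReal_mono
  · refine ne_of_lt (lt_of_le_of_lt (measure_mono ?_)
      (measure_closedBall_lt_top (μ := volume) (x := (0 : E3)) (r := 1)))
    rintro x ⟨hx, _⟩
    simpa using hx
  apply measure_mono
  rintro z ⟨hz, x, hx, t, ht, he⟩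
  obtain ⟨α, β, γ, ha, hb, hg, hs, hx⟩ := of_hull_mem _ _ _ _ _ hx
  have hz2 : z = t • (α • (p1 - p0) + β • (p2 - p0) + γ • (p3 - p0)) := by
    rw [← hx]; exact add_left_cancel he
  have ex : ∀ N : E3, inner ℝ N z = t * (α * inner ℝ N (p1 - p0) + β * inner ℝ N (p2 - p0) +
      γ * inner ℝ N (p3 - p0)) := by
    intro N
    rw [hz2, inner_smul_right, inner_add_right, inner_add_right, inner_smul_right, inner_smul_right,
      inner_smul_right]
  refine ⟨by simpa using hz, ?_, ?_, ?_⟩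
  · rw [ex, D1.1, D1.2.1, D1.2.2]
    simp only [mul_zero, add_zero]; positivity
  · rw [ex, D2.1, D2.2.1, D2.2.2]
    simp only [mul_zero, add_zero, zero_add]; positivity
  · rw [ex, D3.1, D3.2.1, D3.2.2]
    simp only [mul_zero, add_zero, zero_add]; positivity

theorem sq_range (y : ℝ) (h1 : 2 ≤ y) (h2 : y ≤ 2.51) : 4 ≤ y ^ 2 ∧ y ^ 2 ≤ 8 := by
  constructor <;> nlinarith

theorem sq_range4 (y : ℝ) (h1 : 2.51 ≤ y) (h2 : y ≤ 2 * Real.sqrt 2) : 4 ≤ y ^ 2 ∧ y ^ 2 ≤ 8 := by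
  have s2 : Real.sqrt 2 ^ 2 = 2 := Real.sq_sqrt (by norm_num)
  have := Real.sqrt_nonneg 2
  constructor <;> nlinarith

set_option maxHeartbeats 2000000 in
/-- Calculation 4.5.2, cells (4)–(7): Voronoi scoring of small simplices with a long
fourth edge is negative. -/
theorem vor_neg_long_fourth_edge (p₀ p₁ p₂ p₃ : E3)
    (hindep : AffineIndependent ℝ ![p₀, p₁, p₂, p₃])
    (hsmall : IsSmall p₀ p₁ p₂ p₃)
    (hcc : ContainsCircumcenter p₀ p₁ p₂ p₃)
    (h4 : dist p₂ p₃ ∈ Set.Icc (2.51 : ℝ) (2 * Real.sqrt 2))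
    (hcase : (dist p₀ p₁ ∈ Set.Icc (2.06 : ℝ) (2.51) ∧ dist p₀ p₂ ∈ Set.Icc (2 : ℝ) (2.51) ∧ dist p₀ p₃ ∈ Set.Icc (2 : ℝ) (2.51) ∧ dist p₁ p₃ ∈ Set.Icc (2 : ℝ) (2.51) ∧ dist p₁ p₂ ∈ Set.Icc (2 : ℝ) (2.51)) ∨
      (dist p₀ p₂ ∈ Set.Icc (2.08 : ℝ) (2.51) ∧ dist p₀ p₁ ∈ Set.Icc (2 : ℝ) (2.51) ∧ dist p₀ p₃ ∈ Set.Icc (2 : ℝ) (2.51) ∧ dist p₁ p₃ ∈ Set.Icc (2 : ℝ) (2.51) ∧ dist p₁ p₂ ∈ Set.Icc (2 : ℝ) (2.51)) ∨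
      (dist p₁ p₃ ∈ Set.Icc (2.2 : ℝ) (2.51) ∧ dist p₀ p₁ ∈ Set.Icc (2 : ℝ) (2.51) ∧ dist p₀ p₂ ∈ Set.Icc (2 : ℝ) (2.51) ∧ dist p₀ p₃ ∈ Set.Icc (2 : ℝ) (2.51) ∧ dist p₁ p₂ ∈ Set.Icc (2 : ℝ) (2.51)) ∨
      (dist p₂ p₃ ∈ Set.Icc (2.58 : ℝ) (2 * Real.sqrt 2) ∧ dist p₁ p₃ ∈ Set.Icc (2.12 : ℝ) (2.51) ∧ dist p₀ p₁ ∈ Set.Icc (2 : ℝ) (2.51) ∧ dist p₀ p₂ ∈ Set.Icc (2 : ℝ) (2.51) ∧ dist p₀ p₃ ∈ Set.Icc (2 : ℝ) (2.51) ∧ dist p₁ p₂ ∈ Set.Icc (2 : ℝ) (2.51))) :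
    vor p₀ p₁ p₂ p₃ < 0 := by
  have hne := det3_ne_zero _ _ _ _ hindep
  obtain ⟨c, hc, hc1, hc2, hc3⟩ := hcc
  have hc1 := eq_dist _ _ _ hc1
  have hc2 := eq_dist _ _ _ hc2
  have hc3 := eq_dist _ _ _ hc3
  obtain ⟨μ1, μ2, μ3, m1, m2, m3, ms, hcm⟩ := of_hull_mem _ _ _ _ _ hc
  have i12 := inner_of_dist p₀ p₁ p₂
  have i13 := inner_of_dist p₀ p₁ p₃
  have i23 := inner_of_dist p₀ p₂ p₃
  have i11 : inner ℝ (p₁ - p₀) (p₁ - p₀) = dist p₀ p₁ ^ 2 := by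
    rw [inner_of_dist]; simp
  have i22 : inner ℝ (p₂ - p₀) (p₂ - p₀) = dist p₀ p₂ ^ 2 := by
    rw [inner_of_dist]; simp
  have i33 : inner ℝ (p₃ - p₀) (p₃ - p₀) = dist p₀ p₃ ^ 2 := by
    rw [inner_of_dist]; simp
  have g12 := gram2_pos _ _ _ hne
  have g13 := gram2_pos (p₁ - p₀) (p₃ - p₀) (p₂ - p₀) (fun h => hne (by
    rw [← neg_eq_zero, ← h]; simp only [det3]; ring))
  have g23 := gram2_pos (p₂ - p₀) (p₃ - p₀) (p₁ - p₀) (fun h => hne (by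
    rw [← h]; simp only [det3]; ring))
  have hsq := det3_sq (p₁ - p₀) (p₂ - p₀) (p₃ - p₀)
  obtain ⟨w, hw⟩ : ∃ w, |det3 (p₁ - p₀) (p₂ - p₀) (p₃ - p₀)| = w := ⟨_, rfl⟩
  have hw0 : 0 < w := by rw [← hw]; exact abs_pos.2 hne
  rw [← sq_abs, hw] at hsq
  have hh := hsmall.1
  clear hsmall hindep hne
  have ex : ∀ (α β γ : ℝ) (z : E3), inner ℝ (α • (p₁ - p₀) + β • (p₂ - p₀) + γ • (p₃ - p₀)) z =
      α * inner ℝ (p₁ - p₀) z + β * inner ℝ (p₂ - p₀) z + γ * inner ℝ (p₃ - p₀) z := by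
    intro α β γ z
    rw [inner_add_left, inner_add_left, real_inner_smul_left, real_inner_smul_left, real_inner_smul_left]
  have i21 := (real_inner_comm (p₁ - p₀) (p₂ - p₀)).trans i12
  have i31 := (real_inner_comm (p₁ - p₀) (p₃ - p₀)).trans i13
  have i32 := (real_inner_comm (p₂ - p₀) (p₃ - p₀)).trans i23
  rw [hcm, ex, i11, i21, i31] at hc1
  rw [hcm, ex, i12, i22, i32] at hc2
  rw [hcm, ex, i13, i23, i33] at hc3
  rw [i11, i22, i33, i12, i13, i23] at hsq
  rw [i11, i22, i12] at g12
  rw [i11, i33, i13] at g13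
  rw [i22, i33, i23] at g23
  have hsub : ∀ α β γ : ℝ, 0 ≤ α → 0 ≤ β → 0 ≤ γ → α + β + γ ≤ 1 →
      p₀ + (α • (p₁ - p₀) + β • (p₂ - p₀) + γ • (p₃ - p₀)) ∈ convexHull ℝ ({p₀, p₁, p₂, p₃} : Set E3) :=
    fun α β γ => hull_mem p₀ p₁ p₂ p₃ α β γ
  have hb : 2 ≤ dist p₀ p₁ ∧ 2 ≤ dist p₀ p₂ ∧ 2 ≤ dist p₀ p₃ ∧ 2 ≤ dist p₁ p₂ ∧ 2 ≤ dist p₁ p₃ ∧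
      dist p₀ p₁ ≤ 2.51 ∧ dist p₀ p₂ ≤ 2.51 ∧ dist p₀ p₃ ≤ 2.51 ∧ dist p₁ p₂ ≤ 2.51 ∧
      dist p₁ p₃ ≤ 2.51 := by
    refine ⟨hh.1, hh.2.1, hh.2.2.1, hh.2.2.2.1, hh.2.2.2.2.1, ?_⟩
    rcases hcase with h | h | h | h <;> simp only [Set.mem_Icc] at h
    · exact ⟨h.1.2, h.2.1.2, h.2.2.1.2, h.2.2.2.2.2, h.2.2.2.1.2⟩
    · exact ⟨h.2.1.2, h.1.2, h.2.2.1.2, h.2.2.2.2.2, h.2.2.2.1.2⟩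
    · exact ⟨h.2.1.2, h.2.2.1.2, h.2.2.2.1.2, h.2.2.2.2.2, h.1.2⟩
    · exact ⟨h.2.2.1.2, h.2.2.2.1.2, h.2.2.2.2.1.2, h.2.2.2.2.2.2, h.2.1.2⟩
  obtain ⟨y1, e1⟩ : ∃ y, y = dist p₀ p₁ := ⟨_, rfl⟩
  obtain ⟨y2, e2⟩ : ∃ y, y = dist p₀ p₂ := ⟨_, rfl⟩
  obtain ⟨y3, e3⟩ : ∃ y, y = dist p₀ p₃ := ⟨_, rfl⟩
  obtain ⟨y4, e4⟩ : ∃ y, y = dist p₂ p₃ := ⟨_, rfl⟩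
  obtain ⟨y5, e5⟩ : ∃ y, y = dist p₁ p₃ := ⟨_, rfl⟩
  obtain ⟨y6, e6⟩ : ∃ y, y = dist p₁ p₂ := ⟨_, rfl⟩
  have hS1 : ∀ x : E3, inner ℝ x (p₁ - p₀) ≤ y1 ^ 2 / 2 → dist (p₀ + x) p₀ ≤ dist (p₀ + x) p₁ := by
    rw [e1]; exact le_dist_iff p₀ p₁
  have hS2 : ∀ x : E3, inner ℝ x (p₂ - p₀) ≤ y2 ^ 2 / 2 → dist (p₀ + x) p₀ ≤ dist (p₀ + x) p₂ := by
    rw [e2]; exact le_dist_iff p₀ p₂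
  have hS3 : ∀ x : E3, inner ℝ x (p₃ - p₀) ≤ y3 ^ 2 / 2 → dist (p₀ + x) p₀ ≤ dist (p₀ + x) p₃ := by
    rw [e3]; exact le_dist_iff p₀ p₃
  rw [← e1, ← e2, ← e3, ← e5, ← e6] at hb hcase
  rw [← e4] at hcase h4
  simp only [← e1, ← e2, ← e3, ← e4, ← e5, ← e6] at i11 i22 i33 i12 i13 i23 i21 i31 i32 hc1 hc2 hc3 hsq g12 g13 g23
  obtain ⟨b1, b2, b3, b6, b5, B1, B2, B3, B6, B5⟩ := hb
  have r1 := sq_range _ b1 B1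
  have r2 := sq_range _ b2 B2
  have r3 := sq_range _ b3 B3
  have r5 := sq_range _ b5 B5
  have r6 := sq_range _ b6 B6
  have r4 := sq_range4 y4 h4.1 h4.2
  have p1 : 0 < y1 := by linarith
  have p2 : 0 < y2 := by linarith
  have p3 : 0 < y3 := by linarith
  obtain ⟨N1, N2, N3, D1, D2, D3, hvol⟩ := solid_angle (p₁ - p₀) (p₂ - p₀) (p₃ - p₀) w y1 y2 y3 _ _ _ hw0
    p1 p2 p3 i11 i22 i33 i12 i13 i23 hsq g12 g13 g23 (by
      have t1 : 0 ≤ y1 * ((y2 ^ 2 + y3 ^ 2 - y4 ^ 2) / 2) := mul_nonneg p1.le (by linarith)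
      have t2 : 0 ≤ y2 * ((y1 ^ 2 + y3 ^ 2 - y5 ^ 2) / 2) := mul_nonneg p2.le (by linarith)
      have t3 : 0 ≤ y3 * ((y1 ^ 2 + y2 ^ 2 - y6 ^ 2) / 2) := mul_nonneg p3.le (by linarith)
      positivity)
  have hcone := cone_le p₀ p₁ p₂ p₃ N1 N2 N3 (w ^ 2) (by positivity) D1 D2 D3
  rw [hvol] at hcone
  have k1 : 8 * w ^ 2 * μ1 = HPoly.fcR (y2 ^ 2) (y3 ^ 2) (y4 ^ 2) (y5 ^ 2) (y6 ^ 2) (y1 ^ 2) 1 := by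
    rw [HPoly.fcR]
    linear_combination 8 * μ1 * hsq + 8 * (y2 ^ 2 * y3 ^ 2 - ((y2 ^ 2 + y3 ^ 2 - y4 ^ 2) / 2) ^ 2) * hc1
      - 8 * (y3 ^ 2 * ((y1 ^ 2 + y2 ^ 2 - y6 ^ 2) / 2) - ((y1 ^ 2 + y3 ^ 2 - y5 ^ 2) / 2) *
        ((y2 ^ 2 + y3 ^ 2 - y4 ^ 2) / 2)) * hc2
      - 8 * (y2 ^ 2 * ((y1 ^ 2 + y3 ^ 2 - y5 ^ 2) / 2) - ((y1 ^ 2 + y2 ^ 2 - y6 ^ 2) / 2) *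
        ((y2 ^ 2 + y3 ^ 2 - y4 ^ 2) / 2)) * hc3
  have k2 : 8 * w ^ 2 * μ2 = HPoly.fcR (y1 ^ 2) (y3 ^ 2) (y5 ^ 2) (y4 ^ 2) (y6 ^ 2) (y2 ^ 2) 1 := by
    rw [HPoly.fcR]
    linear_combination 8 * μ2 * hsq + 8 * (y1 ^ 2 * y3 ^ 2 - ((y1 ^ 2 + y3 ^ 2 - y5 ^ 2) / 2) ^ 2) * hc2
      - 8 * (y3 ^ 2 * ((y1 ^ 2 + y2 ^ 2 - y6 ^ 2) / 2) - ((y1 ^ 2 + y3 ^ 2 - y5 ^ 2) / 2) *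
        ((y2 ^ 2 + y3 ^ 2 - y4 ^ 2) / 2)) * hc1
      - 8 * (y1 ^ 2 * ((y2 ^ 2 + y3 ^ 2 - y4 ^ 2) / 2) - ((y1 ^ 2 + y2 ^ 2 - y6 ^ 2) / 2) *
        ((y1 ^ 2 + y3 ^ 2 - y5 ^ 2) / 2)) * hc3
  have k3 : 8 * w ^ 2 * μ3 = HPoly.fcR (y1 ^ 2) (y2 ^ 2) (y6 ^ 2) (y4 ^ 2) (y5 ^ 2) (y3 ^ 2) 1 := by
    rw [HPoly.fcR]
    linear_combination 8 * μ3 * hsq + 8 * (y1 ^ 2 * y2 ^ 2 - ((y1 ^ 2 + y2 ^ 2 - y6 ^ 2) / 2) ^ 2) * hc3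
      - 8 * (y2 ^ 2 * ((y1 ^ 2 + y3 ^ 2 - y5 ^ 2) / 2) - ((y1 ^ 2 + y2 ^ 2 - y6 ^ 2) / 2) *
        ((y2 ^ 2 + y3 ^ 2 - y4 ^ 2) / 2)) * hc1
      - 8 * (y1 ^ 2 * ((y2 ^ 2 + y3 ^ 2 - y4 ^ 2) / 2) - ((y1 ^ 2 + y2 ^ 2 - y6 ^ 2) / 2) *
        ((y1 ^ 2 + y3 ^ 2 - y5 ^ 2) / 2)) * hc2
  have hu1 : 0 < 4 * (y1 ^ 2 * y2 ^ 2) - (y1 ^ 2 + y2 ^ 2 - y6 ^ 2) * (y1 ^ 2 + y2 ^ 2 - y6 ^ 2) := by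
    linarith
  have hu2 : 0 < 4 * (y1 ^ 2 * y3 ^ 2) - (y1 ^ 2 + y3 ^ 2 - y5 ^ 2) * (y1 ^ 2 + y3 ^ 2 - y5 ^ 2) := by
    linarith
  have hu3 : 0 < 4 * (y2 ^ 2 * y3 ^ 2) - (y2 ^ 2 + y3 ^ 2 - y4 ^ 2) * (y2 ^ 2 + y3 ^ 2 - y4 ^ 2) := by
    linarith
  have hkey := key_num _ _ _ _ _ _ y1 y2 y3 y4 y5 y6 w rfl rfl rfl rfl rfl rfl h4 hcase hu1 hu2 hu3
    (by rw [← k3]; positivity) (by rw [← k2]; positivity) (by rw [← k1]; positivity) hw0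
    (by rw [hsq, HPoly.gR]; ring)
  have hS : Convex ℝ {x : E3 | p₀ + x ∈ convexHull ℝ ({p₀, p₁, p₂, p₃} : Set E3) ∧
      inner ℝ (p₁ - p₀) x ≤ y1 ^ 2 / 2 ∧ inner ℝ (p₂ - p₀) x ≤ y2 ^ 2 / 2 ∧
      inner ℝ (p₃ - p₀) x ≤ y3 ^ 2 / 2} := by
    simp only [Set.ofPred_and]
    have hh : ∀ (v : E3) (r : ℝ), Convex ℝ {x : E3 | inner ℝ v x ≤ r} := fun v r =>
      convex_halfSpace_le (IsLinearMap.mk (fun x y => inner_add_right v x y)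
        (fun t x => inner_smul_right v x t)) r
    exact ((convex_convexHull ℝ _).translate_preimage_right p₀).inter
      ((hh _ _).inter ((hh _ _).inter (hh _ _)))
  have hcell := cell_vol _ hS (p₁ - p₀) (p₂ - p₀) (p₃ - p₀) N1 N2 N3 (y1 ^ 2) (y2 ^ 2) (y3 ^ 2) (y4 ^ 2)
    (y5 ^ 2) (y6 ^ 2) w μ1 μ2 μ3 hw0 hw (by
      intro α β γ ha hb hg hs h1 h2 h3
      refine ⟨hsub α β γ ha hb hg hs, ?_, ?_, ?_⟩
      · rw [real_inner_comm, ex, i11, i21, i31]; exact h1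
      · rw [real_inner_comm, ex, i12, i22, i32]; exact h2
      · rw [real_inner_comm, ex, i13, i23, i33]; exact h3) D1 D2 D3 r1 r2 r3 r4 r5 r6 hu1 hu2 hu3
    m1 m2 m3 ms k1 k2 k3 hc1 hc2 hc3
  have hfin : volume {x ∈ convexHull ℝ ({p₀, p₁, p₂, p₃} : Set E3) |
        dist x p₀ ≤ dist x p₁ ∧ dist x p₀ ≤ dist x p₂ ∧ dist x p₀ ≤ dist x p₃} ≠ ⊤ := by
    have hbd : Bornology.IsBounded (convexHull ℝ ({p₀, p₁, p₂, p₃} : Set E3)) :=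
      isBounded_convexHull.2 (Set.toFinite _).isBounded
    exact (hbd.subset (fun x hx => hx.1)).measure_lt_top.ne
  have hle := hcell.trans (measure_mono (μ := volume) (t := (fun x => p₀ + x) ⁻¹'
      {x ∈ convexHull ℝ ({p₀, p₁, p₂, p₃} : Set E3) |
        dist x p₀ ≤ dist x p₁ ∧ dist x p₀ ≤ dist x p₂ ∧ dist x p₀ ≤ dist x p₃}) (by
      rintro x ⟨h0, h1, h2, h3⟩
      rw [real_inner_comm] at h1 h2 h3
      exact ⟨h0, hS1 x h1, hS2 x h2, hS3 x h3⟩))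
  rw [measure_preimage_add, ENNReal.ofReal_le_iff_le_toReal hfin] at hle
  have hδ : 0 ≤ δoct := le_trans (by norm_num) δoct_ge
  have hmul := mul_le_mul_of_nonneg_left hle hδ
  rw [vor]
  have ea : y1 * y2 * y3 + y1 * ((y2 ^ 2 + y3 ^ 2 - y4 ^ 2) / 2) + y2 * ((y1 ^ 2 + y3 ^ 2 - y5 ^ 2) / 2) +
      y3 * ((y1 ^ 2 + y2 ^ 2 - y6 ^ 2) / 2) = y1 * y2 * y3 + (y1 * (y2 ^ 2 + y3 ^ 2 - y4 ^ 2) +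
      y2 * (y1 ^ 2 + y3 ^ 2 - y5 ^ 2) + y3 * (y1 ^ 2 + y2 ^ 2 - y6 ^ 2)) / 2 := by ring
  rw [ea] at hcone
  linarith
end
end

section
/- Let a, b satisfy 1 ≤ a ≤ 1.18, 4/3 ≤ b² ≤ 2, and a ≤ b, and let R = R(a, b, √2) be the Rogers simplex. Then vol(R ∩ B(0,1)) ≤ δ_oct·vol(R). Moreover, if vol(R) > 0, then equality holds if and only if a = 1 and b = 2/√3. -/
open MeasureTheory Real

noncomputable section

def pt3 (a b c : ℝ) : E3 := (WithLp.equiv 2 (Fin 3 → ℝ)).symm ![a, b, c]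

/-- The Rogers simplex `R(a,b,c)`, with vertices `(0,0,0)`, `(a,0,0)`,
`(a, √(b²-a²), 0)`, `(a, √(b²-a²), √(c²-b²))`. -/
def RogersSimplex (a b c : ℝ) : Set E3 :=
  convexHull ℝ ({pt3 0 0 0, pt3 a 0 0, pt3 a (Real.sqrt (b ^ 2 - a ^ 2)) 0,
    pt3 a (Real.sqrt (b ^ 2 - a ^ 2)) (Real.sqrt (c ^ 2 - b ^ 2))} : Set E3)

open scoped Pointwise

/-- The triangle `0 ≤ v ≤ u ≤ 1`. -/
def TT : Set (ℝ × ℝ) := {q | 0 ≤ q.2 ∧ q.2 ≤ q.1 ∧ q.1 ≤ 1}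

lemma TT_meas : MeasurableSet TT := by
  unfold TT
  simp only [Set.ofPred_and]
  apply MeasurableSet.inter (measurableSet_le (by fun_prop) (by fun_prop))
  exact MeasurableSet.inter (measurableSet_le (by fun_prop) (by fun_prop))
    (measurableSet_le (by fun_prop) (by fun_prop))

/-- Truncated cone over the triangle. -/
def coneS (ρ : ℝ × ℝ → ℝ) : Set (ℝ × (ℝ × ℝ)) :=
  {p | 0 < p.1 ∧ (p.2.1 / p.1, p.2.2 / p.1) ∈ TT ∧ p.1 ≤ ρ (p.2.1 / p.1, p.2.2 / p.1)}

lemma lint_sq (r : ℝ) (hr : 0 < r) :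
    ∫⁻ x in Set.Ioc 0 r, ENNReal.ofReal (x ^ 2) = ENNReal.ofReal (r ^ 3 / 3) := by
  rw [← ofReal_integral_eq_lintegral_ofReal]
  · rw [← intervalIntegral.integral_of_le hr.le, integral_pow]
    congr 1; norm_num
  · exact (intervalIntegrable_iff_integrableOn_Ioc_of_le hr.le).1
      (Continuous.intervalIntegrable (by fun_prop) _ _)
  · exact Filter.Eventually.of_forall fun x => sq_nonneg x

lemma coneS_vol (ρ : ℝ × ℝ → ℝ) (hρ : Measurable ρ) (hpos : ∀ q, 0 < ρ q) :
    volume (coneS ρ) = ∫⁻ q in TT, ENNReal.ofReal (ρ q ^ 3 / 3) := by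
  have hdm : Measurable (fun p : ℝ × (ℝ × ℝ) => (p.2.1 / p.1, p.2.2 / p.1)) := by fun_prop
  have hm : MeasurableSet (coneS ρ) := by
    unfold coneS
    simp only [Set.ofPred_and]
    apply MeasurableSet.inter (measurableSet_lt (by fun_prop) (by fun_prop))
    exact MeasurableSet.inter (hdm TT_meas) (measurableSet_le (by fun_prop) (hρ.comp hdm))
  set W : Set (ℝ × (ℝ × ℝ)) := {p | 0 < p.1 ∧ p.2 ∈ TT ∧ p.1 ≤ ρ p.2} with hW
  have hWm : MeasurableSet W := by
    rw [hW]
    simp only [Set.ofPred_and]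
    apply MeasurableSet.inter (measurableSet_lt (by fun_prop) (by fun_prop))
    exact MeasurableSet.inter (measurable_snd TT_meas)
      (measurableSet_le (by fun_prop) (hρ.comp measurable_snd))
  have hslice : ∀ x : ℝ, (volume : Measure (ℝ × ℝ)) (Prod.mk x ⁻¹' coneS ρ) =
      ∫⁻ q, W.indicator (fun p => ENNReal.ofReal (p.1 ^ 2)) (x, q) := by
    intro x
    by_cases hx : 0 < x
    · have h1 : Prod.mk x ⁻¹' coneS ρ = x • (Prod.mk x ⁻¹' W) := by
        ext q
        rw [Set.mem_smul_set_iff_inv_smul_mem₀ hx.ne']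
        simp only [coneS, Set.mem_preimage, Set.mem_ofPred_eq, hW]
        have : x⁻¹ • q = (q.1 / x, q.2 / x) := by
          ext <;> simp [div_eq_inv_mul]
        rw [this]
      rw [h1, Measure.addHaar_smul]
      have : Module.finrank ℝ (ℝ × ℝ) = 2 := by simp
      rw [this, abs_of_nonneg (sq_nonneg x)]
      have h2 : ∀ q, W.indicator (fun p => ENNReal.ofReal (p.1 ^ 2)) (x, q) =
          (Prod.mk x ⁻¹' W).indicator (fun _ => ENNReal.ofReal (x ^ 2)) q := by
        intro q
        simp only [Set.indicator, Set.mem_preimage]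
        rfl
      simp_rw [h2]
      rw [lintegral_indicator_const (measurable_prodMk_left hWm)]
    · have h1 : Prod.mk x ⁻¹' coneS ρ = ∅ := by
        ext q; simp [coneS, hx]
      have h2 : ∀ q, W.indicator (fun p => ENNReal.ofReal (p.1 ^ 2)) (x, q) = 0 := by
        intro q; simp [hW, hx]
      simp [h1, h2]
  rw [Measure.volume_eq_prod, Measure.prod_apply hm]
  simp_rw [hslice]
  rw [lintegral_lintegral_swap, ← lintegral_indicator TT_meas]
  · apply lintegral_congr
    intro q
    by_cases hq : q ∈ TT
    · have h2 : ∀ x, W.indicator (fun p => ENNReal.ofReal (p.1 ^ 2)) (x, q) =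
          (Set.Ioc 0 (ρ q)).indicator (fun x => ENNReal.ofReal (x ^ 2)) x := by
        intro x
        simp [Set.indicator, hW, hq]
      simp_rw [h2]
      rw [lintegral_indicator measurableSet_Ioc, lint_sq _ (hpos q), Set.indicator_of_mem hq]
    · have h2 : ∀ x, W.indicator (fun p => ENNReal.ofReal (p.1 ^ 2)) (x, q) = 0 := by
        intro x; simp [hW, hq]
      simp [h2, hq]
  · apply Measurable.aemeasurable
    exact Measurable.indicator (by fun_prop) hWm

/-- Integrating over the triangle by iterated integrals with explicit antiderivatives. -/
lemma TT_int (g : ℝ × ℝ → ℝ) (hg : Continuous g) (h0 : ∀ q, 0 ≤ g q)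
    (G : ℝ → ℝ → ℝ) (H : ℝ → ℝ)
    (hG : ∀ u ∈ Set.Icc (0 : ℝ) 1, ∀ v ∈ Set.Icc 0 u, HasDerivAt (G u) (g (u, v)) v)
    (hc : ContinuousOn (fun u => G u u - G u 0) (Set.Icc (0 : ℝ) 1))
    (hH : ∀ u ∈ Set.Icc (0 : ℝ) 1, HasDerivAt H (G u u - G u 0) u) :
    ∫⁻ q in TT, ENNReal.ofReal (g q) = ENNReal.ofReal (H 1 - H 0) := by
  rw [← lintegral_indicator TT_meas, Measure.volume_eq_prod, lintegral_prod]
  swap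
  · exact (Measurable.indicator (by fun_prop) TT_meas).aemeasurable
  have hin : ∀ u ∈ Set.Icc (0 : ℝ) 1, ∫ v in (0 : ℝ)..u, g (u, v) = G u u - G u 0 := by
    intro u hu
    apply intervalIntegral.integral_eq_sub_of_hasDerivAt (f := G u) (f' := fun v => g (u, v))
    · intro v hv
      rw [Set.uIcc_of_le hu.1] at hv
      exact hG u hu v hv
    · exact Continuous.intervalIntegrable (by fun_prop) _ _
  have hsl : ∀ u, ∫⁻ v, TT.indicator (fun q => ENNReal.ofReal (g q)) (u, v) =
      (Set.Icc (0 : ℝ) 1).indicator (fun u => ENNReal.ofReal (G u u - G u 0)) u := by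
    intro u
    by_cases hu : u ∈ Set.Icc (0 : ℝ) 1
    · have h2 : ∀ v, TT.indicator (fun q => ENNReal.ofReal (g q)) (u, v) =
          (Set.Icc 0 u).indicator (fun v => ENNReal.ofReal (g (u, v))) v := by
        intro v
        simp [Set.indicator, TT, hu.2]
      simp_rw [h2]
      rw [lintegral_indicator measurableSet_Icc, Set.indicator_of_mem hu, ← hin u hu,
        intervalIntegral.integral_of_le hu.1, ← integral_Icc_eq_integral_Ioc,
        ofReal_integral_eq_lintegral_ofReal]
      · exact ContinuousOn.integrableOn_Icc (by fun_prop)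
      · exact Filter.Eventually.of_forall fun v => h0 _
    · have h2 : ∀ v, TT.indicator (fun q => ENNReal.ofReal (g q)) (u, v) = 0 := by
        intro v
        apply Set.indicator_of_notMem
        rintro ⟨h1, h2, h3⟩
        exact hu ⟨h1.trans h2, h3⟩
      simp [h2, hu]
  simp_rw [hsl]
  rw [lintegral_indicator measurableSet_Icc, ← ofReal_integral_eq_lintegral_ofReal,
    integral_Icc_eq_integral_Ioc, ← intervalIntegral.integral_of_le zero_le_one]
  · congr 1
    apply intervalIntegral.integral_eq_sub_of_hasDerivAt
    · intro u hu
      rw [Set.uIcc_of_le zero_le_one] at hu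
      exact hH u hu
    · apply ContinuousOn.intervalIntegrable
      rwa [Set.uIcc_of_le zero_le_one]
  · exact hc.integrableOn_Icc
  · filter_upwards [ae_restrict_mem measurableSet_Icc] with u hu
    rw [← hin u hu]
    exact intervalIntegral.integral_nonneg hu.1 fun v _ => h0 _

lemma int_one : ∫⁻ _q in TT, ENNReal.ofReal ((1 : ℝ) ^ 3 / 3) = ENNReal.ofReal (1 / 6) := by
  rw [TT_int (fun _ => (1 : ℝ) ^ 3 / 3) (by fun_prop) (fun _ => by norm_num)
    (fun _ v => v / 3) (fun u => u ^ 2 / 6)]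
  · norm_num
  · intro u _ v _
    have := (hasDerivAt_id v).div_const 3
    simpa using this
  · fun_prop
  · intro u _
    have := ((hasDerivAt_id u).pow 2).div_const 6
    refine this.congr_deriv ?_
    simp; ring

/-- The quadratic form `|D₀ (1,u,v)|²`. -/
def qf (q : ℝ × ℝ) : ℝ := 1 + q.1 ^ 2 / 3 + 2 * q.2 ^ 2 / 3

lemma qf_pos (q : ℝ × ℝ) : 0 < qf q := by unfold qf; positivity

lemma qf_cont : Continuous qf := by unfold qf; fun_prop

lemma arctan_val : Real.arctan (1 / √2) = π / 2 - Real.arccos (1 / √3) := by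
  rw [Real.arccos, Real.arctan_eq_arcsin]
  have h2 : (1 / √2) / √(1 + (1 / √2) ^ 2) = 1 / √3 := by
    rw [div_pow, Real.sq_sqrt (by norm_num), div_div, ← Real.sqrt_mul (by norm_num)]
    norm_num
  rw [h2]; ring

lemma int_qf : ∫⁻ q in TT, ENNReal.ofReal ((1 / √(qf q)) ^ 3 / 3) = ENNReal.ofReal (δoct / 6) := by
  have hcont : Continuous fun q => (1 / √(qf q)) ^ 3 / 3 := by
    have := qf_cont
    have h (q) : √(qf q) ≠ 0 := (Real.sqrt_pos.2 (qf_pos q)).ne'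
    fun_prop (disch := exact h _)
  rw [TT_int _ hcont (fun q => by positivity)
    (fun u v => v / (3 * (1 + u ^ 2 / 3) * √(qf (u, v))))
    (fun u => 1 / √2 * Real.arctan (√(1 + u ^ 2) / √2))]
  · congr 1
    have h8 : √8 = 2 * √2 := by
      rw [show (8 : ℝ) = 2 ^ 2 * 2 by norm_num, Real.sqrt_mul (by norm_num),
        Real.sqrt_sq (by norm_num)]
    have h2 : √2 ≠ 0 := by positivity
    norm_num only [Real.sqrt_one]
    rw [div_self h2, Real.arctan_one, arctan_val, δoct, h8]
    field_simp
    ring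
  · intro u _ v _
    have hq := qf_pos (u, v)
    have hs : √(qf (u, v)) ≠ 0 := (Real.sqrt_pos.2 hq).ne'
    have hu : 1 + u ^ 2 / 3 ≠ 0 := by positivity
    have hd : HasDerivAt (fun v => qf (u, v)) (4 * v / 3) v := by
      unfold qf
      have := ((((hasDerivAt_id v).pow 2).const_mul 2).div_const 3).const_add (1 + u ^ 2 / 3)
      refine this.congr_deriv ?_
      simp; ring
    have h := (hasDerivAt_id v).div ((hd.sqrt hq.ne').const_mul (3 * (1 + u ^ 2 / 3)))
      (by positivity)
    refine h.congr_deriv ?_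
    simp only [id]
    have hss : √(qf (u, v)) ^ 2 = qf (u, v) := Real.sq_sqrt hq.le
    have : 1 + u ^ 2 / 3 = √(qf (u, v)) ^ 2 - 2 * v ^ 2 / 3 := by rw [hss, qf]; ring
    field_simp
    have h3 : u ^ 2 = 3 * √(qf (u, v)) ^ 2 - 2 * v ^ 2 - 3 := by linarith
    rw [h3]
    ring
  · have h1 (u : ℝ) : √(qf (u, u)) ≠ 0 := (Real.sqrt_pos.2 (qf_pos _)).ne'
    have h2 (u : ℝ) : √(qf (u, 0)) ≠ 0 := (Real.sqrt_pos.2 (qf_pos _)).ne'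
    have h3 (u : ℝ) : 1 + u ^ 2 / 3 ≠ 0 := by positivity
    have := qf_cont
    apply Continuous.continuousOn
    apply Continuous.sub
    · apply Continuous.div (by fun_prop) (by fun_prop)
      intro u
      exact mul_ne_zero (mul_ne_zero (by norm_num) (h3 u)) (h1 u)
    · simp only [zero_div]; fun_prop
  · intro u _
    have hp : 0 < 1 + u ^ 2 := by positivity
    have hd : HasDerivAt (fun u : ℝ => 1 + u ^ 2) (2 * u) u := by
      have := ((hasDerivAt_id u).pow 2).const_add 1
      refine this.congr_deriv ?_
      simp
    have h := (((hd.sqrt hp.ne').div_const (√2)).arctan).const_mul (1 / √2)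
    refine h.congr_deriv ?_
    have hq : qf (u, u) = 1 + u ^ 2 := by simp only [qf]; ring
    simp only [hq, zero_div, sub_zero]
    rw [div_pow, Real.sq_sqrt hp.le, Real.sq_sqrt (by norm_num)]
    have hs : √(1 + u ^ 2) ≠ 0 := (Real.sqrt_pos.2 hp).ne'
    have hu : 1 + u ^ 2 / 3 ≠ 0 := by positivity
    have hu' : 1 + (1 + u ^ 2) / 2 ≠ 0 := by positivity
    have h22 : √2 ≠ 0 := by positivity
    have h2 : √2 ^ 2 = (2 : ℝ) := Real.sq_sqrt (by norm_num)
    field_simp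
    rw [h2]
    ring

/-- The standard orthoscheme `0 ≤ z ≤ y ≤ x ≤ 1`. -/
def KK : Set (Fin 3 → ℝ) := {p | 0 ≤ p 2 ∧ p 2 ≤ p 1 ∧ p 1 ≤ p 0 ∧ p 0 ≤ 1}

lemma KK_hull : KK = convexHull ℝ ({![0, 0, 0], ![1, 0, 0], ![1, 1, 0], ![1, 1, 1]} :
    Set (Fin 3 → ℝ)) := by
  apply Set.Subset.antisymm
  · rintro p ⟨h1, h2, h3, h4⟩
    have hc := convex_convexHull ℝ ({![0, 0, 0], ![1, 0, 0], ![1, 1, 0], ![1, 1, 1]} :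
      Set (Fin 3 → ℝ))
    have hs := subset_convexHull ℝ ({![0, 0, 0], ![1, 0, 0], ![1, 1, 0], ![1, 1, 1]} :
      Set (Fin 3 → ℝ))
    have := hc.sum_mem (t := Finset.univ) (w := ![1 - p 0, p 0 - p 1, p 1 - p 2, p 2])
      (z := ![![0, 0, 0], ![1, 0, 0], ![1, 1, 0], ![1, 1, 1]]) ?_ ?_ ?_
    · convert this using 1
      ext i
      fin_cases i <;> simp [Fin.sum_univ_succ]
    · intro i _
      fin_cases i <;> simp <;> linarith
    · simp [Fin.sum_univ_succ]
    · intro i _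
      apply hs
      fin_cases i <;> simp
  · apply convexHull_min
    · rintro p (rfl | rfl | rfl | rfl) <;> simp [KK]
    · rintro p ⟨h1, h2, h3, h4⟩ q ⟨g1, g2, g3, g4⟩ s t hs ht hst
      simp only [KK, Set.mem_ofPred_eq, Pi.add_apply, Pi.smul_apply, smul_eq_mul]
      refine ⟨by positivity, by gcongr, by gcongr, ?_⟩
      nlinarith

/-- The diagonal map. -/
def DD (a y z : ℝ) : (Fin 3 → ℝ) →ₗ[ℝ] (Fin 3 → ℝ) := Matrix.toLin' (Matrix.diagonal ![a, y, z])

lemma DD_apply (a y z : ℝ) (p : Fin 3 → ℝ) : DD a y z p = ![a * p 0, y * p 1, z * p 2] := by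
  ext i
  fin_cases i <;> simp [DD, Matrix.mulVec_diagonal]

lemma DD_vol (a y z : ℝ) (s : Set (Fin 3 → ℝ)) :
    volume (DD a y z '' s) = ENNReal.ofReal |a * y * z| * volume s := by
  rw [Measure.addHaar_image_linearMap, DD, LinearMap.det_toLin', Matrix.det_diagonal]
  simp [Fin.prod_univ_succ, mul_assoc]

lemma vol_toLp (s : Set (Fin 3 → ℝ)) : volume ((WithLp.toLp 2 '' s : Set E3)) = volume s := by
  have h := (PiLp.volume_preserving_toLp (Fin 3))
  have h2 := MeasurePreserving.measure_preimage_equiv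
    (f := MeasurableEquiv.toLp 2 (Fin 3 → ℝ)) h (WithLp.toLp 2 '' s : Set E3)
  rw [← h2]
  congr 1
  exact Set.preimage_image_eq _ (WithLp.toLp_injective 2)

lemma rogers_eq (a b c : ℝ) : RogersSimplex a b c =
    WithLp.toLp 2 '' (DD a (√(b ^ 2 - a ^ 2)) (√(c ^ 2 - b ^ 2)) '' KK) := by
  have h := LinearMap.image_convexHull ((WithLp.linearEquiv 2 ℝ (Fin 3 → ℝ)).symm.toLinearMap ∘ₗ
    DD a (√(b ^ 2 - a ^ 2)) (√(c ^ 2 - b ^ 2)))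
    ({![0, 0, 0], ![1, 0, 0], ![1, 1, 0], ![1, 1, 1]} : Set (Fin 3 → ℝ))
  rw [← KK_hull] at h
  rw [Set.image_image]
  refine Eq.trans ?_ h.symm
  rw [RogersSimplex]
  congr 1
  simp [Set.image_insert_eq, DD_apply, pt3]

lemma vol_rogers (a b c : ℝ) : volume (RogersSimplex a b c) =
    ENNReal.ofReal |a * √(b ^ 2 - a ^ 2) * √(c ^ 2 - b ^ 2)| * volume KK := by
  rw [rogers_eq, vol_toLp, DD_vol]

lemma vol_rogers_ball (a b c : ℝ) (h1 : a ^ 2 ≤ b ^ 2) (h2 : b ^ 2 ≤ c ^ 2) :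
    volume (RogersSimplex a b c ∩ Metric.closedBall 0 1) =
    ENNReal.ofReal |a * √(b ^ 2 - a ^ 2) * √(c ^ 2 - b ^ 2)| *
      volume {p ∈ KK | a ^ 2 * p 0 ^ 2 + (b ^ 2 - a ^ 2) * p 1 ^ 2
        + (c ^ 2 - b ^ 2) * p 2 ^ 2 ≤ 1} := by
  rw [rogers_eq, ← DD_vol, ← vol_toLp]
  congr 1
  have key : ∀ p : Fin 3 → ℝ,
      (WithLp.toLp 2 (DD a (√(b ^ 2 - a ^ 2)) (√(c ^ 2 - b ^ 2)) p) : E3) ∈ Metric.closedBall (0 : E3) 1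
      ↔ a ^ 2 * p 0 ^ 2 + (b ^ 2 - a ^ 2) * p 1 ^ 2 + (c ^ 2 - b ^ 2) * p 2 ^ 2 ≤ 1 := by
    intro p
    rw [mem_closedBall_zero_iff, EuclideanSpace.norm_eq, Real.sqrt_le_iff]
    simp only [one_pow, zero_le_one, true_and]
    simp only [DD_apply, Fin.sum_univ_three, Real.norm_eq_abs, sq_abs]
    simp [mul_pow, Real.sq_sqrt (sub_nonneg.2 h1), Real.sq_sqrt (sub_nonneg.2 h2)]
  ext x
  simp only [Set.image_image, Set.mem_inter_iff, Set.mem_image, Set.mem_ofPred_eq]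
  constructor
  · rintro ⟨⟨p, hp, rfl⟩, hx⟩
    exact ⟨p, ⟨hp, (key p).1 hx⟩, rfl⟩
  · rintro ⟨p, ⟨hp, hq⟩, rfl⟩
    exact ⟨⟨p, hp, rfl⟩, (key p).2 hq⟩

/-- Coordinates. -/
def ee (p : Fin 3 → ℝ) : ℝ × (ℝ × ℝ) := (p 0, (p 1, p 2))

lemma ee_mp : MeasurePreserving ee := by
  have h1 := volume_preserving_piFinSuccAbove (fun _ : Fin 3 => ℝ) 0
  have h2 := (MeasurePreserving.id (volume : Measure ℝ)).prod (volume_preserving_finTwoArrow ℝ)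
  exact h2.comp h1

lemma vol_of_cone (S : Set (Fin 3 → ℝ)) (ρ : ℝ × ℝ → ℝ) (hρ : Measurable ρ) (hpos : ∀ q, 0 < ρ q)
    (hS : ∀ p : Fin 3 → ℝ, 0 < p 0 → (p ∈ S ↔
      (p 1 / p 0, p 2 / p 0) ∈ TT ∧ p 0 ≤ ρ (p 1 / p 0, p 2 / p 0)))
    (hS0 : ∀ p ∈ S, ¬ 0 < p 0 → p = 0) :
    volume S = ∫⁻ q in TT, ENNReal.ofReal (ρ q ^ 3 / 3) := by
  have hdm : Measurable (fun p : ℝ × (ℝ × ℝ) => (p.2.1 / p.1, p.2.2 / p.1)) := by fun_prop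
  have hm : MeasurableSet (coneS ρ) := by
    unfold coneS
    simp only [Set.ofPred_and]
    apply MeasurableSet.inter (measurableSet_lt (by fun_prop) (by fun_prop))
    exact MeasurableSet.inter (hdm TT_meas) (measurableSet_le (by fun_prop) (hρ.comp hdm))
  rw [← coneS_vol ρ hρ hpos, ← ee_mp.measure_preimage hm.nullMeasurableSet]
  apply le_antisymm
  · calc volume S ≤ volume (ee ⁻¹' coneS ρ ∪ {0}) := by
          apply measure_mono
          intro p hp
          by_cases h0 : 0 < p 0
          · left
            exact ⟨h0, (hS p h0).1 hp⟩
          · right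
            exact hS0 p hp h0
      _ ≤ volume (ee ⁻¹' coneS ρ) + volume ({0} : Set (Fin 3 → ℝ)) := measure_union_le _ _
      _ = _ := by simp
  · apply measure_mono
    rintro p ⟨h0, h⟩
    exact (hS p h0).2 h

lemma KK_cone (p : Fin 3 → ℝ) (h0 : 0 < p 0) :
    (0 ≤ p 2 ∧ p 2 ≤ p 1 ∧ p 1 ≤ p 0) ↔ (p 1 / p 0, p 2 / p 0) ∈ TT := by
  simp only [TT, Set.mem_ofPred_eq]
  rw [div_le_div_iff_of_pos_right h0, div_le_one h0, le_div_iff₀ h0, zero_mul]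

lemma KK_zero (p : Fin 3 → ℝ) (hp : p ∈ KK) (h0 : ¬ 0 < p 0) : p = 0 := by
  obtain ⟨h1, h2, h3, h4⟩ := hp
  ext i
  fin_cases i <;> simp <;> linarith

lemma KK_vol : volume KK = ENNReal.ofReal (1 / 6) := by
  rw [vol_of_cone KK (fun _ => 1) measurable_const (fun _ => one_pos), int_one]
  · intro p h0
    rw [← KK_cone p h0]
    simp only [KK, Set.mem_ofPred_eq]
    tauto
  · exact KK_zero

/-- The part of the orthoscheme corresponding to the unit ball. -/
def VV : Set (Fin 3 → ℝ) := {p ∈ KK | p 0 ^ 2 + p 1 ^ 2 / 3 + 2 * p 2 ^ 2 / 3 ≤ 1}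

lemma VV_vol : volume VV = ENNReal.ofReal (δoct / 6) := by
  rw [vol_of_cone VV (fun q => 1 / √(qf q)) ?_ ?_, int_qf]
  · intro p h0
    rw [← KK_cone p h0]
    have hq := qf_pos (p 1 / p 0, p 2 / p 0)
    have : p 0 ≤ 1 / √(qf (p 1 / p 0, p 2 / p 0)) ↔
        p 0 ^ 2 + p 1 ^ 2 / 3 + 2 * p 2 ^ 2 / 3 ≤ 1 := by
      have hqe : p 0 ^ 2 * qf (p 1 / p 0, p 2 / p 0) = p 0 ^ 2 + p 1 ^ 2 / 3 + 2 * p 2 ^ 2 / 3 := by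
        simp only [qf]
        field_simp
      rw [le_div_iff₀ (Real.sqrt_pos.2 hq), ← hqe, ← sq_le_one_iff₀ (by positivity), mul_pow,
        Real.sq_sqrt hq.le]
    rw [this]
    simp only [VV, KK, Set.mem_ofPred_eq]
    constructor
    · tauto
    · rintro ⟨⟨h1, h2, h3⟩, h4⟩
      refine ⟨⟨h1, h2, h3, ?_⟩, h4⟩
      nlinarith [sq_nonneg (p 1), sq_nonneg (p 2)]
  · intro p hp
    exact KK_zero p hp.1
  · have := qf_cont
    fun_prop
  · intro q
    have := Real.sqrt_pos.2 (qf_pos q)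
    positivity

lemma δoct_nonneg : 0 ≤ δoct := by
  have h : Real.arctan (1 / √2) ≤ Real.arctan 1 := by
    apply Real.arctan_strictMono.monotone
    rw [div_le_one (by positivity)]
    exact Real.one_le_sqrt.2 (by norm_num)
  rw [arctan_val, Real.arctan_one] at h
  unfold δoct
  apply div_nonneg _ (Real.sqrt_nonneg _)
  linarith

lemma sub_VV (a b : ℝ) (ha : 1 ≤ a ^ 2) (hb : 4 / 3 ≤ b ^ 2) :
    {p ∈ KK | a ^ 2 * p 0 ^ 2 + (b ^ 2 - a ^ 2) * p 1 ^ 2 + (2 - b ^ 2) * p 2 ^ 2 ≤ 1} ⊆ VV := by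
  rintro p ⟨hp, hq⟩
  refine ⟨hp, ?_⟩
  obtain ⟨h1, h2, h3, h4⟩ := hp
  have i1 : 0 ≤ p 0 ^ 2 - p 1 ^ 2 := by nlinarith
  have i2 : 0 ≤ p 1 ^ 2 - p 2 ^ 2 := by nlinarith
  nlinarith [mul_nonneg (sub_nonneg.2 ha) i1, mul_nonneg (sub_nonneg.2 hb) i2]

lemma lt_VV (a b : ℝ) (ha : 1 ≤ a ^ 2) (hb : 4 / 3 ≤ b ^ 2) (hne : 11 < 5 * a ^ 2 + 3 * b ^ 2 + 2) :
    volume {p ∈ KK | a ^ 2 * p 0 ^ 2 + (b ^ 2 - a ^ 2) * p 1 ^ 2 + (2 - b ^ 2) * p 2 ^ 2 ≤ 1}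
      < volume VV := by
  set V' := {p ∈ KK | a ^ 2 * p 0 ^ 2 + (b ^ 2 - a ^ 2) * p 1 ^ 2 + (2 - b ^ 2) * p 2 ^ 2 ≤ 1}
    with hV'
  have hsub : V' ⊆ VV := sub_VV a b ha hb
  set U : Set (Fin 3 → ℝ) := {p | 0 < p 2 ∧ p 2 < p 1 ∧ p 1 < p 0 ∧
    p 0 ^ 2 + p 1 ^ 2 / 3 + 2 * p 2 ^ 2 / 3 < 1 ∧
    1 < a ^ 2 * p 0 ^ 2 + (b ^ 2 - a ^ 2) * p 1 ^ 2 + (2 - b ^ 2) * p 2 ^ 2} with hU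
  have hUo : IsOpen U := by
    rw [hU]
    simp only [Set.ofPred_and]
    refine IsOpen.inter (isOpen_lt (by fun_prop) (by fun_prop)) (IsOpen.inter
      (isOpen_lt (by fun_prop) (by fun_prop)) (IsOpen.inter (isOpen_lt (by fun_prop) (by fun_prop))
      (IsOpen.inter (isOpen_lt (by fun_prop) (by fun_prop))
      (isOpen_lt (by fun_prop) (by fun_prop)))))
  have hUn : U.Nonempty := by
    set N := 5 * a ^ 2 + 3 * b ^ 2 + 2 with hN
    set s := √(2 / (N + 11)) with hs
    have hNp : 0 < N + 11 := by linarith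
    have hsp : 0 < s := by positivity
    have hs2 : s ^ 2 = 2 / (N + 11) := Real.sq_sqrt (by positivity)
    have hk1 : 11 * s ^ 2 < 1 := by
      rw [hs2, ← mul_div_assoc, div_lt_one hNp]; linarith
    have hk2 : 1 < N * s ^ 2 := by
      rw [hs2, ← mul_div_assoc, one_lt_div hNp]; linarith
    refine ⟨![3 * s, 2 * s, s], ?_⟩
    change 0 < s ∧ s < 2 * s ∧ 2 * s < 3 * s ∧
      (3 * s) ^ 2 + (2 * s) ^ 2 / 3 + 2 * s ^ 2 / 3 < 1 ∧
      1 < a ^ 2 * (3 * s) ^ 2 + (b ^ 2 - a ^ 2) * (2 * s) ^ 2 + (2 - b ^ 2) * s ^ 2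
    refine ⟨hsp, by linarith, by linarith, ?_, ?_⟩
    · nlinarith
    · rw [hN] at hk2; nlinarith
  have hUV : U ⊆ VV := by
    rintro p ⟨h1, h2, h3, h4, h5⟩
    refine ⟨⟨h1.le, h2.le, h3.le, ?_⟩, h4.le⟩
    nlinarith [sq_nonneg (p 1), sq_nonneg (p 2)]
  have hdis : Disjoint V' U := by
    rw [Set.disjoint_left]
    rintro p ⟨_, hp⟩ ⟨h1, h2, h3, h4, h5⟩
    exact absurd hp (not_le.2 h5)
  have hle : volume V' + volume U ≤ volume VV := by
    rw [← measure_union hdis hUo.measurableSet]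
    exact measure_mono (Set.union_subset hsub hUV)
  have hpos : 0 < volume U := hUo.measure_pos _ hUn
  have hfin : volume V' ≠ ⊤ := ((measure_mono hsub).trans_lt (by rw [VV_vol]; simp)).ne
  exact (ENNReal.lt_add_right hfin hpos.ne').trans_le hle

theorem rogers_simplex_density_le (a b : ℝ) (ha : 1 ≤ a) (ha' : a ≤ 1.18)
    (hb : 4 / 3 ≤ b ^ 2) (hb' : b ^ 2 ≤ 2) (hab : a ≤ b) :
    (volume (RogersSimplex a b (Real.sqrt 2) ∩ Metric.closedBall 0 1)).toReal ≤
      δoct * (volume (RogersSimplex a b (Real.sqrt 2))).toReal ∧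
    (0 < (volume (RogersSimplex a b (Real.sqrt 2))).toReal →
      ((volume (RogersSimplex a b (Real.sqrt 2) ∩ Metric.closedBall 0 1)).toReal =
          δoct * (volume (RogersSimplex a b (Real.sqrt 2))).toReal ↔
        a = 1 ∧ b = 2 / Real.sqrt 3)) := by
  have hs2 : √2 ^ 2 = (2 : ℝ) := Real.sq_sqrt (by norm_num)
  have ha2 : 1 ≤ a ^ 2 := by nlinarith
  have hab2 : a ^ 2 ≤ b ^ 2 := by nlinarith
  have hδ := δoct_nonneg
  rw [vol_rogers, vol_rogers_ball a b _ hab2 (by rw [hs2]; exact hb'), KK_vol, hs2]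
  set m := |a * √(b ^ 2 - a ^ 2) * √(2 - b ^ 2)| with hm
  have hm0 : 0 ≤ m := abs_nonneg _
  have hsub := sub_VV a b ha2 hb
  have hlt := lt_VV a b ha2 hb
  set V' := {p ∈ KK | a ^ 2 * p 0 ^ 2 + (b ^ 2 - a ^ 2) * p 1 ^ 2 + (2 - b ^ 2) * p 2 ^ 2 ≤ 1}
    with hV'
  have hVr : (volume VV).toReal = δoct / 6 := by
    rw [VV_vol, ENNReal.toReal_ofReal (by positivity)]
  have hVfin : volume VV ≠ ⊤ := by rw [VV_vol]; simp
  have hle : (volume V').toReal ≤ δoct / 6 := by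
    rw [← hVr]
    exact ENNReal.toReal_mono hVfin (measure_mono hsub)
  rw [ENNReal.toReal_mul, ENNReal.toReal_mul, ENNReal.toReal_ofReal hm0,
    ENNReal.toReal_ofReal (by norm_num)]
  refine ⟨by nlinarith, fun hpos => ?_⟩
  have hmp : 0 < m := by linarith
  have hs3 : √3 ^ 2 = (3 : ℝ) := Real.sq_sqrt (by norm_num)
  have hbb : (2 / √3) ^ 2 = (4 / 3 : ℝ) := by rw [div_pow, hs3]; norm_num
  constructor
  · intro h
    by_contra hcon
    have h11 : 11 < 5 * a ^ 2 + 3 * b ^ 2 + 2 := by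
      by_contra hN
      apply hcon
      have e1 : a = 1 := by nlinarith
      have e2 : b ^ 2 = (2 / √3) ^ 2 := by rw [hbb]; nlinarith
      exact ⟨e1, (sq_eq_sq₀ (by linarith) (by positivity)).1 e2⟩
    have hl := hlt h11
    have hl' : (volume V').toReal < δoct / 6 := by
      rw [← hVr]
      exact (ENNReal.toReal_lt_toReal (hl.trans_le le_top).ne hVfin).2 hl
    nlinarith
  · rintro ⟨e1, e2⟩
    have hVV : V' = VV := by
      ext p
      simp only [hV', VV, Set.mem_ofPred_eq]
      rw [e1, e2, hbb]
      have : (1 : ℝ) ^ 2 * p 0 ^ 2 + (4 / 3 - 1 ^ 2) * p 1 ^ 2 + (2 - 4 / 3) * p 2 ^ 2 =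
        p 0 ^ 2 + p 1 ^ 2 / 3 + 2 * p 2 ^ 2 / 3 := by ring
      rw [this]
    rw [hVV, hVr]
    ring
end
end
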